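/- For every natural number k there exists a natural number t_k such that for every digraph G, either G contains k pairwise vertex-disjoint directed cycles, or there is a set X of at most t_k vertices of G such that the digraph obtained from G by deleting the vertices in X (together with all incident edges) contains no directed cycle. -/

import Mathlib

/-- `l` is the (cyclically ordered) vertex list of a directed cycle in the digraph `G`:
it has at least two pairwise distinct vertices, and every consecutive pair (including
the wrap-around from the last vertex to the first) is a directed edge of `G`. -/
def Digraph.IsDicycle {V : Type} (G : Digraph V) (l : List V) : Prop :=
  2 ≤ l.length ∧ l.Nodup ∧ ∀ e ∈ l.zip (l.rotate 1), G.Adj e.1 e.2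

/-- The list of directed edges of the directed cycle with vertex list `l`. -/
def cycleEdges {V : Type} (l : List V) : List (V × V) :=
  l.zip (l.rotate 1)

/-- The directed line graph `L(G)` of `G`: its vertices are the directed edges of `G`
(encoded as those pairs in `V × V` that are edges of `G`), and there is a directed edge
from `(a, b)` to `(c, d)` iff both are edges of `G` and `b = c`. -/
def lineDigraph {V : Type} (G : Digraph V) : Digraph (V × V) :=
  ⟨fun e f => G.Adj e.1 e.2 ∧ G.Adj f.1 f.2 ∧ e.2 = f.1⟩

/-!
The proof is by induction on the number of cycles. If deleting few vertices never destroys all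
cycles, then by the induction hypothesis the cycles cannot be split by a small cut, and a long path
through the cyclic part contains a large set of vertices that are linked to each other by disjoint
paths. Linking parts of this set back and forth, Menger's theorem and Ramsey's theorem produce
either many disjoint cycles or a grid: many disjoint paths crossed in order by many others. In
a large grid one finds a mesh, a stack of layers in which one can move from each column to itself
and to its neighbours. Consider disjoint blocks of consecutive layers of the mesh. If many disjoint
paths lead from the end of some block back to its beginning outside of it, then together with
routes through the block they close up to many disjoint cycles. Otherwise a small set separates the
end of each block from its beginning. Since the ends of the mesh are linked, some path nevertheless
returns from the last layer to the first one without meeting the separators; it has to run through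
all the blocks in reverse order, and its passages through consecutive pairs of blocks close up to
disjoint cycles.
-/

/-! ### Walks, paths and cycles inside a set of vertices -/

section Reach

variable {V : Type*} {r r' : V → V → Prop} {S S' : Set V} {u v w : V}

/-- `v` can be reached from `u` by a directed walk of `r` (of length `0` or more) all of whose
vertices, including both ends, lie in `S`. -/
def ReachIn (r : V → V → Prop) (S : Set V) (u v : V) : Prop :=
  u ∈ S ∧ Relation.ReflTransGen (fun x y => r x y ∧ y ∈ S) u v

namespace ReachIn

theorem left_mem (h : ReachIn r S u v) : u ∈ S := h.1

theorem refl (h : u ∈ S) : ReachIn r S u u := ⟨h, .refl⟩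

theorem trans (h : ReachIn r S u v) (h' : ReachIn r S v w) : ReachIn r S u w :=
  ⟨h.1, h.2.trans h'.2⟩

theorem single (hu : u ∈ S) (hv : v ∈ S) (h : r u v) : ReachIn r S u v :=
  ⟨hu, .single ⟨h, hv⟩⟩

@[elab_as_elim]
theorem tail_induction {P : V → Prop} (h : ReachIn r S u v) (base : P u)
    (step : ∀ x y, ReachIn r S u x → P x → r x y → y ∈ S → P y) : P v := by
  obtain ⟨hu, huv⟩ := h
  induction huv with
  | refl => exact base
  | tail hab hbc ih => exact step _ _ ⟨hu, hab⟩ ih hbc.1 hbc.2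

theorem right_mem (h : ReachIn r S u v) : v ∈ S :=
  h.tail_induction h.left_mem fun _ _ _ _ _ hy => hy

theorem tail (h : ReachIn r S u v) (hw : w ∈ S) (hvw : r v w) : ReachIn r S u w :=
  h.trans (single h.right_mem hw hvw)

theorem head (hu : u ∈ S) (huv : r u v) (h : ReachIn r S v w) : ReachIn r S u w :=
  (single hu h.left_mem huv).trans h

@[elab_as_elim]
theorem head_induction {P : V → Prop} (h : ReachIn r S u v) (base : P v)
    (step : ∀ x y, ReachIn r S y v → P y → r x y → x ∈ S → P x) : P u := by
  have transport : ∀ x, ReachIn r S u x → ReachIn r S x v → P x → P u := fun x hx => by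
    refine hx.tail_induction (fun _ => id) fun a b ha ih hab _ hbv hPb => ?_
    exact ih (head ha.right_mem hab hbv) (step a b hbv hPb hab ha.right_mem)
  exact transport v h (refl h.right_mem) base

theorem imp (h : ReachIn r S u v) (hu : u ∈ S')
    (hr : ∀ x y, x ∈ S → y ∈ S → x ∈ S' → r x y → r' x y ∧ y ∈ S') : ReachIn r' S' u v := by
  refine h.tail_induction (refl hu) fun x y hux ih hxy hy => ?_
  obtain ⟨hxy', hy'⟩ := hr x y hux.right_mem hy ih.right_mem hxy
  exact ih.tail hy' hxy'

theorem mono (h : ReachIn r S u v) (hS : S ⊆ S') : ReachIn r S' u v :=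
  h.imp (hS h.left_mem) fun _ _ _ hy _ hxy => ⟨hxy, hS hy⟩

theorem mono_rel (h : ReachIn r S u v) (hr : ∀ x ∈ S, ∀ y ∈ S, r x y → r' x y) :
    ReachIn r' S u v :=
  h.imp h.left_mem fun x y hx hy _ hxy => ⟨hr x hx y hy hxy, hy⟩

theorem inter_of_closed {Z : Set V} (h : ReachIn r S u v) (hu : u ∈ Z)
    (hZ : ∀ x ∈ S, ∀ y ∈ S, r x y → x ∈ Z → y ∈ Z) : ReachIn r (S ∩ Z) u v :=
  h.imp ⟨h.left_mem, hu⟩ fun x y hx hy hxZ hxy => ⟨hxy, hy, hZ x hx y hy hxy hxZ.2⟩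

theorem mem_of_closed {Z : Set V} (h : ReachIn r S u v) (hu : u ∈ Z)
    (hZ : ∀ x ∈ S, ∀ y ∈ S, r x y → x ∈ Z → y ∈ Z) : v ∈ Z :=
  (h.inter_of_closed hu hZ).right_mem.2

theorem between (h : ReachIn r S u v) :
    ReachIn r {x | ReachIn r S u x ∧ ReachIn r S x v} u v := by
  suffices ∀ x, ReachIn r S x v → ReachIn r S u x →
      ReachIn r {x | ReachIn r S u x ∧ ReachIn r S x v} x v from this u h (refl h.left_mem)
  refine fun x hx => hx.head_induction (fun huv => refl ⟨huv, refl hx.right_mem⟩)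
    fun a b hbv ih hab ha hua => ?_
  exact head ⟨hua, head ha hab hbv⟩ hab (ih (hua.tail hbv.left_mem hab))

theorem exists_first_mem {B : Set V} (h : ReachIn r S u v) (hv : v ∈ B) :
    ∃ w ∈ B, ReachIn r (S \ B ∪ {w}) u w ∧ ReachIn r S w v := by
  refine h.head_induction ⟨v, hv, refl (by simp), refl h.right_mem⟩ ?_
  rintro x y hyv ⟨w, hw, hyw, hwv⟩ hxy hx
  by_cases hxB : x ∈ B
  · exact ⟨x, hxB, refl (by simp), head hx hxy hyv⟩
  · exact ⟨w, hw, head (.inl ⟨hx, hxB⟩) hxy hyw, hwv⟩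

theorem exists_last_mem {A : Set V} (h : ReachIn r S u v) (hu : u ∈ A) :
    ∃ w ∈ A, ReachIn r (S \ A ∪ {w}) w v ∧ ReachIn r S u w := by
  refine h.tail_induction ⟨u, hu, refl (by simp), refl h.left_mem⟩ ?_
  rintro x y hux ⟨w, hw, hwx, huw⟩ hxy hy
  by_cases hyA : y ∈ A
  · exact ⟨y, hyA, refl (by simp), hux.tail hy hxy⟩
  · exact ⟨w, hw, hwx.tail (.inl ⟨hy, hyA⟩) hxy, huw⟩

theorem of_walk {p : ℕ → V} {a b : ℕ} (hab : a ≤ b)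
    (hr : ∀ i, a ≤ i → i < b → r (p i) (p (i + 1)))
    (hS : ∀ i, a ≤ i → i ≤ b → p i ∈ S) : ReachIn r S (p a) (p b) := by
  induction b, hab using Nat.le_induction with
  | base => exact refl (hS a le_rfl le_rfl)
  | succ b hb ih =>
    refine (ih (fun i hi hib => hr i hi (by lia)) fun i hi hib => hS i hi (by lia)).tail ?_ ?_
    · exact hS _ (by lia) le_rfl
    · exact hr b hb b.lt_succ_self

end ReachIn

/-- `p 0, …, p L` is a directed path of `r` with `L` edges; `p` is unconstrained beyond `L`. -/
structure IsPath (r : V → V → Prop) (p : ℕ → V) (L : ℕ) : Prop where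
  adj : ∀ i < L, r (p i) (p (i + 1))
  injOn : Set.InjOn p (Set.Iic L)

theorem IsPath.of_le {p : ℕ → V} {L L' : ℕ} (h : IsPath r p L) (hL : L' ≤ L) : IsPath r p L' :=
  ⟨fun i hi => h.adj i (hi.trans_le hL), h.injOn.mono (Set.Iic_subset_Iic.2 hL)⟩

theorem IsPath.reachIn {p : ℕ → V} {L a b : ℕ} (h : IsPath r p L) (hab : a ≤ b) (hb : b ≤ L)
    (hS : ∀ i, a ≤ i → i ≤ b → p i ∈ S) : ReachIn r S (p a) (p b) :=
  .of_walk hab (fun i _ hi => h.adj i (hi.trans_le hb)) hS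

theorem IsPath.snoc {p : ℕ → V} {L : ℕ} (h : IsPath r p L) (hv : r (p L) v)
    (hnew : ∀ i ≤ L, p i ≠ v) : IsPath r (Function.update p (L + 1) v) (L + 1) := by
  have old : ∀ i ≤ L, Function.update p (L + 1) v i = p i := fun i hi =>
    Function.update_of_ne (by lia) _ _
  have last : Function.update p (L + 1) v (L + 1) = v := Function.update_self ..
  refine ⟨fun i hi => ?_, fun i hi j hj hij => ?_⟩
  · obtain hi | rfl : i < L ∨ i = L := by lia
    · simpa only [old i hi.le, old (i + 1) hi] using h.adj i hi
    · simpa only [old i le_rfl, last] using hv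
  · obtain hi | rfl := Nat.le_succ_iff.1 (Set.mem_Iic.1 hi) <;>
      obtain hj | rfl := Nat.le_succ_iff.1 (Set.mem_Iic.1 hj)
    · exact h.injOn hi hj (by simpa only [old i hi, old j hj] using hij)
    · exact absurd (by simpa only [old i hi, last] using hij) (hnew i hi)
    · exact absurd (by simpa only [old j hj, last] using hij.symm) (hnew j hj)
    · rfl

theorem ReachIn.exists_isPath (h : ReachIn r S u v) :
    ∃ p L, IsPath r p L ∧ p 0 = u ∧ p L = v ∧ ∀ i ≤ L, p i ∈ S := by
  refine h.tail_induction
    ⟨fun _ => u, 0, ⟨by simp, by simp [Set.InjOn]⟩, rfl, rfl, fun _ _ => h.left_mem⟩ ?_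
  rintro x y - ⟨p, L, hp, h0, rfl, hS⟩ hxy hy
  by_cases hnew : ∃ i ≤ L, p i = y
  · obtain ⟨i, hi, rfl⟩ := hnew
    exact ⟨p, i, hp.of_le hi, h0, rfl, fun j hj => hS j (hj.trans hi)⟩
  · push Not at hnew
    refine ⟨_, _, hp.snoc hxy hnew, ?_, Function.update_self .., fun i hi => ?_⟩
    · rwa [Function.update_of_ne (by lia)]
    · obtain hi | rfl := Nat.le_succ_iff.1 hi
      · rw [Function.update_of_ne (by lia)]
        exact hS i hi
      · rwa [Function.update_self]

/-- Every vertex of `S` lies on a walk of `r` from `s` to `t` inside `S`. -/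
structure IsPassage (r : V → V → Prop) (S : Set V) (s t : V) : Prop where
  start_mem : s ∈ S
  reach_from : ∀ x ∈ S, ReachIn r S s x
  reach_to : ∀ x ∈ S, ReachIn r S x t

namespace IsPassage

theorem reachIn (h : IsPassage r S u v) : ReachIn r S u v := h.reach_to _ h.start_mem

theorem union (h : IsPassage r S u v) (h' : IsPassage r S' v w) : IsPassage r (S ∪ S') u w where
  start_mem := .inl h.start_mem
  reach_from x := by
    rintro (hx | hx)
    · exact (h.reach_from x hx).mono Set.subset_union_left
    · exact (h.reachIn.mono Set.subset_union_left).trans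
        ((h'.reach_from x hx).mono Set.subset_union_right)
  reach_to x := by
    rintro (hx | hx)
    · exact ((h.reach_to x hx).mono Set.subset_union_left).trans
        (h'.reachIn.mono Set.subset_union_right)
    · exact (h'.reach_to x hx).mono Set.subset_union_right

end IsPassage

theorem ReachIn.isPassage_between (h : ReachIn r S u v) :
    IsPassage r {x | ReachIn r S u x ∧ ReachIn r S x v} u v where
  start_mem := ⟨refl h.left_mem, h⟩
  reach_from _ hx := hx.1.between.mono fun _ hy => ⟨hy.1, hy.2.trans hx.2⟩
  reach_to _ hx := hx.2.between.mono fun _ hy => ⟨hx.1.trans hy.1, hy.2⟩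

/-- `S` is the vertex set of a walk of `r` from `s` to `t`, expressed without choosing the walk:
reachability inside `S` is a total preorder with first element `s` and last element `t`. -/
structure IsTrace (r : V → V → Prop) (S : Set V) (s t : V) : Prop extends IsPassage r S s t where
  total : ∀ x ∈ S, ∀ y ∈ S, ReachIn r S x y ∨ ReachIn r S y x

theorem IsPath.isTrace {p : ℕ → V} {L a b : ℕ} (hp : IsPath r p L) (hab : a ≤ b) (hb : b ≤ L) :
    IsTrace r (p '' Set.Icc a b) (p a) (p b) := by
  have reach : ∀ i j, a ≤ i → i ≤ j → j ≤ b → ReachIn r (p '' Set.Icc a b) (p i) (p j) :=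
    fun i j hi hij hj => hp.reachIn hij (hj.trans hb) fun k hik hkj =>
      ⟨k, ⟨hi.trans hik, hkj.trans hj⟩, rfl⟩
  refine ⟨⟨⟨a, ⟨le_rfl, hab⟩, rfl⟩, ?_, ?_⟩, ?_⟩
  · rintro _ ⟨i, hi, rfl⟩
    exact reach a i le_rfl hi.1 hi.2
  · rintro _ ⟨i, hi, rfl⟩
    exact reach i b hi.1 hi.2 le_rfl
  · rintro _ ⟨i, hi, rfl⟩ _ ⟨j, hj, rfl⟩
    exact (le_total i j).imp (reach i j hi.1 · hj.2) (reach j i hj.1 · hi.2)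

theorem ReachIn.exists_isTrace (h : ReachIn r S u v) : ∃ S' ⊆ S, IsTrace r S' u v := by
  obtain ⟨p, L, hp, rfl, rfl, hS⟩ := h.exists_isPath
  refine ⟨p '' Set.Icc 0 L, ?_, hp.isTrace L.zero_le le_rfl⟩
  rintro _ ⟨i, hi, rfl⟩
  exact hS i hi.2

/-- `S` contains a closed directed walk of `r` with at least one edge. -/
def HasCycleIn (r : V → V → Prop) (S : Set V) : Prop :=
  ∃ u v, r u v ∧ u ∈ S ∧ ReachIn r S v u

theorem HasCycleIn.mono (h : HasCycleIn r S) (hS : S ⊆ S') : HasCycleIn r S' := by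
  obtain ⟨u, v, huv, hu, hvu⟩ := h
  exact ⟨u, v, huv, hS hu, hvu.mono hS⟩

theorem HasCycleIn.of_reachIn (huv : ReachIn r S u v) (hvu : ReachIn r S v u) (hne : u ≠ v) :
    HasCycleIn r S := by
  obtain rfl | ⟨w, huw, hwv⟩ := huv.2.cases_head
  · exact absurd rfl hne
  · exact ⟨u, w, huw.1, huv.left_mem, .trans ⟨huw.2, hwv⟩ hvu⟩

theorem HasCycleIn.inter_or_diff {Z : Set V} (h : HasCycleIn r S)
    (hZ : ∀ x ∈ S, ∀ y ∈ S, r x y → x ∈ Z → y ∈ Z) :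
    HasCycleIn r (S ∩ Z) ∨ HasCycleIn r (S \ Z) := by
  obtain ⟨u, v, huv, hu, hvu⟩ := h
  by_cases huZ : u ∈ Z
  · exact .inl ⟨u, v, huv, ⟨hu, huZ⟩,
      hvu.inter_of_closed (hZ u hu v hvu.left_mem huv huZ) hZ⟩
  · refine .inr ⟨u, v, huv, ⟨hu, huZ⟩, ?_⟩
    refine hvu.head_induction (.refl ⟨hu, huZ⟩) fun x y _ hyu hxy hx => hyu.head ⟨hx, ?_⟩ hxy
    exact fun hxZ => hyu.left_mem.2 (hZ x hx y hyu.left_mem.1 hxy hxZ)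

/-- `r` has `n` pairwise disjoint directed cycles: pairwise disjoint vertex sets, each containing
a closed walk. -/
def HasDisjointCycles (r : V → V → Prop) (n : ℕ) : Prop :=
  ∃ C : ℕ → Set V, (∀ i < n, HasCycleIn r (C i)) ∧ (Set.Iio n).PairwiseDisjoint C

end Reach

section Dicycle

variable {V : Type} {G : Digraph V} {S : Set V}

theorem HasCycleIn.exists_isDicycle (hG : ∀ v, ¬ G.Adj v v) (h : HasCycleIn G.Adj S) :
    ∃ l, G.IsDicycle l ∧ ∀ v ∈ l, v ∈ S := by
  obtain ⟨u, v, huv, hu, hvu⟩ := h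
  obtain ⟨p, L, hp, rfl, rfl, hS⟩ := hvu.exists_isPath
  have hL : L ≠ 0 := by
    rintro rfl
    exact hG _ huv
  refine ⟨(List.range (L + 1)).map p, ⟨?_, ?_, fun e he => ?_⟩, fun x hx => ?_⟩
  · simp only [List.length_map, List.length_range]
    lia
  · exact List.nodup_range.map_on fun i hi j hj hij =>
      hp.injOn (Nat.lt_succ_iff.1 (List.mem_range.1 hi))
        (Nat.lt_succ_iff.1 (List.mem_range.1 hj)) hij
  · obtain ⟨i, hi, rfl⟩ := List.mem_iff_getElem.1 he
    simp only [List.length_zip, List.length_map, List.length_range, List.length_rotate,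
      min_self] at hi
    simp only [List.getElem_zip, List.getElem_rotate, List.getElem_map, List.getElem_range,
      List.length_map, List.length_range]
    obtain hi | rfl := Nat.lt_succ_iff_lt_or_eq.1 hi
    · rw [Nat.mod_eq_of_lt (by lia)]
      exact hp.adj i hi
    · rwa [Nat.mod_self]
  · obtain ⟨i, hi, rfl⟩ := List.mem_map.1 hx
    exact hS i (Nat.lt_succ_iff.1 (List.mem_range.1 hi))

theorem adj_getElem_of_isDicycle {l : List V} (h : G.IsDicycle l) {i : ℕ}
    (hi : i < l.length) :
    G.Adj l[i] (l[(i + 1) % l.length]'(Nat.mod_lt _ (by lia))) := by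
  refine h.2.2 (_, _) (List.mem_iff_getElem.2 ⟨i, ?_, ?_⟩)
  · simpa using hi
  · simp [List.getElem_rotate]

theorem hasCycleIn_of_isDicycle {l : List V} (h : G.IsDicycle l) :
    HasCycleIn G.Adj {v | v ∈ l} := by
  have hpos : 0 < l.length := by have := h.1; lia
  let p : ℕ → V := fun i => l[i % l.length]'(Nat.mod_lt _ hpos)
  have adj : ∀ i, i + 1 < l.length → G.Adj (p i) (p (i + 1)) := fun i hi => by
    simpa only [p, Nat.mod_eq_of_lt (Nat.lt_of_succ_lt hi)] using
      adj_getElem_of_isDicycle h (Nat.lt_of_succ_lt hi)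
  have close : G.Adj (p (l.length - 1)) (p 0) := by
    have := adj_getElem_of_isDicycle h (i := l.length - 1) (by lia)
    simpa only [p, Nat.mod_eq_of_lt (show l.length - 1 < l.length by lia), Nat.zero_mod,
      Nat.sub_add_cancel (show 1 ≤ l.length by lia), Nat.mod_self] using this
  exact ⟨_, _, close, List.getElem_mem _, .of_walk (Nat.zero_le _)
    (fun i _ hi => adj i (by lia)) fun i _ _ => List.getElem_mem _⟩

end Dicycle

/-! ### Ramsey's theorem -/

section Ramsey

variable (κ : Type*)

theorem exists_strictMono_mem_of_le_card {A : Finset ℕ} {m : ℕ} (h : m ≤ A.card) :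
    ∃ g : ℕ → ℕ, StrictMono g ∧ ∀ i < m, g i ∈ A := by
  obtain ⟨B, hBA, hB⟩ := Finset.exists_subset_card_eq h
  let e := B.orderEmbOfFin hB
  refine ⟨fun i => if hi : i < m then e ⟨i, hi⟩ else B.sup id + 1 + i, fun i j hij => ?_,
    fun i hi => ?_⟩
  · have he : ∀ x, e x ≤ B.sup id := fun x =>
      Finset.le_sup (f := id) (B.orderEmbOfFin_mem hB x)
    dsimp only
    split_ifs with hi hj hj
    · exact e.strictMono (by simpa using hij)
    · have := he ⟨i, hi⟩
      lia
    · lia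
    · lia
  · simp only [hi, dite_true]
    exact hBA (B.orderEmbOfFin_mem hB _)

theorem exists_homogeneous_subset_of_colouring [Finite κ] (m : ℕ) :
    ∃ N : ℕ, ∀ (A : Finset ℕ) (c : ℕ → κ), N ≤ A.card →
      ∃ B ⊆ A, m ≤ B.card ∧ ∃ k, ∀ i ∈ B, c i = k := by
  classical
  cases nonempty_fintype κ
  refine ⟨Fintype.card κ * m + 1, fun A c hA => ?_⟩
  obtain ⟨k, -, hk⟩ := Finset.exists_lt_card_fiber_of_mul_lt_card_of_maps_to (s := A)
    (t := Finset.univ) (f := c) (n := m) (fun _ _ => Finset.mem_univ _)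
    (by rw [Finset.card_univ]; lia)
  exact ⟨_, Finset.filter_subset _ _, hk.le, k, fun i hi => (Finset.mem_filter.1 hi).2⟩

/-- The property that colourings of increasing `d`-tuples of naturals by `κ` satisfy Ramsey's
theorem. -/
def RamseyProperty (d : ℕ) : Prop :=
  ∀ m : ℕ, ∃ N : ℕ, ∀ (A : Finset ℕ) (c : (Fin d → ℕ) → κ), N ≤ A.card →
    ∃ B ⊆ A, m ≤ B.card ∧ ∃ k, ∀ t : Fin d → ℕ, StrictMono t → (∀ i, t i ∈ B) → c t = k

variable {κ}

theorem RamseyProperty.exists_endHomogeneous {d : ℕ} (hd : RamseyProperty κ d) (m : ℕ) :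
    ∃ N : ℕ, ∀ (A : Finset ℕ) (c : (Fin (d + 1) → ℕ) → κ), N ≤ A.card →
      ∃ B ⊆ A, m ≤ B.card ∧ ∃ col : ℕ → κ,
        ∀ t : Fin (d + 1) → ℕ, StrictMono t → (∀ i, t i ∈ B) → c t = col (t 0) := by
  induction m with
  | zero => exact ⟨0, fun A c _ => ⟨∅, A.empty_subset, le_rfl, fun _ => c 0,
      fun t _ ht => absurd (ht 0) (Finset.notMem_empty _)⟩⟩
  | succ m ih =>
    obtain ⟨N, hN⟩ := ih
    obtain ⟨M, hM⟩ := hd N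
    refine ⟨M + 1, fun A c hA => ?_⟩
    have hne : A.Nonempty := Finset.card_pos.1 (by lia)
    set a := A.min' hne
    have haA : a ∈ A := A.min'_mem hne
    obtain ⟨A', hA'A, hA'card, k, hk⟩ := hM (A.erase a) (fun t => c (Fin.cons a t))
      (by rw [Finset.card_erase_of_mem haA]; lia)
    obtain ⟨B, hBA', hBcard, col, hcol⟩ := hN A' c hA'card
    have hlt : ∀ b ∈ A', a < b := fun b hb => A.min'_lt_of_mem_erase_min' hne (hA'A hb)
    refine ⟨insert a B, ?_, ?_, Function.update col a k, fun t hmono ht => ?_⟩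
    · exact Finset.insert_subset haA ((hBA'.trans hA'A).trans (A.erase_subset a))
    · rw [Finset.card_insert_of_notMem fun haB => (hlt a (hBA' haB)).false]
      lia
    have mem_of_lt : ∀ i, a < t i → t i ∈ B := fun i hi =>
      (Finset.mem_insert.1 (ht i)).resolve_left hi.ne'
    obtain h0 | h0 := Finset.mem_insert.1 (ht 0)
    · have htail := hk (Fin.tail t) (fun i j hij => hmono (Fin.succ_lt_succ_iff.2 hij)) fun i =>
        hBA' (mem_of_lt i.succ (h0 ▸ hmono i.succ_pos))
      rw [h0, Function.update_self, ← htail, ← h0, Fin.cons_self_tail]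
    · have h0lt : a < t 0 := hlt _ (hBA' h0)
      rw [Function.update_of_ne h0lt.ne']
      exact hcol t hmono fun i => mem_of_lt i (h0lt.trans_le (hmono.monotone (Fin.zero_le i)))

variable (κ) [Finite κ]

theorem ramseyProperty : ∀ d : ℕ, RamseyProperty κ d
  | 0, m => ⟨m, fun A c hA => ⟨A, subset_rfl, hA, c Fin.elim0, fun t _ _ =>
      congrArg c (Subsingleton.elim _ _)⟩⟩
  | d + 1, m => by
    obtain ⟨M, hM⟩ := exists_homogeneous_subset_of_colouring κ m
    obtain ⟨N, hN⟩ := (ramseyProperty d).exists_endHomogeneous M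
    refine ⟨N, fun A c hA => ?_⟩
    obtain ⟨A', hA'A, hA'card, col, hcol⟩ := hN A c hA
    obtain ⟨B, hBA', hBcard, k, hk⟩ := hM A' col hA'card
    exact ⟨B, hBA'.trans hA'A, hBcard, k, fun t hmono ht =>
      (hcol t hmono fun i => hBA' (ht i)).trans (hk _ (ht 0))⟩

theorem ramsey (d m : ℕ) : ∃ N : ℕ, ∀ c : (Fin d → ℕ) → κ,
    ∃ g : ℕ → ℕ, StrictMono g ∧ (∀ i < m, g i < N) ∧
      ∃ k, ∀ t : Fin d → ℕ, StrictMono t → (∀ i, t i < m) → c (g ∘ t) = k := by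
  obtain ⟨N, hN⟩ := ramseyProperty κ d m
  refine ⟨N, fun c => ?_⟩
  obtain ⟨B, hBN, hBcard, k, hk⟩ := hN (Finset.range N) c (by simp)
  obtain ⟨g, hg, hgB⟩ := exists_strictMono_mem_of_le_card hBcard
  exact ⟨g, hg, fun i hi => Finset.mem_range.1 (hBN (hgB i hi)), k, fun t hmono ht =>
    hk _ (hg.comp hmono) fun i => hgB _ (ht i)⟩

theorem pigeonhole (m : ℕ) : ∃ N : ℕ, ∀ c : ℕ → κ,
    ∃ g : ℕ → ℕ, StrictMono g ∧ (∀ i < m, g i < N) ∧ ∃ k, ∀ i < m, c (g i) = k := by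
  obtain ⟨N, hN⟩ := ramsey κ 1 m
  refine ⟨N, fun c => ?_⟩
  obtain ⟨g, hg, hgN, k, hk⟩ := hN fun t => c (t 0)
  exact ⟨g, hg, hgN, k, fun i hi => hk ![i] (Subsingleton.strictMono _) (by simpa using hi)⟩

theorem ramsey_pairs (m : ℕ) : ∃ N : ℕ, ∀ c : ℕ → ℕ → κ,
    ∃ g : ℕ → ℕ, StrictMono g ∧ (∀ i < m, g i < N) ∧
      ∃ k, ∀ i j, i < j → j < m → c (g i) (g j) = k := by
  obtain ⟨N, hN⟩ := ramsey κ 2 m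
  refine ⟨N, fun c => ?_⟩
  obtain ⟨g, hg, hgN, k, hk⟩ := hN fun t => c (t 0) (t 1)
  refine ⟨g, hg, hgN, k, fun i j hij hj => hk ![i, j] ?_ ?_⟩
  · simpa [Fin.strictMono_iff_lt_succ] using hij
  · simpa [Fin.forall_fin_two] using ⟨hij.trans hj, hj⟩

theorem ramsey_triples (m : ℕ) : ∃ N : ℕ, ∀ c : ℕ → ℕ → ℕ → κ,
    ∃ g : ℕ → ℕ, StrictMono g ∧ (∀ i < m, g i < N) ∧
      ∃ k, ∀ i j l, i < j → j < l → l < m → c (g i) (g j) (g l) = k := by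
  obtain ⟨N, hN⟩ := ramsey κ 3 m
  refine ⟨N, fun c => ?_⟩
  obtain ⟨g, hg, hgN, k, hk⟩ := hN fun t => c (t 0) (t 1) (t 2)
  refine ⟨g, hg, hgN, k, fun i j l hij hjl hl => hk ![i, j, l] ?_ ?_⟩
  · simpa [Fin.strictMono_iff_lt_succ, Fin.forall_fin_two] using ⟨hij, hjl⟩
  · simpa [Fin.forall_fin_succ] using ⟨(hij.trans hjl).trans hl, hjl.trans hl, hl⟩

theorem exists_common_order (q : ℕ) : ∃ q' : ℕ, ∀ m : ℕ, ∃ N : ℕ, ∀ μ : ℕ → ℕ → ℕ,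
    (∀ j < q', Set.InjOn (μ j) (Set.Iio N)) →
    ∃ e ρ : ℕ → ℕ, StrictMono e ∧ (∀ j < q, e j < q') ∧ Set.InjOn ρ (Set.Iio m) ∧
      (∀ i < m, ρ i < N) ∧ ∀ j < q, StrictMonoOn (fun i => μ (e j) (ρ i)) (Set.Iio m) := by
  obtain ⟨q', hq'⟩ := pigeonhole Prop q
  refine ⟨q', fun m => ?_⟩
  obtain ⟨N, hN⟩ := ramsey_pairs (Fin q' → Prop) m
  refine ⟨N, fun μ hμ => ?_⟩
  obtain ⟨g, hg, hgN, increasing, hinc⟩ := hN fun i i' j => μ j i < μ j i'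
  obtain ⟨e, he, heq, up, hup⟩ := hq' fun j => ∃ h : j < q', increasing ⟨j, h⟩
  have compare : ∀ j < q, ∀ i i', i < i' → i' < m → (μ (e j) (g i) < μ (e j) (g i') ↔ up) :=
    fun j hj i i' hii' hi' => by
      rw [← hup j hj, ← hinc i i' hii' hi']
      exact ⟨fun h => ⟨heq j hj, h⟩, fun ⟨_, h⟩ => h⟩
  by_cases hup' : up
  · exact ⟨e, g, he, heq, hg.injective.injOn, hgN, fun j hj i _ i' hi' hii' =>
      (compare j hj i i' hii' hi').2 hup'⟩
  · refine ⟨e, fun i => g (m - 1 - i), he, heq, fun i hi i' hi' h => ?_,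
      fun i hi => hgN _ (by lia), fun j hj i hi i' hi' hii' => ?_⟩
    · have := hg.injective h
      simp only [Set.mem_Iio] at hi hi'
      lia
    · simp only [Set.mem_Iio] at hi hi'
      have hlt : m - 1 - i' < m - 1 - i := by lia
      refine lt_of_le_of_ne ?_ fun h => (hg hlt).ne' ?_
      · exact not_lt.1 fun h => hup' ((compare j hj _ _ hlt (by lia)).1 h)
      · exact hμ _ (heq j hj) (hgN _ (by lia)) (hgN _ (by lia)) h

theorem exists_independent_of_bounded_outdegree (s m : ℕ) : ∃ N : ℕ, ∀ ρ : ℕ → ℕ → Prop,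
    (∀ k < N, ∀ A : Finset ℕ, (∀ j ∈ A, j < N ∧ j ≠ k ∧ ρ k j) → A.card < s) →
    ∃ g : ℕ → ℕ, StrictMono g ∧ (∀ i < m, g i < N) ∧
      (Set.Iio m).Pairwise fun i j => ¬ ρ (g i) (g j) := by
  obtain ⟨N, hN⟩ := ramsey_pairs (Prop × Prop) (m + s + 2)
  refine ⟨N, fun ρ hρ => ?_⟩
  obtain ⟨g, hg, hgN, k, hk⟩ := hN fun i j => (ρ i j, ρ j i)
  have outdegree_lt : ∀ i < m + s + 2, ∀ J : Finset ℕ, (∀ j ∈ J, j < m + s + 2 ∧ j ≠ i) →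
      (∀ j ∈ J, ρ (g i) (g j)) → J.card < s := fun i hi J hJ hρJ => by
    rw [← Finset.card_image_of_injective J hg.injective]
    refine hρ (g i) (hgN i hi) _ fun j hj => ?_
    obtain ⟨i', hi', rfl⟩ := Finset.mem_image.1 hj
    exact ⟨hgN i' (hJ i' hi').1, hg.injective.ne (hJ i' hi').2, hρJ i' hi'⟩
  have forward : ¬ k.1 := fun h => by
    refine (outdegree_lt 0 (by lia) (Finset.Ioc 0 s) ?_ fun j hj => ?_).ne (by simp)
    · simp only [Finset.mem_Ioc]
      lia
    · rw [Finset.mem_Ioc] at hj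
      rwa [← hk 0 j hj.1 (by lia)] at h
  have backward : ¬ k.2 := fun h => by
    refine (outdegree_lt s (by lia) (Finset.range s) ?_ fun j hj => ?_).ne (by simp)
    · simp only [Finset.mem_range]
      lia
    · rwa [← hk j s (Finset.mem_range.1 hj) (by lia)] at h
  refine ⟨g, hg, fun i hi => hgN i (by lia), fun i hi j hj hij h => ?_⟩
  rw [Set.mem_Iio] at hi hj
  obtain hlt | hlt := hij.lt_or_gt
  · rw [← hk i j hlt (by lia)] at forward
    exact forward h
  · rw [← hk j i hlt (by lia)] at backward
    exact backward h

theorem exists_strictMonoOn_or_strictAntiOn (k : ℕ) : ∃ N : ℕ, ∀ a : ℕ → ℕ,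
    Set.InjOn a (Set.Iio N) → ∃ g : ℕ → ℕ, StrictMono g ∧ (∀ i < k, g i < N) ∧
      (StrictMonoOn (a ∘ g) (Set.Iio k) ∨ StrictAntiOn (a ∘ g) (Set.Iio k)) := by
  obtain ⟨N, hN⟩ := ramsey_pairs Bool k
  refine ⟨N, fun a ha => ?_⟩
  obtain ⟨g, hg, hgN, c, hc⟩ := hN fun i j => decide (a i < a j)
  refine ⟨g, hg, hgN, ?_⟩
  cases c with
  | true => exact .inl fun i _ j hj hij => of_decide_eq_true (hc i j hij hj)
  | false =>
    refine .inr fun i hi j hj hij => ?_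
    exact (not_lt.1 (of_decide_eq_false (hc i j hij hj))).lt_of_ne
      (ha.ne (hgN j hj) (hgN i hi) (hg hij).ne')

theorem exists_comp_strictMonoOn_and_monotone (k : ℕ) : ∃ N : ℕ, ∀ a b : ℕ → ℕ,
    Set.InjOn a (Set.Iio N) → Set.InjOn b (Set.Iio N) → ∃ e : ℕ → ℕ,
      Set.MapsTo e (Set.Iio k) (Set.Iio N) ∧ StrictMonoOn (b ∘ e) (Set.Iio k) ∧
      (StrictMonoOn (a ∘ e) (Set.Iio k) ∨ StrictAntiOn (a ∘ e) (Set.Iio k)) := by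
  obtain ⟨N, hN⟩ := exists_strictMonoOn_or_strictAntiOn k
  refine ⟨N, fun a b ha hb => ?_⟩
  have hcard : ((Finset.range N).image b).card = N := by
    rw [Finset.card_image_of_injOn (by simpa using hb), Finset.card_range]
  obtain ⟨v, hv, hvmem⟩ := exists_strictMono_mem_of_le_card hcard.ge
  have hsort : ∀ i < N, ∃ j < N, b j = v i := fun i hi => by simpa using hvmem i hi
  choose! e he hbe using hsort
  have heinj : Set.InjOn e (Set.Iio N) := fun i hi j hj hij =>
    hv.injective (by rw [← hbe i hi, ← hbe j hj, hij])
  obtain ⟨g, hg, hgN, hag⟩ := hN (a ∘ e) (ha.comp heinj he)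
  refine ⟨e ∘ g, fun i hi => he _ (hgN i hi), fun i hi j hj hij => ?_, hag⟩
  simpa only [Function.comp_apply, hbe _ (hgN i hi), hbe _ (hgN j hj)] using hv (hg hij)

end Ramsey

/-! ### Linkages and Menger's theorem -/

section Menger

variable {V ι ι' : Type*} {r r' : V → V → Prop} {S : Set V} {A B C X Z : Set V} {u v x y : V}

theorem ReachIn.flip (h : ReachIn r S u v) : ReachIn (Function.swap r) S v u :=
  h.tail_induction (.refl h.left_mem) fun _ _ _ ih hxy hy => .head hy hxy ih

theorem ReachIn.exists_first_mem_adj (h : ReachIn r S u v) (hv : v ∈ B) :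
    ∃ w ∈ B, ReachIn (fun a b => r a b ∧ a ∉ B) S u w := by
  refine h.head_induction ⟨v, hv, .refl h.right_mem⟩ ?_
  rintro x y - ⟨w, hw, hyw⟩ hxy hx
  by_cases hxB : x ∈ B
  · exact ⟨x, hxB, .refl hx⟩
  · exact ⟨w, hw, .head hx ⟨hxy, hxB⟩ hyw⟩

theorem ReachIn.exists_subset_reach_avoiding (h : ReachIn r S u v)
    (hX : ∀ z ∈ S, z ∈ X → z = v) :
    ∃ S' ⊆ S, ReachIn r S' u v ∧ ∀ z ∈ S', z ∉ X → ReachIn r Xᶜ u z := by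
  obtain ⟨w, hw, huw⟩ := h.exists_first_mem_adj (B := insert v X) (Set.mem_insert v X)
  obtain rfl : w = v := hw.elim id (hX w huw.right_mem)
  refine ⟨_, fun z hz => hz.1.right_mem, huw.between.mono_rel fun _ _ _ _ hab => hab.1, ?_⟩
  rintro z ⟨huz, -⟩
  refine huz.tail_induction (fun hu => .refl hu) fun a b _ ih hab _ hb => ?_
  exact (ih fun ha => hab.2 (Set.mem_insert_of_mem _ ha)).tail hb hab.1

/-- A system of pairwise disjoint walks from `A` to `B`, indexed by `I`: the `i`-th one leads from
`s i` to `t i` and stays inside `S i`. -/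
structure IsLinkage (r : V → V → Prop) (A B : Set V) (I : Set ι) (S : ι → Set V)
    (s t : ι → V) : Prop where
  start_mem : ∀ i ∈ I, s i ∈ A
  end_mem : ∀ i ∈ I, t i ∈ B
  reach : ∀ i ∈ I, ReachIn r (S i) (s i) (t i)
  disjoint : I.PairwiseDisjoint S

namespace IsLinkage

variable {I : Set ι} {P : ι → Set V} {s t : ι → V}

theorem flip (h : IsLinkage r A B I P s t) : IsLinkage (Function.swap r) B A I P t s :=
  ⟨h.end_mem, h.start_mem, fun i hi => (h.reach i hi).flip, h.disjoint⟩

theorem mono_rel (h : IsLinkage r A B I P s t) (hr : ∀ a b, r a b → r' a b) :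
    IsLinkage r' A B I P s t :=
  ⟨h.start_mem, h.end_mem, fun i hi => (h.reach i hi).mono_rel fun a _ b _ => hr a b, h.disjoint⟩

theorem comp (h : IsLinkage r A B I P s t) {I' : Set ι'} {f : ι' → ι} (hf : Set.MapsTo f I' I)
    (hinj : Set.InjOn f I') : IsLinkage r A B I' (P ∘ f) (s ∘ f) (t ∘ f) :=
  ⟨fun _ hi => h.start_mem _ (hf hi), fun _ hi => h.end_mem _ (hf hi),
    fun _ hi => h.reach _ (hf hi), fun _ hi _ hj hij =>
      h.disjoint (hf hi) (hf hj) (hinj.ne hi hj hij)⟩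

theorem end_injOn (h : IsLinkage r A B I P s t) : Set.InjOn t I := fun i hi j hj hij =>
  h.disjoint.elim_set hi hj (t i) (h.reach i hi).right_mem (hij ▸ (h.reach j hj).right_mem)

theorem start_injOn (h : IsLinkage r A B I P s t) : Set.InjOn s I := h.flip.end_injOn

theorem exists_indexed_by_end {k : ℕ} {C : Finset V} {P : ℕ → Set V} {s t : ℕ → V}
    (h : IsLinkage r A C (Set.Iio k) P s t) (hC : C.card ≤ k) :
    ∃ P' s', IsLinkage r A C (C : Set V) P' s' id := by
  have hsurj : Set.SurjOn t (Set.Iio k) C := by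
    have := Finset.surjOn_of_injOn_of_card_le (s := Finset.range k) (t := C) t
      (fun i hi => h.end_mem i (by simpa using hi)) (by simpa using h.end_injOn) (by simpa using hC)
    simpa using this
  have hinv := hsurj.rightInvOn_invFunOn
  have hcomp := h.comp hsurj.mapsTo_invFunOn hinv.injOn
  refine ⟨_, _, hcomp.start_mem, fun c hc => hc, fun c hc => ?_, hcomp.disjoint⟩
  simpa only [Function.comp_apply, id_eq, hinv hc] using hcomp.reach c hc

theorem exists_trimmed {P : V → Set V} {s : V → V} (h : IsLinkage r A C C P s id) (hXC : X ⊆ C) :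
    ∃ P', IsLinkage r A C C P' s id ∧
      ∀ c ∈ C, ∀ z ∈ P' c, z ∉ X → ∃ a ∈ A, ReachIn r Xᶜ a z := by
  have only_end : ∀ c ∈ C, ∀ z ∈ P c, z ∈ X → z = c := fun c hc z hz hzX =>
    h.disjoint.elim_set (hXC hzX) hc z (h.reach z (hXC hzX)).right_mem hz
  choose! P' hP'P hreach hfrom using fun c hc =>
    (h.reach c hc).exists_subset_reach_avoiding (only_end c hc)
  exact ⟨P', ⟨h.start_mem, h.end_mem, hreach, h.disjoint.mono_on hP'P⟩,
    fun c hc z hz hzX => ⟨s c, h.start_mem c hc, hfrom c hc z hz hzX⟩⟩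

theorem exists_indexed_by_start {k : ℕ} {C : Finset V} {P : ℕ → Set V} {s t : ℕ → V}
    (h : IsLinkage r C B (Set.Iio k) P s t) (hC : C.card ≤ k) :
    ∃ P' t', IsLinkage r C B (C : Set V) P' id t' := by
  obtain ⟨P', t', h'⟩ := h.flip.exists_indexed_by_end hC
  exact ⟨P', t', h'.flip⟩

theorem exists_trimmed_start {P : V → Set V} {t : V → V} (h : IsLinkage r C B C P id t)
    (hXC : X ⊆ C) :
    ∃ P', IsLinkage r C B C P' id t ∧
      ∀ c ∈ C, ∀ z ∈ P' c, z ∉ X → ∃ b ∈ B, ReachIn r Xᶜ z b := by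
  obtain ⟨P', h', hP'⟩ := h.flip.exists_trimmed hXC
  refine ⟨P', h'.flip, fun c hc z hz hzX => ?_⟩
  obtain ⟨b, hb, hbz⟩ := hP' c hc z hz hzX
  exact ⟨b, hb, hbz.flip⟩

open Classical in
theorem splice {P Q : V → Set V} {s t : V → V}
    (hP : IsLinkage r A (insert x X) (insert x X) P s id)
    (hQ : IsLinkage r (insert y X) B (insert y X) Q id t) (hxy : r x y) (hyX : y ∉ X)
    (hPQ : ∀ c ∈ insert x X, ∀ d ∈ insert y X, P c ∩ Q d ⊆ X) :
    ∃ S t', IsLinkage r A B (insert x X) S s t' := by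
  let σ : V → V := fun c => if c = x then y else c
  have hσx : σ x = y := if_pos rfl
  have hσ : ∀ c, c ≠ x → σ c = c := fun c hc => if_neg hc
  have hmaps : Set.MapsTo σ (insert x X) (insert y X) := fun c hc => by
    by_cases hcx : c = x
    · exact .inl (by rw [hcx, hσx])
    · exact .inr (by rw [hσ c hcx]; exact hc.resolve_left hcx)
  have hinj : Set.InjOn σ (insert x X) := fun c hc d hd hcd => by grind
  have hQσ := hQ.comp hmaps hinj
  have cross : ∀ c ∈ insert x X, ∀ d ∈ insert x X, c ≠ d → Disjoint (P c) (Q (σ d)) := by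
    refine fun c hc d hd hcd => Set.disjoint_left.2 fun z hzc hzd => hcd ?_
    have hzX : z ∈ X := hPQ c hc _ (hmaps hd) ⟨hzc, hzd⟩
    have hz_eq_c : z = c := hP.disjoint.elim_set (.inr hzX) hc z
      (hP.reach z (.inr hzX)).right_mem hzc
    have hz_eq_d : z = σ d := hQ.disjoint.elim_set (.inr hzX) (hmaps hd) z
      (hQ.reach z (.inr hzX)).left_mem hzd
    grind
  refine ⟨fun c => P c ∪ Q (σ c), t ∘ σ, hP.start_mem, hQσ.end_mem, fun c hc => ?_, ?_⟩
  · have hPc := (hP.reach c hc).mono (Set.subset_union_left (t := Q (σ c)))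
    have hQc := (hQσ.reach c hc).mono (Set.subset_union_right (s := P c))
    refine (hPc.trans ?_).trans hQc
    obtain rfl | hcx := eq_or_ne c x
    · exact .single hPc.right_mem hQc.left_mem (by simpa only [Function.comp_apply, id_eq, hσx])
    · simpa only [Function.comp_apply, id_eq, hσ c hcx] using ReachIn.refl hPc.right_mem
  · intro c hc d hd hcd
    exact Set.disjoint_union_left.2 ⟨Set.disjoint_union_right.2
      ⟨hP.disjoint hc hd hcd, cross c hc d hd hcd⟩, Set.disjoint_union_right.2
      ⟨(cross d hd c hc hcd.symm).symm, hQσ.disjoint hc hd hcd⟩⟩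

end IsLinkage

/-- `r` has `k` pairwise disjoint walks from `A` to `B` inside `D`. -/
def HasLinkageIn (r : V → V → Prop) (D A B : Set V) (k : ℕ) : Prop :=
  ∃ S s t, IsLinkage r A B (Set.Iio k) S s t ∧ ∀ i < k, S i ⊆ D

theorem IsLinkage.hasLinkageIn {D : Set V} {I : Set ι} {S : ι → Set V} {s t : ι → V} {k : ℕ}
    [Nonempty ι] (h : IsLinkage r A B I S s t) (hD : ∀ i ∈ I, S i ⊆ D) (hI : k ≤ I.encard) :
    HasLinkageIn r D A B k := by
  have hcard : (Set.Iio k).encard = k := by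
    rw [← Finset.coe_Iio, Set.encard_coe_eq_coe_finsetCard, Nat.card_Iio]
  obtain ⟨f, hmaps, hinj⟩ := (Set.finite_Iio k).exists_injOn_of_encard_le (hcard.trans_le hI)
  exact ⟨_, _, _, h.comp hmaps hinj, fun i hi => hD _ (hmaps hi)⟩

/-- Every walk of `r` from `A` to `B` meets `X`. -/
def Separates (r : V → V → Prop) (X A B : Set V) : Prop :=
  ∀ a ∈ A, ∀ b ∈ B, ¬ ReachIn r Xᶜ a b

theorem Separates.flip (h : Separates r X A B) : Separates (Function.swap r) X B A :=
  fun b hb a ha hba => h a ha b hb hba.flip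

/-- The relation `r` without the edge from `x` to `y`. -/
def deleteEdge (r : V → V → Prop) (x y : V) : V → V → Prop :=
  fun a b => r a b ∧ ¬ (a = x ∧ b = y)

theorem swap_deleteEdge : Function.swap (deleteEdge r x y) = deleteEdge (Function.swap r) y x := by
  funext a b
  simp only [Function.swap, deleteEdge, and_comm]

theorem Separates.insert_source (h : Separates (deleteEdge r x y) X A B) :
    Separates r (insert x X) A B := fun a ha b hb hab => by
  refine h a ha b hb (hab.imp (fun haX => hab.left_mem (.inr haX)) fun c d hc hd _ hcd => ?_)
  exact ⟨⟨hcd, fun hxy => hc (.inl hxy.1)⟩, fun hdX => hd (.inr hdX)⟩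

theorem Separates.insert_target (h : Separates (deleteEdge r x y) X A B) :
    Separates r (insert y X) A B := by
  have h' := h.flip
  rw [swap_deleteEdge] at h'
  exact h'.insert_source.flip

theorem Separates.of_deleteEdge_source (hC : Separates r C A B) (hx : x ∈ C)
    (hZ : Separates (deleteEdge r x y) Z A C) : Separates r Z A B := fun a ha b hb hab => by
  obtain ⟨c, hc, hac⟩ : ∃ c ∈ C, ReachIn r Zᶜ a c := by
    by_contra! hnone
    exact hC a ha b hb (hab.between.mono fun z hz hzC => hnone z hzC hz.1)
  obtain ⟨w, hw, haw⟩ := hac.exists_first_mem_adj hc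
  exact hZ a ha w hw (haw.mono_rel fun p _ q _ hpq => ⟨hpq.1, fun hxy => hpq.2 (hxy.1 ▸ hx)⟩)

theorem Separates.of_deleteEdge_target (hC : Separates r C A B) (hy : y ∈ C)
    (hZ : Separates (deleteEdge r x y) Z C B) : Separates r Z A B := by
  have hZ' := hZ.flip
  rw [swap_deleteEdge] at hZ'
  exact (hC.flip.of_deleteEdge_source hy hZ').flip

theorem ncard_deleteEdge_lt [Finite V] (hxy : r x y) :
    {p : V × V | deleteEdge r x y p.1 p.2}.ncard < {p : V × V | r p.1 p.2}.ncard := by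
  refine Set.ncard_lt_ncard ⟨fun p hp => hp.1, fun hsub => ?_⟩
  exact (hsub (show (x, y) ∈ {p : V × V | r p.1 p.2} from hxy)).2 ⟨rfl, rfl⟩

theorem hasLinkageIn_or_separates_of_no_edges [Finite V] [Nonempty V] (hr : ∀ a b, ¬ r a b)
    (A B : Set V) (k : ℕ) :
    HasLinkageIn r Set.univ A B k ∨ ∃ X : Finset V, X.card < k ∧ Separates r X A B := by
  have hlink : IsLinkage r A B (A ∩ B) (fun v => {v}) id id :=
    ⟨fun _ hv => hv.1, fun _ hv => hv.2, fun v _ => .refl rfl,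
      fun _ _ _ _ hne => Set.disjoint_singleton.2 hne⟩
  obtain hk | hk := le_or_gt (k : ℕ∞) (A ∩ B).encard
  · exact .inl (hlink.hasLinkageIn (fun _ _ => Set.subset_univ _) hk)
  · refine .inr ⟨(A ∩ B).toFinite.toFinset, ?_, fun a ha b hb hab => ?_⟩
    · rwa [(A ∩ B).toFinite.encard_eq_coe_toFinset_card, Nat.cast_lt] at hk
    · obtain rfl : b = a := hab.tail_induction rfl fun x y _ _ hxy => (hr x y hxy).elim
      exact hab.left_mem (by simpa using ⟨ha, hb⟩)

theorem menger [Finite V] [Nonempty V] (r : V → V → Prop) (A B : Set V) (k : ℕ) :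
    HasLinkageIn r Set.univ A B k ∨ ∃ X : Finset V, X.card < k ∧ Separates r X A B := by
  classical
  induction hn : {p : V × V | r p.1 p.2}.ncard using Nat.strong_induction_on
    generalizing r A B with | _ n ih
  by_cases hedge : ∃ x y, r x y
  swap
  · push Not at hedge
    exact hasLinkageIn_or_separates_of_no_edges hedge A B k
  obtain ⟨x, y, hxy⟩ := hedge
  have ih' := fun A B => ih _ (hn ▸ ncard_deleteEdge_lt hxy) (deleteEdge r x y) A B rfl
  obtain ⟨S, s, t, h, hS⟩ | ⟨X, hXk, hX⟩ := ih' A B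
  · exact .inl ⟨S, s, t, h.mono_rel fun _ _ hab => hab.1, hS⟩
  by_contra! hcontra
  obtain ⟨hno, hsep⟩ := hcontra
  have hsepx : Separates r (insert x X : Finset V) A B := by
    simpa only [Finset.coe_insert] using hX.insert_source
  have hsepy : Separates r (insert y X : Finset V) A B := by
    simpa only [Finset.coe_insert] using hX.insert_target
  have hkx : k ≤ (insert x X).card := not_lt.1 fun hlt => hsep _ hlt hsepx
  have hky : k ≤ (insert y X).card := not_lt.1 fun hlt => hsep _ hlt hsepy
  have hyX : y ∉ X := fun hy => by rw [Finset.insert_eq_of_mem hy] at hky; lia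
  obtain ⟨_, _, _, hP, -⟩ := (ih' A (insert x X : Finset V)).resolve_right
    fun ⟨Z, hZk, hZ⟩ => hsep Z hZk (hsepx.of_deleteEdge_source (Finset.mem_insert_self x X) hZ)
  obtain ⟨_, _, _, hQ, -⟩ := (ih' (insert y X : Finset V) B).resolve_right
    fun ⟨Z, hZk, hZ⟩ => hsep Z hZk (hsepy.of_deleteEdge_target (Finset.mem_insert_self y X) hZ)
  obtain ⟨P, s, hP⟩ := hP.exists_indexed_by_end ((Finset.card_insert_le x X).trans hXk)
  obtain ⟨Q, t, hQ⟩ := hQ.exists_indexed_by_start ((Finset.card_insert_le y X).trans hXk)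
  rw [Finset.coe_insert] at hP hQ
  obtain ⟨P, hP, hPX⟩ := hP.exists_trimmed (Set.subset_insert x X)
  obtain ⟨Q, hQ, hQX⟩ := hQ.exists_trimmed_start (Set.subset_insert y X)
  have hPQ : ∀ c ∈ insert x (X : Set V), ∀ d ∈ insert y (X : Set V), P c ∩ Q d ⊆ X := by
    rintro c hc d hd z ⟨hzP, hzQ⟩
    by_contra hzX
    obtain ⟨a, ha, haz⟩ := hPX c hc z hzP hzX
    obtain ⟨b, hb, hzb⟩ := hQX d hd z hzQ hzX
    exact hX a ha b hb (haz.trans hzb)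
  obtain ⟨S, t', hlink⟩ := (hP.mono_rel fun _ _ hab => hab.1).splice
    (hQ.mono_rel fun _ _ hab => hab.1) hxy hyX hPQ
  refine hno (hlink.hasLinkageIn (fun _ _ => Set.subset_univ _) ?_)
  rwa [← Finset.coe_insert, Set.encard_coe_eq_coe_finsetCard, Nat.cast_le]

end Menger

/-! ### A path through the cyclic core whose marked vertices are well linked -/

section Linked

variable {V ι : Type*} {r : V → V → Prop} {S S' : Set V} {u v : V} {p p' : ℕ → V} {L L' : ℕ}

theorem exists_disjoint_of_card_lt {f : ι → Set V} {I : Finset ι} {X : Finset V}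
    (hf : (I : Set ι).PairwiseDisjoint f) (hX : X.card < I.card) :
    ∃ i ∈ I, Disjoint (f i) X := by
  by_contra! hmeet
  have hmeet' : ∀ i ∈ I, ∃ v ∈ f i, v ∈ X := fun i hi => Set.not_disjoint_iff.1 (hmeet i hi)
  obtain ⟨i₀, hi₀⟩ := Finset.card_pos.1 (X.card.zero_le.trans_lt hX)
  have : Nonempty V := ⟨(hmeet' i₀ hi₀).choose⟩
  choose! g hg hgX using hmeet'
  refine hX.not_ge (Finset.card_le_card_of_injOn g hgX fun i hi j hj hij => ?_)
  exact hf.elim_set hi hj (g i) (hg i hi) (hij ▸ hg j hj)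

theorem pairwiseDisjoint_Iio_of_lt {f : ℕ → Set V} {n : ℕ}
    (h : ∀ i j, i < j → j < n → Disjoint (f i) (f j)) : (Set.Iio n).PairwiseDisjoint f :=
  fun i hi j hj hij => hij.lt_or_gt.elim (h i j · hj) fun hji => (h j i hji hi).symm

/-- All the cycles of `r` can be met by deleting at most `t` vertices. -/
def HasCycleTransversal (r : V → V → Prop) (t : ℕ) : Prop :=
  ∃ X : Finset V, X.card ≤ t ∧ ¬ HasCycleIn r (X : Set V)ᶜ

/-- The vertices lying on a closed walk of `r` inside `S`. -/
def cyclicVertices (r : V → V → Prop) (S : Set V) : Set V :=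
  {z | ∃ w, r z w ∧ z ∈ S ∧ ReachIn r S w z}

theorem cyclicVertices_subset : cyclicVertices r S ⊆ S := fun _ ⟨_, _, hz, _⟩ => hz

theorem cyclicVertices_mono (h : S ⊆ S') : cyclicVertices r S ⊆ cyclicVertices r S' :=
  fun _ ⟨w, hzw, hz, hwz⟩ => ⟨w, hzw, h hz, hwz.mono h⟩

theorem ReachIn.within_cyclicVertices (huv : ReachIn r S u v) (hvu : ReachIn r S v u)
    (hu : u ∈ cyclicVertices r S) : ReachIn r (cyclicVertices r S) u v := by
  refine huv.between.mono fun w hw => ?_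
  obtain rfl | ⟨x, hwx, hxu⟩ := (hw.2.trans hvu).2.cases_head
  · exact hu
  · exact ⟨x, hwx.1, hw.2.left_mem, .trans ⟨hwx.2, hxu⟩ hw.1⟩

/-- No `m` vertices meet all cycles of `r`, and after deleting any `m` vertices all vertices still
lying on a cycle are mutually reachable. -/
def RobustlyCyclic (r : V → V → Prop) (m : ℕ) : Prop :=
  ∀ X : Finset V, X.card ≤ m → (cyclicVertices r (X : Set V)ᶜ).Nonempty ∧
    ∀ u ∈ cyclicVertices r (X : Set V)ᶜ, ∀ v ∈ cyclicVertices r (X : Set V)ᶜ,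
      ReachIn r (X : Set V)ᶜ u v

theorem HasDisjointCycles.insert_cycle {n : ℕ}
    (h : HasDisjointCycles (fun a b => r a b ∧ a ∈ S ∧ b ∈ S) n) (hS' : HasCycleIn r S')
    (hdisj : Disjoint S S') : HasDisjointCycles r (n + 1) := by
  obtain ⟨C, hC, hCdisj⟩ := h
  have hlt : ∀ i < n + 1, i ≠ n → i < n := fun i hi hne => by lia
  refine ⟨fun i => if i = n then S' else C i ∩ S, fun i hi => ?_, fun i hi j hj hij => ?_⟩
  · dsimp only
    split_ifs with hin
    · exact hS'
    · obtain ⟨u, v, huv, hu, hvu⟩ := hC i (hlt i hi hin)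
      refine ⟨u, v, huv.1, ⟨hu, huv.2.1⟩, ?_⟩
      exact (hvu.inter_of_closed huv.2.2 fun x _ y _ hxy _ => hxy.2.2).mono_rel
        fun _ _ _ _ hxy => hxy.1
  · simp only [Function.onFun]
    split_ifs with hin hjn hjn
    · exact absurd (hin.trans hjn.symm) hij
    · exact hdisj.symm.mono_right Set.inter_subset_right
    · exact hdisj.mono_left Set.inter_subset_right
    · exact (hCdisj (hlt i hi hin) (hlt j hj hjn) hij).mono Set.inter_subset_left
        Set.inter_subset_left

theorem exists_transversal_within {n t : ℕ}
    (ih : ∀ r' : V → V → Prop, HasDisjointCycles r' n ∨ HasCycleTransversal r' t)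
    (hr : ¬ HasDisjointCycles r (n + 1)) (hS' : HasCycleIn r S') (hdisj : Disjoint S S') :
    ∃ Y : Finset V, Y.card ≤ t ∧ ¬ HasCycleIn r (S \ Y) := by
  obtain hcycles | ⟨Y, hY, hno⟩ := ih fun a b => r a b ∧ a ∈ S ∧ b ∈ S
  · exact absurd (hcycles.insert_cycle hS' hdisj) hr
  · refine ⟨Y, hY, fun ⟨u, v, huv, hu, hvu⟩ => hno ?_⟩
    exact ⟨u, v, ⟨huv, hu.1, hvu.left_mem.1⟩, hu.2, hvu.imp hvu.left_mem.2
      fun x y hx hy _ hxy => ⟨⟨hxy, hx.1, hy.1⟩, hy.2⟩⟩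

theorem robustlyCyclic_of_not_hasCycleTransversal {n t m : ℕ}
    (ih : ∀ r' : V → V → Prop, HasDisjointCycles r' n ∨ HasCycleTransversal r' t)
    (hr : ¬ HasDisjointCycles r (n + 1)) (ht : ¬ HasCycleTransversal r (m + 2 * t)) :
    RobustlyCyclic r m := by
  classical
  intro X hX
  refine ⟨?_, ?_⟩
  · by_contra hempty
    exact ht ⟨X, by lia, fun ⟨u, v, huv, hu, hvu⟩ => hempty ⟨u, v, huv, hu, hvu⟩⟩
  rintro z ⟨w, hzw, hz, hwz⟩ z' ⟨w', hzw', hz', hwz'⟩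
  by_contra hnot_reach
  let Z : Set V := {v | ReachIn r (X : Set V)ᶜ z v}
  have hclosed : ∀ x y, r x y → x ∈ Z → y ∉ X → y ∈ Z := fun x y hxy hx hy => hx.tail hy hxy
  have hZ : HasCycleIn r Z := by
    refine ⟨z, w, hzw, .refl hz, ?_⟩
    exact (hwz.inter_of_closed (hclosed z w hzw (.refl hz) hwz.left_mem)
      fun x _ y hy hxy hx => hclosed x y hxy hx hy).mono Set.inter_subset_right
  have hout : ∀ v, ReachIn r (X : Set V)ᶜ v z' → v ∉ Z := fun v hv hvZ => hnot_reach (hvZ.trans hv)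
  have hXZ : HasCycleIn r ((X : Set V)ᶜ \ Z) := by
    refine ⟨z', w', hzw', ⟨hz', hout _ (.refl hz')⟩, ?_⟩
    exact hwz'.between.mono fun v hv => ⟨hv.1.right_mem, hout v hv.2⟩
  have hdisj : Disjoint Z ((X : Set V)ᶜ \ Z) := Set.disjoint_sdiff_right
  obtain ⟨Y₁, hY₁, hno₁⟩ := exists_transversal_within ih hr hXZ hdisj
  obtain ⟨Y₂, hY₂, hno₂⟩ := exists_transversal_within ih hr hZ hdisj.symm
  refine ht ⟨X ∪ Y₁ ∪ Y₂, ?_, fun hcycle => ?_⟩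
  · have := Finset.card_union_le (X ∪ Y₁) Y₂
    have := Finset.card_union_le X Y₁
    lia
  · have hsub : ∀ v, v ∈ ((X ∪ Y₁ ∪ Y₂ : Finset V) : Set V)ᶜ → v ∉ X ∧ v ∉ Y₁ ∧ v ∉ Y₂ := by
      simp +contextual
    obtain hin | hout := hcycle.inter_or_diff (Z := Z) fun x _ y hy hxy hx =>
      hclosed x y hxy hx (hsub y hy).1
    · exact hno₁ (hin.mono fun v hv => ⟨hv.2, (hsub v hv.1).2.1⟩)
    · exact hno₂ (hout.mono fun v hv => ⟨⟨(hsub v hv.1).1, hv.2⟩, (hsub v hv.1).2.2⟩)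

theorem IsPath.append (hp : IsPath r p L) (hp' : IsPath r p' L') (h0 : p' 0 = p L)
    (hdisj : ∀ i < L, ∀ j ≤ L', p i ≠ p' j) :
    IsPath r (fun i => if i ≤ L then p i else p' (i - L)) (L + L') := by
  have late : ∀ i, L ≤ i → (if i ≤ L then p i else p' (i - L)) = p' (i - L) := fun i hi => by
    split_ifs with hiL
    · obtain rfl : i = L := by lia
      rw [Nat.sub_self, h0]
    · rfl
  refine ⟨fun i hi => ?_, fun i hi j hj hij => ?_⟩
  · obtain hiL | hiL := lt_or_ge i L
    · simpa only [if_pos hiL.le, if_pos (Nat.succ_le_of_lt hiL)] using hp.adj i hiL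
    · simpa only [late i hiL, if_neg (show ¬ i + 1 ≤ L by lia), Nat.sub_add_comm hiL] using
        hp'.adj (i - L) (by lia)
  · rw [Set.mem_Iic] at hi hj
    obtain hiL | hiL := lt_or_ge i L <;> obtain hjL | hjL := lt_or_ge j L
    · exact hp.injOn hiL.le hjL.le (by simpa only [if_pos hiL.le, if_pos hjL.le] using hij)
    · exact absurd (by simpa only [if_pos hiL.le, late j hjL] using hij)
        (hdisj i hiL (j - L) (by lia))
    · exact absurd (by simpa only [if_pos hjL.le, late i hiL] using hij.symm)
        (hdisj j hjL (i - L) (by lia))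
    · have := hp'.injOn (show i - L ≤ L' by lia) (show j - L ≤ L' by lia)
        (by simpa only [late i hiL, late j hjL] using hij)
      lia

theorem IsPath.lt_card [Finite V] (hp : IsPath r p L) : L < Nat.card V := by
  have := Set.ncard_le_card (p '' Set.Iic L)
  rw [hp.injOn.ncard_image, ← Finset.coe_Iic, Set.ncard_coe_finset, Nat.card_Iic] at this
  lia

theorem RobustlyCyclic.exists_longer_isPath {m : ℕ} (hr : RobustlyCyclic r (2 * m))
    {X Y : Finset V} (hX : X.card ≤ m) (hY : Y.card ≤ m) (hp : IsPath r p L)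
    (hpL : p L ∈ cyclicVertices r (Y : Set V)ᶜ)
    (hpY : ∀ i < L, p i ∉ cyclicVertices r (Y : Set V)ᶜ)
    (hpX : ∀ i ≤ L, p i ∉ cyclicVertices r (X : Set V)ᶜ) :
    ∃ q L', L < L' ∧ IsPath r q L' ∧ q L' ∈ cyclicVertices r (X : Set V)ᶜ ∧
      ∀ i < L', q i ∉ cyclicVertices r (X : Set V)ᶜ := by
  classical
  obtain ⟨z, hz⟩ := (hr (X ∪ Y) ((Finset.card_union_le X Y).trans (by lia))).1
  have hzX : z ∈ cyclicVertices r (X : Set V)ᶜ := cyclicVertices_mono (by simp) hz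
  have hzY : z ∈ cyclicVertices r (Y : Set V)ᶜ := cyclicVertices_mono (by simp) hz
  have hconn := (hr Y (by lia)).2
  obtain ⟨z', hz'X, hreach, hz'z⟩ :=
    ((hconn _ hpL _ hzY).within_cyclicVertices (hconn _ hzY _ hpL) hpL).exists_first_mem hzX
  obtain ⟨p', L', hp', h0, rfl, hmem⟩ := hreach.exists_isPath
  have hp'Y : ∀ i ≤ L', p' i ∈ cyclicVertices r (Y : Set V)ᶜ := fun i hi => by
    obtain hi' | hi' := hmem i hi
    · exact hi'.1
    · exact hi' ▸ hz'z.left_mem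
  have hp'X : ∀ i < L', p' i ∉ cyclicVertices r (X : Set V)ᶜ := fun i hi hiX => by
    obtain hi' | hi' := hmem i hi.le
    · exact hi'.2 hiX
    · exact hi.ne (hp'.injOn hi.le Set.self_mem_Iic hi')
  have hL' : 0 < L' := Nat.pos_of_ne_zero fun hzero => hpX L le_rfl (by rwa [← h0, ← hzero])
  refine ⟨_, _, Nat.lt_add_of_pos_right hL', hp.append hp' h0 fun i hi j hj hij =>
    hpY i hi (hij ▸ hp'Y j hj), ?_, fun i hi => ?_⟩
  · simpa only [if_neg (show ¬ L + L' ≤ L by lia), Nat.add_sub_cancel_left] using hz'X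
  · split_ifs with hiL
    · exact hpX i hiL
    · exact hp'X _ (by lia)

theorem RobustlyCyclic.exists_isPath_meeting [Finite V] {m : ℕ} (hr : RobustlyCyclic r (2 * m)) :
    ∃ p L, IsPath r p L ∧ ∀ X : Finset V, X.card ≤ m →
      ∃ i ≤ L, p i ∈ cyclicVertices r (X : Set V)ᶜ := by
  classical
  let Reaches : ℕ → Prop := fun L => ∃ p, IsPath r p L ∧ ∃ Y : Finset V, Y.card ≤ m ∧
    p L ∈ cyclicVertices r (Y : Set V)ᶜ ∧ ∀ i < L, p i ∉ cyclicVertices r (Y : Set V)ᶜ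
  have h0 : Reaches 0 := by
    obtain ⟨v, hv⟩ := (hr ∅ (by simp)).1
    exact ⟨fun _ => v, ⟨by simp, by simp [Set.InjOn]⟩, ∅, by simp, hv, by simp⟩
  obtain ⟨p, hp, Y, hY, hpL, hpY⟩ := Nat.findGreatest_spec (Nat.zero_le (Nat.card V)) h0
  refine ⟨p, _, hp, fun X hX => ?_⟩
  by_contra! hpX
  obtain ⟨q, L', hlt, hq, hqX, hnew⟩ := hr.exists_longer_isPath hX hY hp hpL hpY hpX
  exact hlt.not_ge (Nat.le_findGreatest hq.lt_card.le ⟨q, hq, X, hX, hqX, hnew⟩)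

/-- However `m` vertices are deleted, one of `p i, …, p (j - 1)` still lies on a cycle. -/
def MeetsCyclic (r : V → V → Prop) (p : ℕ → V) (i j m : ℕ) : Prop :=
  ∀ X : Finset V, X.card ≤ m → ∃ k, i ≤ k ∧ k < j ∧ p k ∈ cyclicVertices r (X : Set V)ᶜ

theorem MeetsCyclic.exists_split {i m m' : ℕ} (h : MeetsCyclic r p i L (m + 1 + m')) :
    ∃ j, i < j ∧ j ≤ L ∧ MeetsCyclic r p i j m ∧ MeetsCyclic r p j L m' := by
  classical
  have hex : ∃ j, MeetsCyclic r p i j m := ⟨L, fun X hX => h X (by lia)⟩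
  obtain ⟨j, hj, hmin⟩ : ∃ j, MeetsCyclic r p i j m ∧ ∀ j' < j, ¬ MeetsCyclic r p i j' m :=
    ⟨Nat.find hex, Nat.find_spec hex, fun _ => Nat.find_min hex⟩
  have hij : i < j := by
    obtain ⟨k, hik, hkj, -⟩ := hj ∅ (by simp)
    lia
  have hjL : j ≤ L := not_lt.1 fun hLj => hmin L hLj fun X hX => h X (by lia)
  obtain ⟨X, hX, hXmiss⟩ : ∃ X : Finset V, X.card ≤ m ∧
      ∀ k, i ≤ k → k < j - 1 → p k ∉ cyclicVertices r (X : Set V)ᶜ := by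
    simpa only [MeetsCyclic, not_forall, not_exists, not_and, exists_prop] using
      hmin (j - 1) (by lia)
  refine ⟨j, hij, hjL, hj, fun Y hY => ?_⟩
  obtain ⟨k, hik, hkL, hk⟩ := h (insert (p (j - 1)) (X ∪ Y)) (by
    have := Finset.card_insert_le (p (j - 1)) (X ∪ Y)
    have := Finset.card_union_le X Y
    lia)
  have hkX : p k ∈ cyclicVertices r (X : Set V)ᶜ :=
    cyclicVertices_mono (Set.compl_subset_compl.2 (by intro; simp +contextual)) hk
  have hkY : p k ∈ cyclicVertices r (Y : Set V)ᶜ :=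
    cyclicVertices_mono (Set.compl_subset_compl.2 (by intro; simp +contextual)) hk
  have hkj : k ≠ j - 1 := by
    rintro rfl
    exact cyclicVertices_subset hk (by simp)
  exact ⟨k, not_lt.1 fun hlt => hXmiss k hik (by lia) hkX, hkL, hkY⟩

theorem MeetsCyclic.exists_partition {m : ℕ} (n : ℕ) {i : ℕ}
    (h : MeetsCyclic r p i L (n * (m + 1))) (hi : i ≤ L) :
    ∃ c : ℕ → ℕ, c 0 = i ∧ ∀ k < n, c k < c (k + 1) ∧ c (k + 1) ≤ L ∧
      MeetsCyclic r p (c k) (c (k + 1)) m := by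
  induction n generalizing i with
  | zero => exact ⟨fun _ => i, rfl, by simp⟩
  | succ n ih =>
    rw [show (n + 1) * (m + 1) = m + 1 + n * (m + 1) by ring] at h
    obtain ⟨j, hij, hjL, hfirst, hrest⟩ := h.exists_split
    obtain ⟨c, rfl, hc⟩ := ih hrest hjL
    refine ⟨fun k => k.casesOn i c, rfl, fun k hk => ?_⟩
    cases k with
    | zero => exact ⟨hij, hjL, hfirst⟩
    | succ k => exact hc k (by lia)

/-- Any two equally large finite subsets of `T` are joined by disjoint walks. -/
def Linked (r : V → V → Prop) (T : Set V) : Prop :=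
  ∀ A B : Finset V, (A : Set V) ⊆ T → (B : Set V) ⊆ T → A.card = B.card →
    HasLinkageIn r Set.univ A B A.card

theorem IsPath.pairwiseDisjoint_image_Ico (hp : IsPath r p L) {a b : ℕ → ℕ} {n : ℕ}
    (hab : ∀ i j, i < j → j < n → b i ≤ a j) (hb : ∀ i < n, b i ≤ L + 1) :
    (Set.Iio n).PairwiseDisjoint fun i => p '' Set.Ico (a i) (b i) := by
  refine pairwiseDisjoint_Iio_of_lt fun i j hij hj => Set.disjoint_left.2 ?_
  rintro _ ⟨k, hk, rfl⟩ ⟨l, hl, hkl⟩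
  have hij' := hab i j hij hj
  have hiL := hb i (hij.trans hj)
  have hjL := hb j hj
  simp only [Set.mem_Ico] at hk hl
  have := hp.injOn (show l ≤ L by lia) (show k ≤ L by lia) hkl
  lia

theorem exists_mem_disjoint_of_card_lt {q : ι → V} {f : ι → Set V} {I : Set ι} {D X : Finset V}
    (hf : I.PairwiseDisjoint f) (hD : (D : Set V) ⊆ q '' I) (hX : X.card < D.card) :
    ∃ i ∈ I, q i ∈ D ∧ Disjoint (f i) X := by
  classical
  obtain ⟨J, hJI, rfl⟩ := Finset.subset_set_image_iff.1 hD
  obtain ⟨i, hi, hiX⟩ := exists_disjoint_of_card_lt (hf.subset hJI)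
    (hX.trans_le Finset.card_image_le)
  exact ⟨i, hJI hi, Finset.mem_image_of_mem _ hi, hiX⟩

theorem RobustlyCyclic.linked_of_partition [Finite V] [Nonempty V] {K : ℕ}
    (hr : RobustlyCyclic r K) (hp : IsPath r p L) {c : ℕ → ℕ}
    (hc : StrictMonoOn c (Set.Iic (2 * K))) (hcL : ∀ k < 2 * K, c (k + 1) ≤ L + 1)
    (hmeets : ∀ k < 2 * K, MeetsCyclic r p (c k) (c (k + 1)) K) :
    Linked r ((fun i => p (c (2 * i + 1))) '' Set.Iio K) := by
  have hdisj : (Set.Iio K).PairwiseDisjoint fun i => p '' Set.Ico (c (2 * i)) (c (2 * i + 2)) :=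
    hp.pairwiseDisjoint_image_Ico (fun i j hij hj => hc.monotoneOn
      (show 2 * i + 2 ≤ 2 * K by lia) (show 2 * j ≤ 2 * K by lia) (by lia))
      fun i hi => hcL (2 * i + 1) (by lia)
  intro A B hA hB hAB
  refine (menger r A B A.card).resolve_right fun ⟨X, hX, hsep⟩ => ?_
  have hXK : X.card ≤ K := by
    rw [← Set.ncard_coe_finset] at hX
    have hAK := Set.ncard_le_ncard hA ((Set.finite_Iio K).image _)
    have hK := Set.ncard_image_le (s := Set.Iio K) (f := fun i => p (c (2 * i + 1)))
      (Set.finite_Iio K)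
    simp only [Set.ncard_coe_finset, ← Finset.coe_Iio, Nat.card_Iio] at hX hAK hK
    lia
  obtain ⟨i, hi, hiA, hiX⟩ := exists_mem_disjoint_of_card_lt hdisj hA hX
  obtain ⟨j, hj, hjB, hjX⟩ := exists_mem_disjoint_of_card_lt hdisj hB (hAB ▸ hX)
  rw [Set.mem_Iio] at hi hj
  obtain ⟨k, hik, hki, hk⟩ := hmeets (2 * i + 1) (by lia) X hXK
  obtain ⟨l, hjl, hlj, hl⟩ := hmeets (2 * j) (by lia) X hXK
  have lt_step : ∀ k < 2 * K, c k < c (k + 1) := fun k hk => hc hk.le hk k.lt_succ_self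
  have hi₁ := lt_step (2 * i) (by lia)
  have hj₁ := lt_step (2 * j + 1) (by lia)
  have hiL := hcL (2 * i + 1) (by lia)
  have hjL := hcL (2 * j + 1) (by lia)
  have start : ReachIn r (X : Set V)ᶜ (p (c (2 * i + 1))) (p k) :=
    hp.reachIn hik (by lia) fun q _ _ =>
      Set.disjoint_left.1 hiX ⟨q, ⟨by lia, by lia⟩, rfl⟩
  have finish : ReachIn r (X : Set V)ᶜ (p l) (p (c (2 * j + 1))) :=
    hp.reachIn (by lia) (by lia) fun q _ _ =>
      Set.disjoint_left.1 hjX ⟨q, ⟨by lia, by lia⟩, rfl⟩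
  exact hsep _ hiA _ hjB ((start.trans ((hr X hXK).2 _ hk _ hl)).trans finish)

theorem RobustlyCyclic.exists_isPath_linked [Finite V] [Nonempty V] {K : ℕ}
    (hr : RobustlyCyclic r (2 * (2 * K * (K + 1)))) :
    ∃ p L, IsPath r p L ∧ ∃ pos : ℕ → ℕ, StrictMonoOn pos (Set.Iio K) ∧ (∀ i < K, pos i ≤ L) ∧
      Linked r ((fun i => p (pos i)) '' Set.Iio K) := by
  obtain ⟨p, L, hp, hmeet⟩ := hr.exists_isPath_meeting
  have hmeets : MeetsCyclic r p 0 (L + 1) (2 * K * (K + 1)) := fun X hX => by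
    obtain ⟨i, hi, hiX⟩ := hmeet X hX
    exact ⟨i, i.zero_le, by lia, hiX⟩
  obtain ⟨c, -, hc⟩ := hmeets.exists_partition (2 * K) (Nat.zero_le _)
  have hmono : StrictMonoOn c (Set.Iic (2 * K)) :=
    strictMonoOn_Iic_of_lt_succ fun k hk => (hc k hk).1
  refine ⟨p, L, hp, fun i => c (2 * i + 1), fun i hi j hj hij => ?_, fun i hi => ?_, ?_⟩
  · simp only [Set.mem_Iio] at hi hj
    exact hmono (show 2 * i + 1 ≤ 2 * K by lia) (show 2 * j + 1 ≤ 2 * K by lia) (by lia)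
  · have := hc (2 * i + 1) (by lia)
    lia
  · exact RobustlyCyclic.linked_of_partition (fun X hX => hr X (by nlinarith)) hp hmono
      (fun k hk => (hc k hk).2.1) fun k hk => (hc k hk).2.2

end Linked

/-! ### Linkages using few edges outside a family of disjoint paths -/

section PathSystem

variable {V : Type*} {r r' : V → V → Prop} {A B A' B' D : Set V} {q q' K N N' : ℕ} {Q : ℕ → ℕ → V}
  {len : ℕ → ℕ} {P : ℕ → Set V} {p : ℕ → V} {L : ℕ}

/-- `Q 0, …, Q (q - 1)` are pairwise disjoint directed paths from `A` to `B`, the path `Q j` having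
the vertices `Q j 0, …, Q j (len j)`. -/
structure IsPathSystem (r : V → V → Prop) (A B : Set V) (q : ℕ) (Q : ℕ → ℕ → V) (len : ℕ → ℕ) :
    Prop where
  isPath : ∀ j < q, IsPath r (Q j) (len j)
  start_mem : ∀ j < q, Q j 0 ∈ A
  end_mem : ∀ j < q, Q j (len j) ∈ B
  index_eq : ∀ j < q, ∀ j' < q, ∀ u ≤ len j, ∀ u' ≤ len j', Q j u = Q j' u' → j = j'

namespace IsPathSystem

theorem comp (h : IsPathSystem r A B q Q len) {e : ℕ → ℕ} (he : ∀ j < q', e j < q)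
    (hinj : Set.InjOn e (Set.Iio q')) :
    IsPathSystem r A B q' (fun j => Q (e j)) (fun j => len (e j)) :=
  ⟨fun j hj => h.isPath _ (he j hj), fun j hj => h.start_mem _ (he j hj),
    fun j hj => h.end_mem _ (he j hj), fun j hj j' hj' u hu u' hu' heq =>
      hinj hj hj' (h.index_eq _ (he j hj) _ (he j' hj') u hu u' hu' heq)⟩

theorem mono (h : IsPathSystem r A B q Q len) (hr : ∀ x y, r x y → r' x y) (hA : A ⊆ A')
    (hB : B ⊆ B') : IsPathSystem r' A' B' q Q len :=
  ⟨fun j hj => ⟨fun i hi => hr _ _ ((h.isPath j hj).adj i hi), (h.isPath j hj).injOn⟩,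
    fun j hj => hA (h.start_mem j hj), fun j hj => hB (h.end_mem j hj), h.index_eq⟩

theorem isLinkage (h : IsPathSystem r A B q Q len) :
    IsLinkage r A B (Set.Iio q) (fun j => Q j '' Set.Iic (len j)) (fun j => Q j 0)
      fun j => Q j (len j) := by
  refine ⟨h.start_mem, h.end_mem, fun j hj => ?_, fun j hj j' hj' hne => ?_⟩
  · exact (h.isPath j hj).reachIn (Nat.zero_le _) le_rfl fun i _ hi => ⟨i, hi, rfl⟩
  · refine Set.disjoint_left.2 ?_
    rintro _ ⟨u, hu, rfl⟩ ⟨u', hu', heq⟩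
    exact hne (h.index_eq j hj j' hj' u hu u' hu' heq.symm)

end IsPathSystem

theorem HasLinkageIn.exists_isPathSystem (h : HasLinkageIn r D A B K) :
    ∃ Q len, IsPathSystem r A B K Q len ∧ ∀ j < K, ∀ u ≤ len j, Q j u ∈ D := by
  obtain ⟨S, s, t, hl, hS⟩ := h
  have : Nonempty V := ⟨s 0⟩
  choose! Q len hQ hstart hend hQS using fun j (hj : j < K) => (hl.reach j hj).exists_isPath
  refine ⟨Q, len, ⟨hQ, fun j hj => hstart j hj ▸ hl.start_mem j hj,
    fun j hj => hend j hj ▸ hl.end_mem j hj, fun j hj j' hj' u hu u' hu' heq => ?_⟩,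
    fun j hj u hu => hS j hj (hQS j hj u hu)⟩
  exact hl.disjoint.elim_set hj hj' _ (hQS j hj u hu) (heq ▸ hQS j' hj' u' hu')

/-- The set `Z` contains exactly the vertices up to position `w` of the path `p 0, …, p L`. -/
def CutsAfter (p : ℕ → V) (L w : ℕ) (Z : Set V) : Prop :=
  ∀ u ≤ L, p u ∈ Z ↔ u ≤ w

/-- No edge between vertices of `R` leaves the set `Z`. -/
def ClosedIn (r : V → V → Prop) (R Z : Set V) : Prop :=
  ∀ x ∈ R, ∀ y ∈ R, r x y → x ∈ Z → y ∈ Z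

/-- Whenever the path `p 0, …, p L` goes from one set `P i` to another set `P i'`, it can be cut in
between by a set that no edge inside a `P k` leaves, except for those `P k` that meet a set of fewer
than `K` vertices. -/
def HasSmallCuts (r : V → V → Prop) (K N : ℕ) (P : ℕ → Set V) (p : ℕ → V) (L : ℕ) : Prop :=
  ∀ i < N, ∀ i' < N, i ≠ i' → ∀ u u', u < u' → u' ≤ L → p u ∈ P i → p u' ∈ P i' →
    ∃ w, u ≤ w ∧ w < u' ∧ ∃ X : Finset V, X.card < K ∧ ∃ Z : Set V, CutsAfter p L w Z ∧
      ∀ k < N, Disjoint (P k) X → ClosedIn r (P k) Z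

theorem HasSmallCuts.comp (h : HasSmallCuts r K N P p L) {ρ : ℕ → ℕ} (hρ : ∀ i < N', ρ i < N)
    (hinj : Set.InjOn ρ (Set.Iio N')) : HasSmallCuts r K N' (fun i => P (ρ i)) p L := by
  intro i hi i' hi' hne u u' huu' hu' hpu hpu'
  obtain ⟨w, huw, hwu', X, hX, Z, hZ, hclosed⟩ := h (ρ i) (hρ i hi) (ρ i') (hρ i' hi')
    (hinj.ne hi hi' hne) u u' huu' hu' hpu hpu'
  exact ⟨w, huw, hwu', X, hX, Z, hZ, fun k hk => hclosed (ρ k) (hρ k hk)⟩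

theorem exists_minimal_rel_hasLinkageIn [Finite V] [Nonempty V] (hr' : ∀ x y, r' x y → r x y)
    (h : HasLinkageIn r Set.univ A B K) :
    ∃ ρ : V → V → Prop, (∀ x y, ρ x y → r x y) ∧ (∀ x y, r' x y → ρ x y) ∧
      HasLinkageIn ρ Set.univ A B K ∧ ∀ x y, ρ x y → ¬ r' x y →
        ∃ X : Finset V, X.card < K ∧ Separates (deleteEdge ρ x y) X A B := by
  obtain ⟨ρ, hmin⟩ := exists_minimal_of_wellFoundedLT
    (fun ρ : V → V → Prop => ρ ≤ r ∧ r' ≤ ρ ∧ HasLinkageIn ρ Set.univ A B K) ⟨r, le_rfl, hr', h⟩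
  refine ⟨ρ, hmin.prop.1, hmin.prop.2.1, hmin.prop.2.2, fun x y hxy hxy' => ?_⟩
  refine (menger (deleteEdge ρ x y) A B K).resolve_left fun hlink => ?_
  have hle : deleteEdge ρ x y ≤ ρ := fun _ _ hab => hab.1
  refine (hmin.le_of_le ⟨hle.trans hmin.prop.1, fun a b hab => ?_, hlink⟩ hle x y hxy).2 ⟨rfl, rfl⟩
  refine ⟨hmin.prop.2.1 a b hab, ?_⟩
  rintro ⟨rfl, rfl⟩
  exact hxy' hab

theorem IsPathSystem.adj_deleteEdge (hQ : IsPathSystem r A B K Q len) {i j v w : ℕ} (hi : i < K)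
    (hj : j < K) (hv : v < len i) (hw : w < len j) (hne : i ≠ j ∨ v ≠ w) :
    deleteEdge r (Q j w) (Q j (w + 1)) (Q i v) (Q i (v + 1)) := by
  refine ⟨(hQ.isPath i hi).adj v hv, fun heq => ?_⟩
  obtain rfl := hQ.index_eq i hi j hj v hv.le w hw.le heq.1
  exact hne.elim (· rfl) (· ((hQ.isPath i hi).injOn hv.le hw.le heq.1))

theorem IsPathSystem.cutsAfter_of_separates (hQ : IsPathSystem r A B K Q len) {j w : ℕ} (hj : j < K)
    (hw : w < len j) {X : Finset V} (hX : X.card < K)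
    (hsep : Separates (deleteEdge r (Q j w) (Q j (w + 1))) X A B) :
    CutsAfter (Q j) (len j) w
      {z | ∃ a ∈ A, ReachIn (deleteEdge r (Q j w) (Q j (w + 1))) (X : Set V)ᶜ a z} := by
  obtain ⟨i, hi, hiX⟩ := exists_disjoint_of_card_lt (I := Finset.Iio K)
    (by simpa using hQ.isLinkage.disjoint) (by simpa using hX)
  rw [Finset.mem_Iio] at hi
  have avoids : ∀ v ≤ len i, Q i v ∈ (X : Set V)ᶜ := fun v hv =>
    Set.disjoint_left.1 hiX ⟨v, hv, rfl⟩
  obtain rfl : i = j := by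
    by_contra hne
    exact hsep _ (hQ.start_mem i hi) _ (hQ.end_mem i hi) <| .of_walk (Nat.zero_le _)
      (fun v _ hv => hQ.adj_deleteEdge hi hj hv hw (.inl hne)) fun v _ hv => avoids v hv
  refine fun v hv => ⟨fun ⟨a, ha, hav⟩ => ?_, fun hvw => ⟨Q i 0, hQ.start_mem i hi, ?_⟩⟩
  · by_contra! hwv
    refine hsep a ha _ (hQ.end_mem i hi) (hav.trans (.of_walk hv (fun k hvk hk => ?_) fun k _ hk =>
      avoids k hk))
    exact hQ.adj_deleteEdge hi hj hk hw (.inr (by lia))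
  · refine .of_walk (Nat.zero_le v) (fun k _ hk => ?_) fun k _ hk => avoids k (hk.trans hv)
    exact hQ.adj_deleteEdge hi hj (by lia) hw (.inr (by lia))

theorem exists_edge_leaving_family (hP : (Set.Iio N).PairwiseDisjoint P) {i i' u u' : ℕ}
    (hi : i < N) (hi' : i' < N) (hne : i ≠ i') (huu' : u ≤ u') (hu : p u ∈ P i)
    (hu' : p u' ∈ P i') :
    ∃ w, u ≤ w ∧ w < u' ∧ ¬ ∃ k < N, p w ∈ P k ∧ p (w + 1) ∈ P k := by
  by_contra! hinside
  have stays : ∀ w, u ≤ w → w ≤ u' → p w ∈ P i := fun w huw => by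
    induction w, huw using Nat.le_induction with
    | base => exact fun _ => hu
    | succ w huw ih =>
      intro hw
      obtain ⟨k, hk, hwk, hwk'⟩ := hinside w huw hw
      rwa [hP.elim_set hi hk _ (ih (by lia)) hwk]
  exact hne (hP.elim_set hi hi' _ (stays u' huu' le_rfl) hu')

theorem HasLinkageIn.exists_isPathSystem_hasSmallCuts [Finite V] [Nonempty V]
    (hP : (Set.Iio N).PairwiseDisjoint P) (hPD : ∀ i < N, P i ⊆ D)
    (h : HasLinkageIn r D A B K) :
    ∃ Q len, IsPathSystem r A B K Q len ∧ (∀ j < K, ∀ u ≤ len j, Q j u ∈ D) ∧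
      ∀ j < K, HasSmallCuts r K N P (Q j) (len j) := by
  let inD : V → V → Prop := fun x y => r x y ∧ x ∈ D ∧ y ∈ D
  let inP : V → V → Prop := fun x y => r x y ∧ ∃ k < N, x ∈ P k ∧ y ∈ P k
  have hlink : HasLinkageIn inD Set.univ (A ∩ D) (B ∩ D) K := by
    obtain ⟨S, s, t, hl, hS⟩ := h
    exact ⟨S, s, t, ⟨fun i hi => ⟨hl.start_mem i hi, hS i hi (hl.reach i hi).left_mem⟩,
      fun i hi => ⟨hl.end_mem i hi, hS i hi (hl.reach i hi).right_mem⟩,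
      fun i hi => (hl.reach i hi).mono_rel fun x hx y hy hxy => ⟨hxy, hS i hi hx, hS i hi hy⟩,
      hl.disjoint⟩, fun i _ => Set.subset_univ _⟩
  obtain ⟨ρ, hρ, hPρ, hρlink, hcut⟩ := exists_minimal_rel_hasLinkageIn (r' := inP)
    (fun x y ⟨hxy, k, hk, hx, hy⟩ => ⟨hxy, hPD k hk hx, hPD k hk hy⟩) hlink
  obtain ⟨Q, len, hQ, -⟩ := hρlink.exists_isPathSystem
  refine ⟨Q, len, hQ.mono (fun x y hxy => (hρ x y hxy).1) Set.inter_subset_left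
    Set.inter_subset_left, fun j hj u hu => ?_, fun j hj => ?_⟩
  · obtain hlt | rfl := hu.lt_or_eq
    · exact (hρ _ _ ((hQ.isPath j hj).adj u hlt)).2.1
    · exact (hQ.end_mem j hj).2
  · intro i hi i' hi' hne u u' huu' hu' hu hui'
    obtain ⟨w, huw, hwu', hw⟩ := exists_edge_leaving_family hP hi hi' hne huu'.le hu hui'
    obtain ⟨X, hX, hsep⟩ := hcut _ _ ((hQ.isPath j hj).adj w (by lia)) fun hin => hw hin.2
    refine ⟨w, huw, hwu', X, hX, _, hQ.cutsAfter_of_separates hj (by lia) hX hsep, ?_⟩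
    rintro k hk hkX x hx y hy hxy ⟨a, ha, hax⟩
    refine ⟨a, ha, hax.tail (Set.disjoint_left.1 hkX hy) ⟨hPρ x y ⟨hxy, k, hk, hx, hy⟩, ?_⟩⟩
    rintro ⟨rfl, rfl⟩
    exact hw ⟨k, hk, hx, hy⟩

end PathSystem

/-! ### Grids -/

section Grid

universe u

variable {V : Type u} {r : V → V → Prop} {T R : Set V} {q n m N M K : ℕ} {Q : ℕ → ℕ → V}
  {len : ℕ → ℕ} {w : ℕ → ℕ → ℕ} {P : ℕ → Set V} {p : ℕ → V} {L : ℕ}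

/-- The sets `P 0, …, P (n - 1)` are pairwise disjoint traces of directed walks. -/
structure IsTraceFamily (r : V → V → Prop) (n : ℕ) (P : ℕ → Set V) : Prop where
  exists_isTrace : ∀ a < n, ∃ s t, IsTrace r (P a) s t
  disjoint : (Set.Iio n).PairwiseDisjoint P

theorem IsTraceFamily.comp (h : IsTraceFamily r n P) {ρ : ℕ → ℕ} (hρ : ∀ i < m, ρ i < n)
    (hinj : Set.InjOn ρ (Set.Iio m)) : IsTraceFamily r m fun i => P (ρ i) :=
  ⟨fun a ha => h.exists_isTrace _ (hρ a ha), fun a ha b hb hab =>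
    h.disjoint (hρ a ha) (hρ b hb) (hinj.ne ha hb hab)⟩

/-- The disjoint paths `Q j`, with both ends in `T`, are cut by the marks `w j 0 < … < w j M` into
consecutive pieces such that the `a`-th piece of every path meets the trace `R a`. -/
structure IsWeb (r : V → V → Prop) (T : Set V) (q M : ℕ) (Q : ℕ → ℕ → V) (len : ℕ → ℕ)
    (w : ℕ → ℕ → ℕ) (R : ℕ → Set V) : Prop where
  paths : IsPathSystem r T T q Q len
  traces : IsTraceFamily r M R
  mark_strictMonoOn : ∀ j < q, StrictMonoOn (w j) (Set.Iic M)
  mark_le : ∀ j < q, w j M ≤ len j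
  meets : ∀ j < q, ∀ a < M, ∃ u ∈ Set.Ioc (w j a) (w j (a + 1)), Q j u ∈ R a

/-- A web in which, between the first and the last mark, the path `Q j` meets the trace `R a` only
in its `a`-th piece. -/
structure IsGrid (r : V → V → Prop) (T : Set V) (q M : ℕ) (Q : ℕ → ℕ → V) (len : ℕ → ℕ)
    (w : ℕ → ℕ → ℕ) (R : ℕ → Set V) : Prop extends IsWeb r T q M Q len w R where
  meets_only : ∀ j < q, ∀ a < M, ∀ u ∈ Set.Ioc (w j 0) (w j M), Q j u ∈ R a →
    u ∈ Set.Ioc (w j a) (w j (a + 1))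

/-- There is a grid formed by `q` paths with ends in `T` and `M` traces. -/
def HasGrid (r : V → V → Prop) (T : Set V) (q M : ℕ) : Prop :=
  ∃ Q len w R, IsGrid r T q M Q len w R

theorem IsWeb.mark_mono {R : ℕ → Set V} (h : IsWeb r T q M Q len w R) {j a b : ℕ} (hj : j < q)
    (hab : a ≤ b) (hb : b ≤ M) : w j a ≤ w j b :=
  (h.mark_strictMonoOn j hj).monotoneOn (hab.trans hb) hb hab

theorem IsWeb.coarsen {R : ℕ → Set V} (h : IsWeb r T q N Q len w R) {g : ℕ → ℕ} (hg : StrictMono g)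
    (hgN : ∀ i ≤ 2 * M, g i < N) :
    IsWeb r T q M Q len (fun j a => w j (g (2 * a))) fun a => R (g (2 * a + 1)) := by
  refine ⟨h.paths, h.traces.comp (fun i hi => hgN _ (by lia)) fun i _ i' _ hii' => ?_,
    fun j hj a ha b hb hab => ?_, fun j hj => ?_, fun j hj a ha => ?_⟩
  · have := hg.injective hii'
    lia
  · simp only [Set.mem_Iic] at ha hb
    exact h.mark_strictMonoOn j hj (hgN _ (by lia)).le (hgN _ (by lia)).le (hg (by lia))
  · exact (h.mark_mono hj (hgN _ le_rfl).le le_rfl).trans (h.mark_le j hj)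
  · obtain ⟨u, hu, huR⟩ := h.meets j hj (g (2 * a + 1)) (hgN _ (by lia))
    exact ⟨u, ⟨(h.mark_mono hj (hg (by lia)).le (hgN _ (by lia)).le).trans_lt hu.1,
      hu.2.trans (h.mark_mono hj (hg (by lia)) (hgN _ (by lia)).le)⟩, huR⟩

theorem IsTrace.reachIn_of_cutsAfter {s t : V} {Z : Set V} {a b c : ℕ} (hR : IsTrace r R s t)
    (hcut : CutsAfter p L c Z) (hZ : ClosedIn r R Z) (ha : p a ∈ R) (hb : p b ∈ R)
    (hac : a ≤ c) (hcb : c < b) (hbL : b ≤ L) : ReachIn r R (p b) (p a) := by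
  refine (hR.total _ ha _ hb).resolve_left fun hab => hcb.not_ge ?_
  exact (hcut b hbL).1 (hab.mem_of_closed ((hcut a (by lia)).2 hac) hZ)

/-- The closed walk following the path `p` from position `a` to position `b` and returning
inside `R`. -/
def backLoop (r : V → V → Prop) (R : Set V) (p : ℕ → V) (a b : ℕ) : Set V :=
  {z | ReachIn r R (p b) z ∧ ReachIn r R z (p a)} ∪ p '' Set.Icc a b

theorem hasCycleIn_backLoop {a b : ℕ} (hp : IsPath r p L) (hab : a < b) (hb : b ≤ L)
    (hback : ReachIn r R (p b) (p a)) : HasCycleIn r (backLoop r R p a b) := by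
  refine .of_reachIn (hback.between.mono Set.subset_union_left)
    (hp.reachIn hab.le hb fun i hai hib => .inr ⟨i, ⟨hai, hib⟩, rfl⟩) fun heq => hab.ne' ?_
  exact hp.injOn hb (hab.le.trans hb) heq

theorem backLoop_subset {a b c : ℕ} {Z : Set V} (hcut : CutsAfter p L c Z) (hZ : ClosedIn r R Z)
    (hb : b ≤ L) (hbc : b ≤ c) : backLoop r R p a b ⊆ Z := by
  rintro z (⟨hbz, -⟩ | ⟨i, hi, rfl⟩)
  · exact hbz.mem_of_closed ((hcut b hb).2 hbc) hZ
  · exact (hcut i (hi.2.trans hb)).2 (hi.2.trans hbc)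

theorem disjoint_backLoop {a b c : ℕ} {Z : Set V} (hcut : CutsAfter p L c Z) (hZ : ClosedIn r R Z)
    (hab : a ≤ b) (hb : b ≤ L) (hca : c < a) : Disjoint Z (backLoop r R p a b) := by
  refine Set.disjoint_right.2 ?_
  rintro z (⟨-, hza⟩ | ⟨i, hi, rfl⟩) hz
  · exact hca.not_ge ((hcut a (hab.trans hb)).1 (hza.mem_of_closed hz hZ))
  · exact (hca.trans_le hi.1).not_ge ((hcut i (hi.2.trans hb)).1 hz)

-- The visits come in increasing order on the path but, by the cuts, in decreasing order on `R`.
theorem IsTrace.hasDisjointCycles_of_cut_visits {s t : V} (hR : IsTrace r R s t)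
    (hp : IsPath r p L) {u c : ℕ → ℕ} {Z : ℕ → Set V} (hu : ∀ k < 2 * n, u k ≤ L)
    (huR : ∀ k < 2 * n, p (u k) ∈ R) (huc : ∀ k < 2 * n, u k ≤ c k)
    (hcu : ∀ i k, i < k → k < 2 * n → c i < u k)
    (hcut : ∀ k < 2 * n, CutsAfter p L (c k) (Z k)) (hZ : ∀ k < 2 * n, ClosedIn r R (Z k)) :
    HasDisjointCycles r n := by
  have hlt : ∀ i < n, u (2 * i) < u (2 * i + 1) := fun i hi =>
    (huc _ (by lia)).trans_lt (hcu _ _ (by lia) (by lia))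
  refine ⟨fun i => backLoop r R p (u (2 * i)) (u (2 * i + 1)), fun i hi => ?_,
    pairwiseDisjoint_Iio_of_lt fun i j hij hj => ?_⟩
  · refine hasCycleIn_backLoop hp (hlt i hi) (hu _ (by lia)) ?_
    exact hR.reachIn_of_cutsAfter (hcut (2 * i) (by lia)) (hZ _ (by lia)) (huR _ (by lia))
      (huR _ (by lia)) (huc _ (by lia)) (hcu _ _ (by lia) (by lia)) (hu _ (by lia))
  · refine Set.disjoint_of_subset_left (u := Z (2 * i + 1)) ?_ ?_
    · exact backLoop_subset (hcut _ (by lia)) (hZ _ (by lia)) (hu _ (by lia)) (huc _ (by lia))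
    · exact disjoint_backLoop (hcut _ (by lia)) (hZ _ (by lia)) (hlt j hj).le (hu _ (by lia))
        (hcu _ _ (by lia) (by lia))

/-- A web in which the path `Q j` is cut at its mark `w j b` by a set `Z j b` that no edge inside
a trace `R a` leaves. -/
structure IsCutWeb (r : V → V → Prop) (T : Set V) (q M : ℕ) (Q : ℕ → ℕ → V) (len : ℕ → ℕ)
    (w : ℕ → ℕ → ℕ) (R : ℕ → Set V) (Z : ℕ → ℕ → Set V) : Prop
    extends IsWeb r T q M Q len w R where
  cutsAfter : ∀ j < q, ∀ b ≤ M, CutsAfter (Q j) (len j) (w j b) (Z j b)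
  closedIn : ∀ j < q, ∀ b ≤ M, ∀ a < M, ClosedIn r (R a) (Z j b)

section CutWeb

variable {R : ℕ → Set V} {Z : ℕ → ℕ → Set V}

theorem IsCutWeb.hasDisjointCycles (h : IsCutWeb r T q N Q len w R Z) {j a : ℕ} (hj : j < q)
    (ha : a < N) {g : ℕ → ℕ} (hg : StrictMono g) (hgN : ∀ t ≤ 2 * n, g t ≤ N)
    (hvisit : ∀ t < 2 * n, ∃ u ∈ Set.Ioc (w j (g t)) (w j (g (t + 1))), Q j u ∈ R a) :
    HasDisjointCycles r n := by
  obtain ⟨s, t, htrace⟩ := h.traces.exists_isTrace a ha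
  choose! u hu huR using hvisit
  refine htrace.hasDisjointCycles_of_cut_visits (h.paths.isPath j hj) (u := u)
    (c := fun t => w j (g (t + 1))) (Z := fun t => Z j (g (t + 1))) (fun t ht => ?_) huR
    (fun t ht => (hu t ht).2) (fun i k hik hk => ?_)
    (fun t ht => h.cutsAfter j hj _ (hgN _ ht)) fun t ht => h.closedIn j hj _ (hgN _ ht) a ha
  · exact (hu t ht).2.trans ((h.mark_mono hj (hgN _ ht) le_rfl).trans (h.mark_le j hj))
  · exact (h.mark_mono hj (hg.monotone hik) (hgN _ hk.le)).trans_lt (hu k hk).1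

theorem IsWeb.isGrid_coarsen (h : IsWeb r T q N Q len w R) {g : ℕ → ℕ} (hg : StrictMono g)
    (hgN : ∀ i ≤ 2 * M, g i < N)
    (hlate : ∀ j < q, ∀ a b c, a < b → b < c → c ≤ 2 * M →
      ∀ u ∈ Set.Ioc (w j (g b)) (w j (g c)), Q j u ∉ R (g a))
    (hearly : ∀ j < q, ∀ a b c, a < b → b < c → c ≤ 2 * M →
      ∀ u ∈ Set.Ioc (w j (g a)) (w j (g b)), Q j u ∉ R (g c)) :
    IsGrid r T q M Q len (fun j a => w j (g (2 * a))) fun a => R (g (2 * a + 1)) := by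
  refine ⟨h.coarsen hg hgN, fun j hj a ha u hu huR => ⟨?_, ?_⟩⟩
  · by_contra! hle
    obtain rfl | hpos := a.eq_zero_or_pos
    · exact hu.1.not_ge hle
    · exact hearly j hj 0 (2 * a) (2 * a + 1) (by lia) (by lia) (by lia) u ⟨hu.1, hle⟩ huR
  · by_contra! hlt
    obtain hlast | rfl : a + 1 < M ∨ a + 1 = M := by lia
    · exact hlate j hj (2 * a + 1) (2 * (a + 1)) (2 * M) (by lia) (by lia) le_rfl u ⟨hlt, hu.2⟩ huR
    · exact hu.2.not_gt hlt

end CutWeb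

theorem exists_size_cutWeb_grid (n q M : ℕ) : ∃ N : ℕ, ∀ {V : Type u} {r : V → V → Prop} {T : Set V}
    {Q len w R Z}, IsCutWeb r T q N Q len w R Z → HasDisjointCycles r n ∨ HasGrid r T q M := by
  obtain ⟨N, hN⟩ := ramsey_triples (Fin q → Prop × Prop) (2 * n + 2 * M + 2)
  refine ⟨N, fun {V r T Q len w R Z} h => ?_⟩
  obtain ⟨g, hg, hgN, k, hk⟩ := hN fun a b c j =>
    (∃ u ∈ Set.Ioc (w j b) (w j c), Q j u ∈ R a, ∃ u ∈ Set.Ioc (w j a) (w j b), Q j u ∈ R c)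
  by_cases hlate : ∃ j, (k j).1
  · obtain ⟨j, hj⟩ := hlate
    refine .inl (h.hasDisjointCycles j.2 (hgN 0 (by lia)) (g := fun t => g (t + 1))
      (hg.comp (strictMono_id.add_const 1)) (fun t ht => (hgN _ (by lia)).le) fun t ht => ?_)
    rwa [← hk 0 (t + 1) (t + 2) (by lia) (by lia) (by lia)] at hj
  by_cases hearly : ∃ j, (k j).2
  · obtain ⟨j, hj⟩ := hearly
    refine .inl (h.hasDisjointCycles j.2 (hgN (2 * n + 1) (by lia)) hg
      (fun t ht => (hgN t (by lia)).le) fun t ht => ?_)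
    rwa [← hk t (t + 1) (2 * n + 1) (by lia) (by lia) (by lia)] at hj
  · refine .inr ⟨Q, len, _, _, h.isGrid_coarsen hg (fun i hi => hgN i (by lia)) ?_ ?_⟩
    · refine fun j hj a b c hab hbc hc u hu huR => hlate ⟨⟨j, hj⟩, ?_⟩
      rw [← hk a b c hab hbc (by lia)]
      exact ⟨u, hu, huR⟩
    · refine fun j hj a b c hab hbc hc u hu huR => hearly ⟨⟨j, hj⟩, ?_⟩
      rw [← hk a b c hab hbc (by lia)]
      exact ⟨u, hu, huR⟩

theorem exists_disjoint_forall_of_card_lt {ι κ : Type*} {f : ι → Set V} {I : Finset ι}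
    {J : Finset κ} {X : κ → Finset V} (hf : (I : Set ι).PairwiseDisjoint f)
    (hX : ∀ k ∈ J, (X k).card ≤ K) (hI : J.card * K < I.card) :
    ∃ i ∈ I, ∀ k ∈ J, Disjoint (f i) (X k) := by
  classical
  obtain ⟨i, hi, hdisj⟩ := exists_disjoint_of_card_lt (X := J.biUnion X) hf
    ((Finset.card_biUnion_le_card_mul J X K hX).trans_lt hI)
  exact ⟨i, hi, fun k hk => hdisj.mono_right
    (Finset.coe_subset.2 (Finset.subset_biUnion_of_mem X hk))⟩

/-- Each path `Q j` visits the disjoint traces `P 0, …, P (m - 1)`, in this order, at the positions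
`μ j 0 < … < μ j (m - 1)`, and has cuts of size less than `K` between them. -/
structure IsOrderedWeb (r : V → V → Prop) (T : Set V) (q m K : ℕ) (Q : ℕ → ℕ → V) (len : ℕ → ℕ)
    (P : ℕ → Set V) (μ : ℕ → ℕ → ℕ) : Prop where
  paths : IsPathSystem r T T q Q len
  traces : IsTraceFamily r m P
  pos_strictMonoOn : ∀ j < q, StrictMonoOn (μ j) (Set.Iio m)
  pos_le : ∀ j < q, ∀ i < m, μ j i ≤ len j
  pos_mem : ∀ j < q, ∀ i < m, Q j (μ j i) ∈ P i
  cuts : ∀ j < q, HasSmallCuts r K m P (Q j) (len j)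

-- Cutting each path after every `g`-th visit, the fewer than `g` vertices of all these cuts leave
-- one trace intact in each of the resulting blocks.
theorem IsOrderedWeb.exists_mem_Ioc_forall_disjoint {μ : ℕ → ℕ → ℕ} {a b : ℕ}
    {X : ℕ → ℕ → Finset V} (h : IsOrderedWeb r T q m K Q len P μ)
    (hX : ∀ j < q, ∀ c ≤ N, (X j c).card ≤ K) (hb : b < m) (hab : a + q * (N + 1) * K < b) :
    ∃ i ∈ Set.Ioc a b, ∀ j < q, ∀ c ≤ N, Disjoint (P i) (X j c) := by
  obtain ⟨i, hi, hdisj⟩ := exists_disjoint_forall_of_card_lt (K := K) (I := Finset.Ioc a b)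
    (J := Finset.range q ×ˢ Finset.range (N + 1)) (f := P) (X := fun k => X k.1 k.2)
    (h.traces.disjoint.subset fun i hi => (Finset.mem_Ioc.1 hi).2.trans_lt hb)
    (fun k hk => by
      rw [Finset.mem_product, Finset.mem_range, Finset.mem_range] at hk
      exact hX _ hk.1 _ (by lia))
    (by simp only [Finset.card_product, Finset.card_range, Nat.card_Ioc]; lia)
  exact ⟨i, Finset.mem_Ioc.1 hi, fun j hj c hc => hdisj (j, c) (by simp; lia)⟩

theorem IsOrderedWeb.exists_isCutWeb {μ : ℕ → ℕ → ℕ} {g : ℕ} (hg : g = q * (N + 1) * K + 1)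
    (h : IsOrderedWeb r T q (g * N + 2) K Q len P μ) :
    ∃ w R Z, IsCutWeb r T q N Q len w R Z := by
  have block_le : ∀ b ≤ N, g * b ≤ g * N := fun b hb => Nat.mul_le_mul_left g hb
  have block_succ : ∀ b, g * (b + 1) = g * b + g := fun b => Nat.mul_succ g b
  choose! w hμw hwμ X hX Z hcut hclosed using fun j (hj : j < q) b (hb : b ≤ N) =>
    have hb' := block_le b hb
    h.cuts j hj (g * b) (by lia) (g * b + 1) (by lia) (by lia) _ _
      (h.pos_strictMonoOn j hj (Set.mem_Iio.2 (by lia)) (Set.mem_Iio.2 (by lia)) (by lia))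
      (h.pos_le j hj _ (by lia)) (h.pos_mem j hj _ (by lia)) (h.pos_mem j hj _ (by lia))
  choose! ι hι hintact using fun b (hb : b < N) =>
    have hb' := block_le (b + 1) hb
    h.exists_mem_Ioc_forall_disjoint (fun j hj c hc => (hX j hj c hc).le)
      (show g * (b + 1) < g * N + 2 by lia) (show g * b + q * (N + 1) * K < g * (b + 1) by
        rw [block_succ]; lia)
  have hιm : ∀ b < N, ι b < g * N + 2 := fun b hb => by
    have := block_le (b + 1) hb
    have := (hι b hb).2
    lia
  have hι_injOn : Set.InjOn ι (Set.Iio N) := StrictMonoOn.injOn fun b hb b' hb' hbb' => by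
    have := (hι b hb).2
    have := (hι b' hb').1
    have := Nat.mul_le_mul_left g (show b + 1 ≤ b' from hbb')
    lia
  have between : ∀ j < q, ∀ b < N, μ j (ι b) ∈ Set.Ioc (w j b) (w j (b + 1)) := fun j hj b hb => by
    have hmono := (h.pos_strictMonoOn j hj).monotoneOn
    have := block_le (b + 1) hb
    have hιb := hι b hb
    exact ⟨(hwμ j hj b hb.le).trans_le (hmono (Set.mem_Iio.2 (by lia)) (hιm b hb) hιb.1),
      (hmono (hιm b hb) (Set.mem_Iio.2 (by lia)) hιb.2).trans (hμw j hj _ hb)⟩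
  refine ⟨w, fun b => P (ι b), Z, ⟨h.paths, h.traces.comp hιm hι_injOn, fun j hj => ?_,
    fun j hj => ?_, fun j hj a ha => ⟨_, between j hj a ha, h.pos_mem j hj _ (hιm a ha)⟩⟩,
    hcut, fun j hj b hb a ha => hclosed j hj b hb _ (hιm a ha) (hintact a ha j hj b hb)⟩
  · refine strictMonoOn_of_lt_succ Set.ordConnected_Iic fun b _ _ hb => ?_
    exact (between j hj b hb).1.trans_le (between j hj b hb).2
  · exact (hwμ j hj N le_rfl).le.trans (h.pos_le j hj _ (by lia))

theorem exists_size_grid_of_hasSmallCuts (n q M : ℕ) : ∃ q' : ℕ, ∀ K : ℕ, ∃ φ : ℕ,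
    ∀ {V : Type u} {r : V → V → Prop} {T : Set V} {Q len P}, IsPathSystem r T T q' Q len →
      IsTraceFamily r φ P → (∀ j < q', ∀ a < φ, ∃ u ≤ len j, Q j u ∈ P a) →
      (∀ j < q', HasSmallCuts r K φ P (Q j) (len j)) →
      HasDisjointCycles r n ∨ HasGrid r T q M := by
  obtain ⟨N, hN⟩ := exists_size_cutWeb_grid.{u} n q M
  obtain ⟨q', hq'⟩ := exists_common_order q
  refine ⟨q', fun K => ?_⟩
  obtain ⟨φ, hφ⟩ := hq' ((q * (N + 1) * K + 1) * N + 2)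
  refine ⟨φ, fun {V r T Q len P} hQ hP hmeet hcuts => ?_⟩
  choose! μ hμ hμP using hmeet
  obtain ⟨e, ρ, he, heq, hρ, hρφ, hmono⟩ := hφ μ fun j hj a ha b hb hab =>
    hP.disjoint.elim_set ha hb _ (hμP j hj a ha) (hab ▸ hμP j hj b hb)
  have hweb : IsOrderedWeb r T q _ K (fun j => Q (e j)) (fun j => len (e j)) (fun i => P (ρ i))
      fun j i => μ (e j) (ρ i) :=
    ⟨hQ.comp heq he.injective.injOn, hP.comp hρφ hρ, hmono,
      fun j hj i hi => hμ _ (heq j hj) _ (hρφ i hi), fun j hj i hi => hμP _ (heq j hj) _ (hρφ i hi),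
      fun j hj => (hcuts _ (heq j hj)).comp hρφ hρ⟩
  obtain ⟨w, R, Z, hcutWeb⟩ := hweb.exists_isCutWeb rfl
  exact hN hcutWeb

/-- The constant `q'` is the number of paths by which every large linkage into `T` shrinks when it
is rerouted away from `p` members of a large family of disjoint traces, in the absence of `n`
disjoint cycles and of a `q` by `M` grid. -/
def DisjointifiesWithLoss (n q M q' : ℕ) : Prop :=
  ∀ K p : ℕ, ∃ N : ℕ, ∀ {V : Type u} [Finite V] [Nonempty V] {r : V → V → Prop} {T A B D : Set V}
    {P : ℕ → Set V}, IsTraceFamily r N P → (∀ a < N, P a ⊆ D) → A ⊆ T → B ⊆ T →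
    HasLinkageIn r D A B K → (HasDisjointCycles r n ∨ HasGrid r T q M) ∨
      ∃ g : ℕ → ℕ, StrictMono g ∧ (∀ i < p, g i < N) ∧
        HasLinkageIn r (D \ ⋃ i < p, P (g i)) A B (K - q')

theorem exists_disjointifiesWithLoss (n q M : ℕ) :
    ∃ q', DisjointifiesWithLoss.{u} n q M q' := by
  classical
  obtain ⟨q', hq'⟩ := exists_size_grid_of_hasSmallCuts.{u} n q M
  refine ⟨q', fun K p => ?_⟩
  obtain ⟨φ, hφ⟩ := hq' K
  obtain ⟨N, hN⟩ := pigeonhole (Set (Fin K)) (max p φ)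
  refine ⟨N, fun {V _ _ r T A B D P} hP hPD hA hB hlink => ?_⟩
  obtain ⟨Q, len, hQ, hQD, hcuts⟩ := hlink.exists_isPathSystem_hasSmallCuts hP.disjoint hPD
  obtain ⟨g, hg, hgN, hit, hhit⟩ := hN fun i => {j : Fin K | ∃ u ≤ len j, Q j u ∈ P i}
  let J : Finset ℕ := (Finset.range K).filter fun j => ∃ h : j < K, (⟨j, h⟩ : Fin K) ∈ hit
  obtain hmany | hfew := le_or_gt q' J.card
  · obtain ⟨e, he, heJ⟩ := exists_strictMono_mem_of_le_card hmany
    simp only [J, Finset.mem_filter, Finset.mem_range] at heJ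
    have heK : ∀ j < q', e j < K := fun j hj => (heJ j hj).1
    have hgφ : ∀ a < φ, g a < N := fun a ha => hgN a (ha.trans_le (le_max_right ..))
    refine .inl (hφ ((hQ.comp heK he.injective.injOn).mono (fun _ _ => id) hA hB)
      (hP.comp hgφ hg.injective.injOn) (fun j hj a ha => ?_) fun j hj =>
        (hcuts _ (heK j hj)).comp hgφ hg.injective.injOn)
    obtain ⟨hjK, hj'⟩ := (heJ j hj).2
    rwa [← hhit a (ha.trans_le (le_max_right ..))] at hj'
  · have hcard : K - q' ≤ (Finset.range K \ J).card := by
      have := Finset.le_card_sdiff J (Finset.range K)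
      rw [Finset.card_range] at this
      lia
    obtain ⟨e, he, heJ⟩ := exists_strictMono_mem_of_le_card hcard
    simp only [J, Finset.mem_sdiff, Finset.mem_filter, Finset.mem_range] at heJ
    refine .inr ⟨g, hg, fun i hi => hgN i (hi.trans_le (le_max_left ..)), _, _, _,
      (hQ.comp (fun j hj => (heJ j hj).1) he.injective.injOn).isLinkage, fun j hj => ?_⟩
    rintro _ ⟨u, hu, rfl⟩
    refine ⟨hQD _ (heJ j hj).1 u hu, fun hmem => (heJ j hj).2 ⟨(heJ j hj).1, (heJ j hj).1, ?_⟩⟩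
    obtain ⟨i, hi, hui⟩ := Set.mem_iUnion₂.1 hmem
    exact (hhit i (hi.trans_le (le_max_left ..))).subset ⟨u, hu, hui⟩

end Grid

/-! ### Grids from a long path through a linked set -/

section Feedback

universe u

variable {V : Type u} {r : V → V → Prop} {S D D' T U A B : Set V} {K K' M N n q q' : ℕ} {a b : V}

theorem ReachIn.exists_entry (h : ReachIn r S a b) (ha : a ∉ U) (hb : b ∈ U) :
    ∃ x y, ReachIn r (S \ U) a x ∧ r x y ∧ y ∈ S ∩ U := by
  revert ha
  refine h.head_induction (fun hb' => absurd hb hb') fun x y hyb ih hxy hx hxU => ?_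
  by_cases hyU : y ∈ U
  · exact ⟨x, y, .refl ⟨hx, hxU⟩, hxy, hyb.left_mem, hyU⟩
  · obtain ⟨x', y', hyx', h'⟩ := ih hyU
    exact ⟨x', y', .head ⟨hx, hxU⟩ hxy hyx', h'⟩

-- Follow the walk from the last vertex of `U` reachable from `a` up to its next vertex in `U`.
theorem IsTrace.exists_ear {s t : V} (hU : IsTrace r U s t) (hcyc : ¬ HasCycleIn r U)
    (hba : ReachIn r U b a) (hne : a ≠ b) (h : ReachIn r S a b) :
    ∃ J ⊆ S \ U, (∃ x y, IsTrace r J x y) ∧ HasCycleIn r (U ∪ J) := by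
  have hb : ¬ ReachIn r U a b := fun hab => hcyc (.of_reachIn hab hba hne)
  obtain ⟨c, hac, hcb, -⟩ :=
    h.exists_last_mem (A := {x | ReachIn r U a x}) (ReachIn.refl hba.right_mem)
  obtain rfl | ⟨y, ⟨hcy, hy⟩, hyb⟩ := hcb.2.cases_head
  · exact absurd hac hb
  have hyU : y ∉ U := fun hyU => by
    obtain ⟨-, hay⟩ | rfl := hy
    · exact hay (hac.tail hyU hcy)
    · exact hcyc ⟨y, y, hcy, hyU, .refl hyU⟩
  obtain ⟨x, d, hyx, hxd, hd, hdU⟩ := ReachIn.exists_entry ⟨hy, hyb⟩ hyU hba.left_mem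
  have hdc : ReachIn r U d c := by
    obtain ⟨-, hd⟩ | rfl := hd
    · exact ((hU.total _ hba.right_mem _ hdU).resolve_left hd).trans hac
    · exact .refl hdU
  obtain ⟨J, hJ, hJtrace⟩ := hyx.exists_isTrace
  refine ⟨J, fun z hz => ?_, ⟨_, _, hJtrace⟩, c, y, hcy, .inl hac.right_mem, ?_⟩
  · obtain ⟨⟨hzS, -⟩ | rfl, hzU⟩ := hJ hz
    · exact ⟨hzS, hzU⟩
    · exact absurd hac.right_mem hzU
  · exact ((hJtrace.reachIn.mono Set.subset_union_right).tail (.inl hdU) hxd).trans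
      (hdc.mono Set.subset_union_left)

theorem HasLinkageIn.mono (h : HasLinkageIn r D A B K) (hD : D ⊆ D') (hK : K' ≤ K) :
    HasLinkageIn r D' A B K' := by
  obtain ⟨S, s, t, hS, hSD⟩ := h
  exact ⟨S, s, t, hS.comp (f := id) (fun _ hi => lt_of_lt_of_le hi hK) (Set.injOn_id _),
    fun i hi => (hSD i (hi.trans_le hK)).trans hD⟩

theorem DisjointifiesWithLoss.exists_disjoint_trace (h : DisjointifiesWithLoss.{u} n q M q')
    (K : ℕ) : ∃ N : ℕ, ∀ {V : Type u} [Finite V] [Nonempty V] {r : V → V → Prop} {T A B D : Set V}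
      {P : ℕ → Set V}, ¬ (HasDisjointCycles r n ∨ HasGrid r T q M) → IsTraceFamily r N P →
      (∀ a < N, P a ⊆ D) → A ⊆ T → B ⊆ T → HasLinkageIn r D A B K →
      ∃ i < N, HasLinkageIn r (D \ P i) A B (K - q') := by
  obtain ⟨N, hN⟩ := h K 1
  refine ⟨N, fun hbad hP hPD hA hB hlink => ?_⟩
  obtain ⟨g, -, hg, hlink'⟩ := (hN hP hPD hA hB hlink).resolve_left hbad
  exact ⟨g 0, hg 0 one_pos, by simpa using hlink'⟩

theorem DisjointifiesWithLoss.iterate (h : DisjointifiesWithLoss.{u} n q M q') (K R p : ℕ) :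
    ∃ N : ℕ, ∀ {V : Type u} [Finite V] [Nonempty V] {r : V → V → Prop} {T D : Set V}
      {A B P : ℕ → Set V}, IsTraceFamily r N P → (∀ a < N, P a ⊆ D) →
      (∀ i < R, A i ⊆ T ∧ B i ⊆ T ∧ HasLinkageIn r D (A i) (B i) K) →
      (HasDisjointCycles r n ∨ HasGrid r T q M) ∨
        ∃ g : ℕ → ℕ, StrictMono g ∧ (∀ i < p, g i < N) ∧
          ∀ i < R, HasLinkageIn r (D \ ⋃ e < p, P (g e)) (A i) (B i) (K - q') := by
  induction R with
  | zero => exact ⟨p, fun _ _ _ => .inr ⟨id, strictMono_id, fun _ hi => hi, by lia⟩⟩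
  | succ R ih =>
    obtain ⟨N₁, hN₁⟩ := ih
    obtain ⟨N, hN⟩ := h K N₁
    refine ⟨N, fun {V _ _ r T D A B P} hP hPD hlink => ?_⟩
    obtain ⟨hA, hB, hAB⟩ := hlink R R.lt_succ_self
    obtain hgood | ⟨g, hg, hgN, hlast⟩ := hN hP hPD hA hB hAB
    · exact .inl hgood
    obtain hgood | ⟨g₁, hg₁, hg₁N, hfirst⟩ := hN₁ (hP.comp hgN hg.injective.injOn)
      (fun a ha => hPD _ (hgN a ha)) fun i hi => hlink i (hi.trans R.lt_succ_self)
    · exact .inl hgood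
    refine .inr ⟨g ∘ g₁, hg.comp hg₁, fun i hi => hgN _ (hg₁N i hi), fun i hi => ?_⟩
    obtain hi | rfl := Nat.lt_succ_iff_lt_or_eq.1 hi
    · exact hfirst i hi
    · exact hlast.mono (Set.sdiff_subset_sdiff_right (Set.iUnion₂_subset fun e he =>
        Set.subset_biUnion_of_mem (u := fun e => P (g e)) (hg₁N e he))) le_rfl

/-- A trace `U ⊆ D` in which all of `B ⊆ T` reaches all of `A ⊆ T`, together with a linkage of size
`M` in `D` leading back from `A` to `B`. -/
structure IsFeedback (r : V → V → Prop) (T D : Set V) (M : ℕ) (U A B : Set V) : Prop where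
  exists_isTrace : ∃ s t, IsTrace r U s t
  subset : U ⊆ D
  source_subset : A ⊆ T
  target_subset : B ⊆ T
  reach : ∀ b ∈ B, ∀ a ∈ A, ReachIn r U b a ∧ a ≠ b
  linkage : HasLinkageIn r D A B M

theorem IsFeedback.exists_ears (h : IsFeedback r T D M U A B) (hcyc : ¬ HasCycleIn r U)
    (hlink : HasLinkageIn r S A B K) : ∃ J : ℕ → Set V, IsTraceFamily r K J ∧
      ∀ x < K, J x ⊆ S \ U ∧ HasCycleIn r (U ∪ J x) := by
  obtain ⟨Q, s, t, hQ, hQS⟩ := hlink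
  obtain ⟨_, _, hU⟩ := h.exists_isTrace
  choose! J hJQ hJtrace hJcycle using fun x (hx : x < K) =>
    have hst := h.reach _ (hQ.end_mem x hx) _ (hQ.start_mem x hx)
    hU.exists_ear hcyc hst.1 hst.2 (hQ.reach x hx)
  exact ⟨J, ⟨hJtrace, fun x hx y hy hxy => (hQ.disjoint hx hy hxy).mono
    ((hJQ x hx).trans Set.sdiff_subset) ((hJQ y hy).trans Set.sdiff_subset)⟩,
    fun x hx => ⟨(hJQ x hx).trans (Set.sdiff_subset_sdiff_left (hQS x hx)), hJcycle x hx⟩⟩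

theorem DisjointifiesWithLoss.exists_avoidable_cycles (h : DisjointifiesWithLoss.{u} n q M q')
    (K : ℕ) : ∃ m : ℕ, ∀ {V : Type u} [Finite V] [Nonempty V] {r : V → V → Prop}
      {T D Y U A B : Set V} {K' : ℕ}, ¬ (HasDisjointCycles r n ∨ HasGrid r T q M) →
      IsFeedback r T D K' U A B → Disjoint U Y → HasLinkageIn r (D \ Y) A B (m + 1) →
      ∃ C : Fin (m + 1) → Set V, (∀ x, HasCycleIn r (C x) ∧ C x ⊆ D \ Y) ∧
        ∀ A' ⊆ T, ∀ B' ⊆ T, HasLinkageIn r (D \ U) A' B' K →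
          ∃ x, HasLinkageIn r (D \ C x) A' B' (K - q') := by
  obtain ⟨m, hm⟩ := h.exists_disjoint_trace K
  refine ⟨m, fun {V _ _ r T D Y U A B K'} hbad hU hUY hlink => ?_⟩
  have hUD : U ⊆ D \ Y := Set.subset_sdiff.2 ⟨hU.subset, hUY⟩
  by_cases hcyc : HasCycleIn r U
  · exact ⟨fun _ => U, fun _ => ⟨hcyc, hUD⟩, fun A' _ B' _ hlink' =>
      ⟨0, hlink'.mono subset_rfl (K.sub_le q')⟩⟩
  obtain ⟨J, hJ, hJsub⟩ := hU.exists_ears hcyc hlink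
  refine ⟨fun x => U ∪ J x, fun x => ⟨(hJsub x x.2).2,
    Set.union_subset hUD ((hJsub x x.2).1.trans Set.sdiff_subset)⟩, fun A' hA' B' hB' hlink' => ?_⟩
  obtain ⟨x, hx, hlink''⟩ := hm hbad (hJ.comp (ρ := id) (fun a => Nat.lt_succ_of_lt)
    (Set.injOn_id _)) (fun a ha => (hJsub a (Nat.lt_succ_of_lt ha)).1.trans
      (Set.sdiff_subset_sdiff_left Set.sdiff_subset)) hA' hB' hlink'
  exact ⟨⟨x, Nat.lt_succ_of_lt hx⟩, hlink''.mono Set.sdiff_sdiff.subset le_rfl⟩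

/-- `N` feedbacks on disjoint traces. -/
structure IsFeedbackSystem (r : V → V → Prop) (T D : Set V) (N M : ℕ) (U A B : ℕ → Set V) :
    Prop where
  isFeedback : ∀ e < N, IsFeedback r T D M (U e) (A e) (B e)
  disjoint : (Set.Iio N).PairwiseDisjoint U

theorem IsFeedbackSystem.isTraceFamily {U A B : ℕ → Set V}
    (h : IsFeedbackSystem r T D N M U A B) : IsTraceFamily r N U :=
  ⟨fun e he => (h.isFeedback e he).exists_isTrace, h.disjoint⟩

theorem IsFeedback.of_disjoint {C : Set V} (h : IsFeedback r T D M U A B) (hC : Disjoint U C)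
    (hlink : HasLinkageIn r (D \ C) A B K) : IsFeedback r T (D \ C) K U A B :=
  { h with subset := Set.subset_sdiff.2 ⟨h.subset, hC⟩, linkage := hlink }

theorem DisjointifiesWithLoss.exists_cycle_and_subsystem (h : DisjointifiesWithLoss.{u} n q M q')
    (N' M' : ℕ) : ∃ N K : ℕ, ∀ {V : Type u} [Finite V] [Nonempty V] {r : V → V → Prop}
      {T D : Set V} {U A B : ℕ → Set V}, ¬ (HasDisjointCycles r n ∨ HasGrid r T q M) →
      IsFeedbackSystem r T D N K U A B → ∃ C ⊆ D, HasCycleIn r C ∧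
        ∃ U' A' B', IsFeedbackSystem r T (D \ C) N' M' U' A' B' := by
  obtain ⟨R, hR⟩ := h.exists_disjoint_trace (M' + q' + q')
  obtain ⟨m, hm⟩ := h.exists_avoidable_cycles (M' + q')
  obtain ⟨N₁, hN₁⟩ := pigeonhole (Fin (R + 1) × Fin (m + 1)) N'
  obtain ⟨N₂, hN₂⟩ := h.iterate (m + 1 + q') (R + 1) N₁
  refine ⟨R + 1 + N₂, m + 1 + (M' + q' + q'), fun {V _ _ r T D U A B} hbad hU => ?_⟩
  have hlate : IsTraceFamily r N₂ fun e => U (R + 1 + e) :=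
    hU.isTraceFamily.comp (fun e he => by lia) fun _ _ _ _ => Nat.add_left_cancel
  obtain ⟨g, hg, hgN₂, hlink⟩ := (hN₂ (T := T) hlate (fun e he => (hU.isFeedback _ (by lia)).subset)
    fun i hi =>
      have hi' := hU.isFeedback i (by lia)
      ⟨hi'.source_subset, hi'.target_subset, hi'.linkage.mono subset_rfl (by lia)⟩).resolve_left
        hbad
  have hlate_index : ∀ e < N₁, R + 1 + g e < R + 1 + N₂ := fun e he => by
    have := hgN₂ e he
    lia
  choose C hC havoid using fun i : Fin (R + 1) => hm hbad (hU.isFeedback i (by lia))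
    (Y := ⋃ e < N₁, U (R + 1 + g e)) (Set.disjoint_iUnion₂_right.2 fun e he =>
      hU.disjoint (Set.mem_Iio.2 (by lia)) (hlate_index e he) (by lia))
    ((hlink i i.2).mono subset_rfl (by lia))
  choose! c hc using show ∀ e < N₁, ∃ c : Fin (R + 1) × Fin (m + 1),
      HasLinkageIn r (D \ C c.1 c.2) (A (R + 1 + g e)) (B (R + 1 + g e)) M' from fun e he => by
    have he' := hU.isFeedback _ (hlate_index e he)
    obtain ⟨i, hi, hlink'⟩ := hR hbad (hU.isTraceFamily.comp (ρ := id) (fun a ha => by simp; lia)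
      (Set.injOn_id _)) (fun a ha => (hU.isFeedback a (by lia)).subset) he'.source_subset
        he'.target_subset (he'.linkage.mono subset_rfl (by lia))
    obtain ⟨x, hx⟩ := havoid ⟨i, by lia⟩ _ he'.source_subset _ he'.target_subset
      (hlink'.mono subset_rfl (by lia))
    exact ⟨⟨⟨i, by lia⟩, x⟩, hx.mono subset_rfl (by lia)⟩
  obtain ⟨g', hg', hg'N₁, ⟨i, x⟩, hix⟩ := hN₁ c
  obtain ⟨hcycle, hsub⟩ := hC i x
  refine ⟨C i x, hsub.trans Set.sdiff_subset, hcycle, fun e => U (R + 1 + g (g' e)), _, _,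
    fun e he => (hU.isFeedback _ (hlate_index _ (hg'N₁ e he))).of_disjoint ?_ ?_, ?_⟩
  · exact (Set.disjoint_iUnion₂_right.1 (Set.subset_sdiff.1 hsub).2 _ (hg'N₁ e he)).symm
  · simpa only [hix e he] using hc _ (hg'N₁ e he)
  · exact (hlate.comp (fun e he => hgN₂ _ (hg'N₁ e he)) (hg.comp hg').injective.injOn).disjoint

theorem exists_size_isFeedbackSystem (n q M k : ℕ) : ∃ N K : ℕ, ∀ {V : Type u} [Finite V]
    [Nonempty V] {r : V → V → Prop} {T D : Set V} {U A B : ℕ → Set V},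
    ¬ (HasDisjointCycles r n ∨ HasGrid r T q M) → IsFeedbackSystem r T D N K U A B →
    ∃ C : ℕ → Set V, (∀ i < k, HasCycleIn r (C i) ∧ C i ⊆ D) ∧
      (Set.Iio k).PairwiseDisjoint C := by
  obtain ⟨q', hq'⟩ := exists_disjointifiesWithLoss.{u} n q M
  induction k with
  | zero => exact ⟨0, 0, fun _ _ => ⟨fun _ => ∅, by simp, by simp⟩⟩
  | succ k ih =>
    obtain ⟨N', M', hstep⟩ := ih
    obtain ⟨N, K, hN⟩ := hq'.exists_cycle_and_subsystem N' M'
    refine ⟨N, K, fun hbad hU => ?_⟩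
    obtain ⟨C, hCD, hC, U', A', B', hU'⟩ := hN hbad hU
    obtain ⟨F, hF, hFdisj⟩ := hstep hbad hU'
    have old : ∀ i < k, Function.update F k C i = F i := fun i hi =>
      Function.update_of_ne hi.ne _ _
    refine ⟨Function.update F k C, fun i hi => ?_, pairwiseDisjoint_Iio_of_lt fun i j hij hj => ?_⟩
    · obtain hi | rfl := Nat.lt_succ_iff_lt_or_eq.1 hi
      · rw [old i hi]
        exact ⟨(hF i hi).1, (hF i hi).2.trans Set.sdiff_subset⟩
      · rw [Function.update_self]
        exact ⟨hC, hCD⟩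
    · obtain hj | rfl := Nat.lt_succ_iff_lt_or_eq.1 hj
      · rw [old i (hij.trans hj), old j hj]
        exact hFdisj (hij.trans hj) hj hij.ne
      · rw [old i hij, Function.update_self]
        exact (Set.subset_sdiff.1 (hF i hij).2).2

theorem Linked.hasLinkageIn_image (h : Linked r T) {f g : ℕ → V} (hfT : Set.MapsTo f (Set.Iio K) T)
    (hgT : Set.MapsTo g (Set.Iio K) T) (hf : Set.InjOn f (Set.Iio K))
    (hg : Set.InjOn g (Set.Iio K)) :
    HasLinkageIn r Set.univ (f '' Set.Iio K) (g '' Set.Iio K) K := by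
  classical
  have card_image : ∀ f : ℕ → V, Set.InjOn f (Set.Iio K) → ((Finset.range K).image f).card = K :=
    fun f hf => by rw [Finset.card_image_of_injOn (by rwa [Finset.coe_range]), Finset.card_range]
  have := h ((Finset.range K).image f) ((Finset.range K).image g)
    (by simpa using hfT.subset_preimage) (by simpa using hgT.subset_preimage)
    (by rw [card_image f hf, card_image g hg])
  rwa [card_image f hf, Finset.coe_image, Finset.coe_image, Finset.coe_range] at this

theorem IsPath.isFeedback {p : ℕ → V} {L : ℕ} (hp : IsPath r p L) (hT : Linked r T) {c : ℕ → ℕ}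
    (hc : StrictMonoOn c (Set.Iic (2 * M))) (hcL : c (2 * M) ≤ L)
    (hcT : ∀ i ≤ 2 * M, p (c i) ∈ T) :
    IsFeedback r T Set.univ M (p '' Set.Icc (c 0) (c (2 * M)))
      ((fun i => p (c (M + i))) '' Set.Iio M) ((fun i => p (c i)) '' Set.Iio M) := by
  have mono : ∀ i j, i ≤ j → j ≤ 2 * M → c i ≤ c j := fun i j hij hj =>
    hc.monotoneOn (hij.trans hj) hj hij
  have inj : ∀ i ≤ 2 * M, ∀ j ≤ 2 * M, p (c i) = p (c j) → i = j := fun i hi j hj hij =>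
    hc.injOn hi hj
      (hp.injOn ((mono i _ hi le_rfl).trans hcL) ((mono j _ hj le_rfl).trans hcL) hij)
  refine ⟨⟨_, _, hp.isTrace (mono 0 _ (by lia) le_rfl) hcL⟩, Set.subset_univ _, ?_, ?_, ?_, ?_⟩
  · rintro _ ⟨i, hi : i < M, rfl⟩
    exact hcT _ (by lia)
  · rintro _ ⟨i, hi : i < M, rfl⟩
    exact hcT _ (by lia)
  · rintro _ ⟨i, hi : i < M, rfl⟩ _ ⟨j, hj : j < M, rfl⟩
    have hjM := mono (M + j) (2 * M) (by lia) le_rfl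
    refine ⟨hp.reachIn (mono i (M + j) (by lia) (by lia)) (hjM.trans hcL) fun k hik hkj =>
      ⟨k, ⟨(mono 0 i (by lia) (by lia)).trans hik, hkj.trans hjM⟩, rfl⟩, fun heq => ?_⟩
    have := inj (M + j) (by lia) i (by lia) heq
    lia
  · refine hT.hasLinkageIn_image (fun i (hi : i < M) => hcT _ (by lia))
      (fun i (hi : i < M) => hcT _ (by lia)) (fun i (hi : i < M) j (hj : j < M) hij => ?_)
      fun i (hi : i < M) j (hj : j < M) hij => inj i (by lia) j (by lia) hij
    have := inj (M + i) (by lia) (M + j) (by lia) hij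
    lia

theorem IsPath.exists_isFeedbackSystem {p : ℕ → V} {L : ℕ} (hp : IsPath r p L) {pos : ℕ → ℕ}
    (hpos : StrictMonoOn pos (Set.Iio (N * (2 * M + 1))))
    (hposL : ∀ i < N * (2 * M + 1), pos i ≤ L)
    (hlinked : Linked r ((fun i => p (pos i)) '' Set.Iio (N * (2 * M + 1)))) :
    ∃ U A B, IsFeedbackSystem r ((fun i => p (pos i)) '' Set.Iio (N * (2 * M + 1))) Set.univ N M
      U A B := by
  have block_lt : ∀ e < N, ∀ i ≤ 2 * M, e * (2 * M + 1) + i < N * (2 * M + 1) := fun e he i hi => by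
    have := Nat.mul_le_mul_right (2 * M + 1) (show e + 1 ≤ N from he)
    lia
  refine ⟨_, _, _, fun e he => hp.isFeedback hlinked (c := fun i => pos (e * (2 * M + 1) + i))
    (fun i hi j hj hij => hpos (block_lt e he i hi) (block_lt e he j hj) (by lia))
    (hposL _ (block_lt e he _ le_rfl)) fun i hi => ⟨_, block_lt e he i hi, rfl⟩, ?_⟩
  simp only [← Set.Ico_add_one_right_eq_Icc]
  refine hp.pairwiseDisjoint_image_Ico (fun e e' hee' he' => ?_) fun e he =>
    Nat.succ_le_succ (hposL _ (block_lt e he _ le_rfl))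
  have := Nat.mul_le_mul_right (2 * M + 1) (show e + 1 ≤ e' from hee')
  exact hpos (block_lt e (hee'.trans he') _ le_rfl) (block_lt e' he' 0 (by lia)) (by lia)

theorem exists_size_linked_hasGrid (n q M : ℕ) : ∃ m : ℕ, ∀ {V : Type u} [Finite V] [Nonempty V]
    {r : V → V → Prop}, RobustlyCyclic r m →
    HasDisjointCycles r n ∨ ∃ T : Set V, Linked r T ∧ HasGrid r T q M := by
  obtain ⟨N, K, hN⟩ := exists_size_isFeedbackSystem.{u} n q M n
  refine ⟨2 * (2 * (N * (2 * K + 1)) * (N * (2 * K + 1) + 1)), fun {V _ _ r} hr => ?_⟩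
  obtain ⟨p, L, hp, pos, hpos, hposL, hlinked⟩ := hr.exists_isPath_linked
  by_contra! hbad
  obtain ⟨U, A, B, hU⟩ := hp.exists_isFeedbackSystem hpos hposL hlinked
  obtain ⟨C, hC, hdisj⟩ := hN (not_or.2 ⟨hbad.1, hbad.2 _ hlinked⟩) hU
  exact hbad.1 ⟨C, fun i hi => (hC i hi).1, hdisj⟩

end Feedback

/-! ### A path crossing many barriers -/

section Barrier

variable {V : Type*} {r : V → V → Prop} {K : ℕ}

/-- `K` nested barriers `core k`. Up to deletion of `avoided k`, an edge leaves `low k` only into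
the core and enters `up k` only from the core, so a walk from `low k` to `up k` has to pass through
`core k`. Consecutive cores are connected, in the direction opposite to such a walk, inside the sets
`region k`. -/
structure BarrierSystem (r : V → V → Prop) (K : ℕ) where
  core : ℕ → Set V
  avoided : ℕ → Set V
  low : ℕ → Set V
  up : ℕ → Set V
  region : ℕ → Set V
  mem_low_of_adj : ∀ k < K, ∀ v w, r v w → v ∈ low k → w ∉ avoided k → w ∉ core k → w ∈ low k
  mem_up_of_adj : ∀ k < K, ∀ v w, r v w → w ∈ up k → v ∉ avoided k → v ∉ core k → v ∈ up k
  disjoint_low_up : ∀ k < K, Disjoint (low k) (up k)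
  core_subset_up : ∀ j k, j < k → k < K → core j ⊆ up k
  core_subset_low : ∀ k j, k < j → j < K → core j ⊆ low k
  exists_connection : ∀ k, k + 1 < K → ∀ w ∈ core k, ∀ v ∈ core (k + 1), ∃ T ⊆ region k,
    ReachIn r T w v ∧ ∀ j < K, j ≠ k → j ≠ k + 1 → Disjoint T (avoided j)
  disjoint_region_core : ∀ k < K, ∀ j < K, j ≠ k → j ≠ k + 1 → Disjoint (region k) (core j)
  disjoint_region : ∀ k i, k + 2 ≤ i → i < K → Disjoint (region k) (region i)
  disjoint_core : ∀ k j, k < j → j < K → Disjoint (core k) (core j)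

namespace BarrierSystem

variable {B : BarrierSystem r K} {p : ℕ → V} {L : ℕ} {i j k s t s' t' : ℕ} {T T' : Set V}

/-- `p` is a path that crosses every barrier of `B` from below without using avoided vertices. -/
structure Crosses (B : BarrierSystem r K) (p : ℕ → V) (L : ℕ) : Prop where
  isPath : IsPath r p L
  notMem_avoided : ∀ k < K, ∀ u ≤ L, p u ∉ B.avoided k
  start_low : ∀ k < K, p 0 ∈ B.low k
  end_up : ∀ k < K, p L ∈ B.up k

theorem Crosses.mem_low (hp : B.Crosses p L) (hk : k < K) {a b : ℕ} (hab : a ≤ b) (hb : b ≤ L)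
    (ha : p a ∈ B.low k) (hcore : ∀ u ∈ Set.Ioc a b, p u ∉ B.core k) : p b ∈ B.low k := by
  induction b, hab using Nat.le_induction with
  | base => exact ha
  | succ b hab ih =>
    refine B.mem_low_of_adj k hk _ _ (hp.isPath.adj b hb) ?_ (hp.notMem_avoided k hk _ hb)
      (hcore _ ⟨by lia, le_rfl⟩)
    exact ih (by lia) fun u hu => hcore u ⟨hu.1, hu.2.trans b.le_succ⟩

theorem Crosses.mem_up (hp : B.Crosses p L) (hk : k < K) {a b : ℕ} (hab : a ≤ b) (hb : b ≤ L)
    (hbup : p b ∈ B.up k) (hcore : ∀ u ∈ Set.Ico a b, p u ∉ B.core k) : p a ∈ B.up k := by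
  induction hab using Nat.decreasingInduction with
  | self => exact hbup
  | of_succ a hab ih =>
    refine B.mem_up_of_adj k hk _ _ (hp.isPath.adj a (hab.trans_le hb)) ?_
      (hp.notMem_avoided k hk _ (hab.le.trans hb)) (hcore _ ⟨le_rfl, hab⟩)
    exact ih fun u hu => hcore u ⟨a.le_succ.trans hu.1, hu.2⟩

theorem Crosses.exists_first_visit (hp : B.Crosses p L) (hk : k < K) :
    ∃ t ≤ L, p t ∈ B.core k ∧ ∀ u < t, p u ∉ B.core k := by
  classical
  have visits : ∃ u, u ≤ L ∧ p u ∈ B.core k := by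
    by_contra! hnone
    exact Set.disjoint_left.1 (B.disjoint_low_up k hk)
      (hp.mem_low hk L.zero_le le_rfl (hp.start_low k hk) fun u hu => hnone u hu.2)
      (hp.end_up k hk)
  obtain ⟨hL, hmem⟩ := Nat.find_spec visits
  exact ⟨Nat.find visits, hL, hmem, fun u hu hcore =>
    Nat.find_min visits hu ⟨hu.le.trans hL, hcore⟩⟩

theorem Crosses.first_visit_lt (hp : B.Crosses p L) (hkj : k < j) (hj : j < K)
    (hfirst : ∀ u < t, p u ∉ B.core j) (hs : s ≤ L) (hps : p s ∈ B.core k) : t < s := by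
  by_contra! hst
  refine Set.disjoint_left.1 (B.disjoint_low_up j hj)
    (hp.mem_low hj s.zero_le hs (hp.start_low j hj) fun u hu hcore => ?_)
    (B.core_subset_up k j hkj hj hps)
  obtain hus | rfl := hu.2.lt_or_eq
  · exact hfirst u (hus.trans_le hst) hcore
  · exact Set.disjoint_left.1 (B.disjoint_core k j hkj hj) hps hcore

/-- The segment `p s, …, p t` leads from `core (k + 1)` to the first visit of `core k`, and `T` is
a walk back from `p t` to `p s`. -/
structure IsLoop (B : BarrierSystem r K) (p : ℕ → V) (L k s t : ℕ) (T : Set V) : Prop where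
  lt : s < t
  le : t ≤ L
  mem_core : p t ∈ B.core k
  first : ∀ u < t, p u ∉ B.core k
  return_mem : p s ∈ B.core (k + 1)
  last : ∀ u ∈ Set.Ioc s t, p u ∉ B.core (k + 1)
  subset_region : T ⊆ B.region k
  reach : ReachIn r T (p t) (p s)
  subset_up : ∀ j, k + 1 < j → j < K → T ⊆ B.up j
  subset_low : ∀ j < k, T ⊆ B.low j

theorem exists_connection_between (B : BarrierSystem r K) (hk : k + 1 < K) {v w : V}
    (hw : w ∈ B.core k) (hv : v ∈ B.core (k + 1)) :
    ∃ T ⊆ B.region k, ReachIn r T w v ∧ (∀ j, k + 1 < j → j < K → T ⊆ B.up j) ∧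
      ∀ j < k, T ⊆ B.low j := by
  obtain ⟨T, hregion, hwv, havoided⟩ := B.exists_connection k hk w hw v hv
  have notMem : ∀ j < K, j ≠ k → j ≠ k + 1 → ∀ x ∈ T, x ∉ B.avoided j ∧ x ∉ B.core j :=
    fun j hj hjk hjk' x hx => ⟨Set.disjoint_left.1 (havoided j hj hjk hjk') hx,
      Set.disjoint_left.1 (B.disjoint_region_core k (by lia) j hj hjk hjk') (hregion hx)⟩
  refine ⟨_, fun x hx => hregion hx.1.right_mem, hwv.between, ?_, ?_⟩
  · rintro j hkj hj x ⟨-, hxv⟩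
    refine hxv.head_induction (B.core_subset_up (k + 1) j hkj hj hv) fun y z _ hz hyz hy => ?_
    obtain ⟨hyX, hyC⟩ := notMem j hj (by lia) (by lia) y hy
    exact B.mem_up_of_adj j hj y z hyz hz hyX hyC
  · rintro j hjk x ⟨hwx, -⟩
    refine hwx.tail_induction (B.core_subset_low j k hjk (by lia) hw) fun y z _ hy hyz hz => ?_
    obtain ⟨hzX, hzC⟩ := notMem j (by lia) (by lia) (by lia) z hz
    exact B.mem_low_of_adj j (by lia) y z hyz hy hzX hzC

theorem Crosses.exists_isLoop (hp : B.Crosses p L) (hk : k + 1 < K) :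
    ∃ s t T, B.IsLoop p L k s t T := by
  classical
  obtain ⟨t, htL, ht, hfirst⟩ := hp.exists_first_visit (k.lt_succ_self.trans hk)
  obtain ⟨t', -, ht', hfirst'⟩ := hp.exists_first_visit hk
  have htt' : t' < t := hp.first_visit_lt k.lt_succ_self hk hfirst' htL ht
  let s := Nat.findGreatest (fun u => p u ∈ B.core (k + 1)) t
  have hs : p s ∈ B.core (k + 1) :=
    Nat.findGreatest_spec (P := fun u => p u ∈ B.core (k + 1)) htt'.le ht'
  have hst : s ≠ t := fun hst =>
    Set.disjoint_left.1 (B.disjoint_core k (k + 1) k.lt_succ_self hk) ht (hst ▸ hs)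
  obtain ⟨T, hregion, hreach, hup, hlow⟩ := B.exists_connection_between hk ht hs
  exact ⟨s, t, T, lt_of_le_of_ne (Nat.findGreatest_le t) hst, htL, ht, hfirst, hs,
    fun u hu => Nat.findGreatest_is_greatest hu.1 hu.2, hregion, hreach, hup, hlow⟩

namespace IsLoop

theorem hasCycleIn (h : B.IsLoop p L k s t T) (hp : B.Crosses p L) (hk : k + 1 < K) :
    HasCycleIn r (T ∪ p '' Set.Icc s t) := by
  refine .of_reachIn (h.reach.mono Set.subset_union_left)
    (hp.isPath.reachIn h.lt.le h.le fun u hsu hut => .inr ⟨u, ⟨hsu, hut⟩, rfl⟩) fun heq => ?_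
  exact Set.disjoint_left.1 (B.disjoint_core k (k + 1) k.lt_succ_self hk) h.mem_core
    (heq ▸ h.return_mem)

theorem segment_mem_low (h : B.IsLoop p L k s t T) (hp : B.Crosses p L) (hk : k + 1 < K) {u : ℕ}
    (hsu : s ≤ u) (hut : u < t) : p u ∈ B.low k :=
  hp.mem_low (k.lt_succ_self.trans hk) hsu (hut.le.trans h.le)
    (B.core_subset_low k (k + 1) k.lt_succ_self hk h.return_mem)
    fun v hv => h.first v (hv.2.trans_lt hut)

theorem segment_mem_up (h : B.IsLoop p L k s t T) (hp : B.Crosses p L) (hk : k + 1 < K) {u : ℕ}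
    (hsu : s < u) (hut : u ≤ t) : p u ∈ B.up (k + 1) :=
  hp.mem_up hk hut h.le (B.core_subset_up k (k + 1) k.lt_succ_self hk h.mem_core)
    fun v hv => h.last v ⟨hsu.trans_le hv.1, hv.2.le⟩

theorem disjoint_connection_segment (h : B.IsLoop p L k s t T) (h' : B.IsLoop p L i s' t' T')
    (hp : B.Crosses p L) (hki : k + 2 ≤ i) (hi : i + 1 < K) :
    Disjoint T (p '' Set.Icc s' t') := by
  rw [Set.disjoint_left]
  rintro _ hT ⟨u, hu, rfl⟩
  obtain hut | rfl := hu.2.lt_or_eq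
  · exact Set.disjoint_left.1 (B.disjoint_low_up i (by lia)) (h'.segment_mem_low hp hi hu.1 hut)
      (h.subset_up i hki (by lia) hT)
  · exact Set.disjoint_left.1
      (B.disjoint_region_core k (by lia) i (by lia) (by lia) (by lia)) (h.subset_region hT)
      h'.mem_core

theorem disjoint_segment_connection (h : B.IsLoop p L k s t T) (h' : B.IsLoop p L i s' t' T')
    (hp : B.Crosses p L) (hki : k + 2 ≤ i) (hi : i + 1 < K) :
    Disjoint (p '' Set.Icc s t) T' := by
  rw [Set.disjoint_left]
  rintro _ ⟨u, hu, rfl⟩ hT'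
  obtain hsu | rfl := hu.1.lt_or_eq
  · exact Set.disjoint_left.1 (B.disjoint_low_up (k + 1) (by lia)) (h'.subset_low _ hki hT')
      (h.segment_mem_up hp (by lia) hsu hu.2)
  · exact Set.disjoint_left.1
      (B.disjoint_region_core i (by lia) (k + 1) (by lia) (by lia) (by lia))
      (h'.subset_region hT') h.return_mem

theorem disjoint_segments (h : B.IsLoop p L k s t T) (h' : B.IsLoop p L i s' t' T')
    (hp : B.Crosses p L) (hki : k + 2 ≤ i) (hi : i + 1 < K) :
    Disjoint (p '' Set.Icc s t) (p '' Set.Icc s' t') := by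
  have hts : t' < s :=
    hp.first_visit_lt hki (by lia) h'.first (h.lt.le.trans h.le) h.return_mem
  rw [Set.disjoint_left]
  rintro _ ⟨u, hu, rfl⟩ ⟨u', hu', huu'⟩
  have := hp.isPath.injOn (hu'.2.trans h'.le) (hu.2.trans h.le) huu'
  exact (hu'.2.trans_lt hts).not_ge (this ▸ hu.1)

theorem disjoint (h : B.IsLoop p L k s t T) (h' : B.IsLoop p L i s' t' T') (hp : B.Crosses p L)
    (hki : k + 2 ≤ i) (hi : i + 1 < K) :
    Disjoint (T ∪ p '' Set.Icc s t) (T' ∪ p '' Set.Icc s' t') :=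
  Set.disjoint_union_left.2
    ⟨Set.disjoint_union_right.2
      ⟨(B.disjoint_region k i hki (by lia)).mono h.subset_region h'.subset_region,
        h.disjoint_connection_segment h' hp hki hi⟩,
    Set.disjoint_union_right.2
      ⟨h.disjoint_segment_connection h' hp hki hi, h.disjoint_segments h' hp hki hi⟩⟩

end IsLoop

theorem Crosses.hasDisjointCycles {n : ℕ} {B : BarrierSystem r (2 * n)} (hp : B.Crosses p L) :
    HasDisjointCycles r n := by
  have hloop : ∀ i < n, ∃ s t T, B.IsLoop p L (2 * i) s t T :=
    fun i hi => hp.exists_isLoop (by lia)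
  choose! s t T hT using hloop
  exact ⟨fun i => T i ∪ p '' Set.Icc (s i) (t i),
    fun i hi => (hT i hi).hasCycleIn hp (by lia),
    pairwiseDisjoint_Iio_of_lt fun i j hij hj =>
      (hT i (hij.trans hj)).disjoint (hT j hj) hp (by lia) (by lia)⟩

end BarrierSystem

end Barrier

/-! ### Chains in semiconnected digraphs -/

section SparseChain

universe u

variable {V : Type*} {r : V → V → Prop} {S : Set V} {g : ℕ → V} {m : ℕ}

/-- `J 0, …, J (m - 1)` are distinct vertices of `S`, and each of them reaches the next one inside
`S` while avoiding all the others. -/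
structure IsSparseChain (r : V → V → Prop) (S : Set V) (m : ℕ) (J : ℕ → V) : Prop where
  mem : ∀ k < m, J k ∈ S
  injOn : Set.InjOn J (Set.Iio m)
  reach : ∀ k, k + 1 < m →
    ReachIn r {x ∈ S | ∀ i < m, i ≠ k → i ≠ k + 1 → x ≠ J i} (J k) (J (k + 1))

theorem IsPath.isSparseChain {p : ℕ → V} (hp : IsPath r p (m - 1)) (hS : ∀ i < m, p i ∈ S) :
    IsSparseChain r S m p where
  mem := hS
  injOn := hp.injOn.mono fun i (hi : i < m) => Nat.le_sub_one_of_lt hi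
  reach k hk := by
    have ne {i j : ℕ} (hi : i < m) (hj : j < m) (hij : j ≠ i) : p i ≠ p j := fun h =>
      hij (hp.injOn (Nat.le_sub_one_of_lt hi) (Nat.le_sub_one_of_lt hj) h).symm
    exact .single ⟨hS k (by lia), fun i hi hik _ => ne (by lia) hi hik⟩
      ⟨hS _ hk, fun i hi _ hik => ne hk hi hik⟩ (hp.adj k (by lia))

theorem isSparseChain_of_reachIn_of_not_reachIn (hmem : ∀ i < m, g i ∈ S)
    (hreach : ∀ i j, i < j → j < m → ReachIn r S (g i) (g j))
    (hback : ∀ i j, i < j → j < m → ¬ ReachIn r S (g j) (g i)) : IsSparseChain r S m g where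
  mem := hmem
  injOn := by
    intro i hi j hj hij
    by_contra hne
    obtain h | h := Nat.lt_or_gt_of_ne hne
    · exact hback i j h hj (hij ▸ .refl (hmem i hi))
    · exact hback j i h hi (hij ▸ .refl (hmem i hi))
  reach k hk := by
    refine (hreach k (k + 1) k.lt_succ_self hk).between.mono ?_
    rintro x ⟨hkx, hxk⟩
    refine ⟨hkx.right_mem, fun i hi hik hik' hxi => ?_⟩
    subst hxi
    obtain h | h := Nat.lt_or_gt_of_ne hik
    · exact hback i k h (by lia) hkx
    · exact hback (k + 1) i (by lia) hi hxk

theorem ReachIn.exists_finset_card_le {u v : V} (h : ReachIn r S u v)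
    (hshort : ∀ p, IsPath r p (m - 1) → ∃ i < m, p i ∉ S) :
    ∃ A : Finset V, A.card ≤ m ∧ ↑A ⊆ S ∧ ReachIn r A u v := by
  classical
  obtain ⟨p, L, hp, rfl, rfl, hS⟩ := h.exists_isPath
  have hLm : L + 1 ≤ m := by
    by_contra! hmL
    obtain ⟨i, hi, hpi⟩ := hshort p (hp.of_le (by lia))
    exact hpi (hS i (by lia))
  refine ⟨(Finset.range (L + 1)).image p, Finset.card_image_le.trans (by simpa using hLm), ?_, ?_⟩
  · simpa [Set.subset_def, Nat.lt_succ_iff] using hS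
  · exact hp.reachIn L.zero_le le_rfl fun i _ hi =>
      Finset.mem_coe.2 (Finset.mem_image_of_mem p (Finset.mem_range_succ_iff.2 hi))

-- Either `S` contains a path with `m` vertices, or every `g i` is joined to the hub `h` in both
-- directions by short paths; in the latter case choose many `g i` off each other's short paths.
theorem exists_isSparseChain_of_reachIn_hub (m : ℕ) : ∃ N, ∀ {V : Type u} {r : V → V → Prop}
    {S : Set V} {g : ℕ → V} {h : V}, Set.InjOn g (Set.Iio N) →
    (∀ i < N, ReachIn r S (g i) h ∧ ReachIn r S h (g i)) → ∃ J, IsSparseChain r S m J := by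
  classical
  obtain ⟨N, hN⟩ := exists_independent_of_bounded_outdegree (2 * m + 1) m
  refine ⟨N, fun {V r S g h} hinj hhub => ?_⟩
  by_cases hshort : ∀ p, IsPath r p (m - 1) → ∃ i < m, p i ∉ S
  swap
  · push Not at hshort
    obtain ⟨p, hp, hS⟩ := hshort
    exact ⟨p, hp.isSparseChain hS⟩
  have spokes : ∀ i, ∃ A B : Finset V, i < N → (A.card ≤ m ∧ ↑A ⊆ S ∧ ReachIn r A (g i) h) ∧
      B.card ≤ m ∧ ↑B ⊆ S ∧ ReachIn r B h (g i) := by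
    intro i
    by_cases hi : i < N
    · obtain ⟨A, hA⟩ := (hhub i hi).1.exists_finset_card_le hshort
      obtain ⟨B, hB⟩ := (hhub i hi).2.exists_finset_card_le hshort
      exact ⟨A, B, fun _ => ⟨hA, hB⟩⟩
    · exact ⟨∅, ∅, fun hi' => absurd hi' hi⟩
  choose A B hAB using spokes
  obtain ⟨e, he, heN, hindep⟩ := hN (fun i j => g j ∈ A i ∪ B i) fun i hi C hC => by
    have hCN : Set.InjOn g C := hinj.mono fun j hj => (hC j hj).1
    have hcard : C.card ≤ (A i ∪ B i).card := by
      rw [← Finset.card_image_of_injOn hCN]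
      exact Finset.card_le_card (Finset.image_subset_iff.2 fun j hj => (hC j hj).2.2)
    have := Finset.card_union_le (A i) (B i)
    have := hAB i hi
    lia
  have avoids {k i : ℕ} {x : V} (hk : k < m) (hi : i < m) (hik : i ≠ k)
      (hx : x ∈ A (e k) ∪ B (e k)) : x ≠ g (e i) := by
    rintro rfl
    exact hindep hk hi hik.symm hx
  refine ⟨g ∘ e, fun k hk => (hhub _ (heN k hk)).1.left_mem,
    hinj.comp he.injective.injOn fun k hk => heN k hk, fun k hk => ?_⟩
  obtain ⟨⟨-, hAS, hA⟩, -⟩ := hAB (e k) (heN k (by lia))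
  obtain ⟨-, -, hBS, hB⟩ := hAB (e (k + 1)) (heN _ hk)
  refine (hA.mono ?_).trans (hB.mono ?_)
  · exact fun x hx => ⟨hAS hx, fun i hi hik _ =>
      avoids (by lia) hi hik (Finset.mem_union_left _ hx)⟩
  · exact fun x hx => ⟨hBS hx, fun i hi _ hik => avoids hk hi hik (Finset.mem_union_right _ hx)⟩

theorem exists_isSparseChain_of_semiconnected (m : ℕ) : ∃ q, ∀ {V : Type u} {r : V → V → Prop}
    {S : Set V} {g : ℕ → V}, Set.InjOn g (Set.Iio q) →
    (∀ i < q, ∀ j < q, ReachIn r S (g i) (g j) ∨ ReachIn r S (g j) (g i)) →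
    ∃ J, IsSparseChain r S m J := by
  obtain ⟨N, hN⟩ := exists_isSparseChain_of_reachIn_hub.{u} m
  obtain ⟨q, hq⟩ := ramsey_pairs (Prop × Prop) (N + 1 + m)
  refine ⟨q, fun {V r S g} hinj htotal => ?_⟩
  obtain ⟨e, he, heq, ⟨fwd, bwd⟩, hcolour⟩ :=
    hq fun i j => (ReachIn r S (g i) (g j), ReachIn r S (g j) (g i))
  have forward {i j : ℕ} (hij : i < j) (hj : j < N + 1 + m) :
      ReachIn r S (g (e i)) (g (e j)) = fwd := congrArg Prod.fst (hcolour i j hij hj)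
  have backward {i j : ℕ} (hij : i < j) (hj : j < N + 1 + m) :
      ReachIn r S (g (e j)) (g (e i)) = bwd := congrArg Prod.snd (hcolour i j hij hj)
  have hmem {i : ℕ} (hi : i < N + 1 + m) : g (e i) ∈ S :=
    (htotal _ (heq i hi) _ (heq i hi)).elim ReachIn.left_mem ReachIn.left_mem
  by_cases hf : fwd
  · by_cases hb : bwd
    · refine hN (g := fun i => g (e (i + 1))) (h := g (e 0)) ?_ fun i hi =>
        ⟨(backward i.succ_pos (by lia)).mpr hb, (forward i.succ_pos (by lia)).mpr hf⟩
      exact hinj.comp (he.injective.comp (add_left_injective 1)).injOn fun i (hi : i < N) =>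
        heq _ (by lia)
    · exact ⟨g ∘ e, isSparseChain_of_reachIn_of_not_reachIn (fun i hi => hmem (by lia))
        (fun i j hij hj => (forward hij (by lia)).mpr hf)
        fun i j hij hj h => hb ((backward hij (by lia)).mp h)⟩
  · exact ⟨fun k => g (e (m - 1 - k)), isSparseChain_of_reachIn_of_not_reachIn
      (fun i hi => hmem (by lia))
      (fun i j hij hj => (htotal _ (heq _ (by lia)) _ (heq _ (by lia))).resolve_right
        fun h => hf ((forward (by lia) (by lia)).mp h))
      fun i j hij hj h => hf ((forward (by lia) (by lia)).mp h)⟩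

end SparseChain

/-! ### Uniform grids -/

section UniformGrid

universe u

variable {V : Type u} {r : V → V → Prop} {T : Set V} {q M : ℕ} {Q : ℕ → ℕ → V} {len : ℕ → ℕ}
  {w : ℕ → ℕ → ℕ}

/-- A walk through `A` leads from the `a`-th piece of the column `Q c` to that of `Q c'`. -/
def Bridge (r : V → V → Prop) (Q : ℕ → ℕ → V) (w : ℕ → ℕ → ℕ) (A : Set V) (a c c' : ℕ) : Prop :=
  ∃ u ∈ Set.Ioc (w c a) (w c (a + 1)), ∃ u' ∈ Set.Ioc (w c' a) (w c' (a + 1)),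
    ReachIn r (A ∪ {Q c u, Q c' u'}) (Q c u) (Q c' u')

/-- Disjoint columns `Q j` cut into `M` rows by the marks `w`, together with a semiconnected digraph
`D` on the columns each of whose edges is realised, in every row `a`, by a walk through a set `A a`
off the columns. -/
structure IsUniformGrid (r : V → V → Prop) (T : Set V) (q M : ℕ) (Q : ℕ → ℕ → V) (len : ℕ → ℕ)
    (w : ℕ → ℕ → ℕ) (D : ℕ → ℕ → Prop) (A : ℕ → Set V) : Prop where
  paths : IsPathSystem r T T q Q len
  mark_strictMonoOn : ∀ j < q, StrictMonoOn (w j) (Set.Iic M)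
  mark_le : ∀ j < q, w j M ≤ len j
  bridge : ∀ c < q, ∀ c' < q, D c c' → ∀ a < M, Bridge r Q w (A a) a c c'
  disjoint : (Set.Iio M).PairwiseDisjoint A
  notMem : ∀ a < M, ∀ j < q, ∀ u ∈ Set.Ioc (w j 0) (w j M), Q j u ∉ A a
  semiconnected : ∀ c < q, ∀ c' < q, ReachIn D (Set.Iio q) c c' ∨ ReachIn D (Set.Iio q) c' c

/-- The part of `R` outside the marked segments of the columns. -/
def offColumns (q M : ℕ) (Q : ℕ → ℕ → V) (w : ℕ → ℕ → ℕ) (R : Set V) : Set V :=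
  {z ∈ R | ∀ j < q, ∀ u ∈ Set.Ioc (w j 0) (w j M), Q j u ≠ z}

namespace IsGrid

variable {R : ℕ → Set V} {a c d u v : ℕ}

theorem mem_Ioc_of_row (h : IsGrid r T q M Q len w R) (hd : d < q) (ha : a < M)
    (hv : v ∈ Set.Ioc (w d a) (w d (a + 1))) : v ∈ Set.Ioc (w d 0) (w d M) :=
  ⟨(h.mark_mono hd a.zero_le ha.le).trans_lt hv.1, hv.2.trans (h.mark_mono hd ha le_rfl)⟩

-- The last visit to a column before `y`, together with the rest of the walk, which runs off the
-- columns.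
theorem exists_last_column (h : IsGrid r T q M Q len w R) (ha : a < M) (hc : c < q)
    (hu : u ∈ Set.Ioc (w c a) (w c (a + 1))) {y : V} (hy : ReachIn r (R a) (Q c u) y) :
    ∃ d < q, ReachIn (Bridge r Q w (offColumns q M Q w (R a)) a) (Set.Iio q) c d ∧
      ∃ v ∈ Set.Ioc (w d a) (w d (a + 1)),
        ReachIn r (offColumns q M Q w (R a) ∪ {Q d v}) (Q d v) y := by
  refine hy.tail_induction ⟨c, hc, .refl hc, u, hu, .refl (.inr rfl)⟩ ?_
  rintro x y - ⟨d, hd, hcd, v, hv, hvx⟩ hxy hyR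
  by_cases hoff : y ∈ offColumns q M Q w (R a)
  · exact ⟨d, hd, hcd, v, hv, hvx.tail (.inl hoff) hxy⟩
  · obtain ⟨d', hd', v', hv', rfl⟩ : ∃ j < q, ∃ u ∈ Set.Ioc (w j 0) (w j M), Q j u = y := by
      by_contra! hcol
      exact hoff ⟨hyR, hcol⟩
    have hv'a := h.meets_only d' hd' a ha v' hv' hyR
    have hbridge : Bridge r Q w (offColumns q M Q w (R a)) a d d' :=
      ⟨v, hv, v', hv'a, (hvx.mono (by grind)).tail (by grind) hxy⟩
    exact ⟨d', hd', hcd.tail hd' hbridge, v', hv'a, .refl (.inr rfl)⟩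

theorem reachIn_bridge (h : IsGrid r T q M Q len w R) (ha : a < M) (hc : c < q)
    (hu : u ∈ Set.Ioc (w c a) (w c (a + 1))) (hd : d < q) (hv : v ∈ Set.Ioc (w d a) (w d (a + 1)))
    (huv : ReachIn r (R a) (Q c u) (Q d v)) :
    ReachIn (Bridge r Q w (offColumns q M Q w (R a)) a) (Set.Iio q) c d := by
  have hvM := h.mem_Ioc_of_row hd ha hv
  obtain ⟨d', hd', hcd', v', hv', hreach⟩ := h.exists_last_column ha hc hu huv
  obtain hoff | heq := hreach.right_mem
  · exact absurd rfl (hoff.2 d hd v hvM)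
  · rwa [h.paths.index_eq d hd d' hd' v (hvM.2.trans (h.mark_le d hd)) v'
      ((h.mem_Ioc_of_row hd' ha hv').2.trans (h.mark_le d' hd')) heq]

theorem semiconnected_bridge (h : IsGrid r T q M Q len w R) (ha : a < M) (hc : c < q) (hd : d < q) :
    ReachIn (Bridge r Q w (offColumns q M Q w (R a)) a) (Set.Iio q) c d ∨
      ReachIn (Bridge r Q w (offColumns q M Q w (R a)) a) (Set.Iio q) d c := by
  obtain ⟨u, hu, huR⟩ := h.meets c hc a ha
  obtain ⟨v, hv, hvR⟩ := h.meets d hd a ha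
  obtain ⟨s, t, htrace⟩ := h.traces.exists_isTrace a ha
  exact (htrace.total _ huR _ hvR).imp (h.reachIn_bridge ha hc hu hd hv)
    (h.reachIn_bridge ha hd hv hc hu)

end IsGrid

theorem exists_isUniformGrid (q M : ℕ) : ∃ N, ∀ {V : Type u} {r : V → V → Prop} {T : Set V},
    HasGrid r T q N → ∃ Q len w D A, IsUniformGrid r T q M Q len w D A := by
  obtain ⟨N, hN⟩ := pigeonhole (Fin q → Fin q → Prop) (M + 1)
  refine ⟨N, ?_⟩
  rintro V r T ⟨Q, len, w, R, h⟩
  set D : ℕ → ℕ → ℕ → Prop := fun a => Bridge r Q w (offColumns q N Q w (R a)) a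
  obtain ⟨g, hg, hgN, D₀, hD₀⟩ := hN fun a (c c' : Fin q) => D a c c'
  have hD {a c c' : ℕ} (ha : a ≤ M) (hc : c < q) (hc' : c' < q) (hbridge : D (g 0) c c') :
      D (g a) c c' := by
    have h₀ := congrFun₂ (hD₀ 0 M.succ_pos) ⟨c, hc⟩ ⟨c', hc'⟩
    have hₐ := congrFun₂ (hD₀ a (by lia)) ⟨c, hc⟩ ⟨c', hc'⟩
    exact (hₐ.trans h₀.symm).mpr hbridge
  have hmarks {a j : ℕ} (ha : a < M) (hj : j < q) : w j (g a + 1) ≤ w j (g (a + 1)) :=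
    h.mark_mono hj (hg a.lt_succ_self) (hgN _ (by lia)).le
  refine ⟨Q, len, fun j a => w j (g a), D (g 0), fun a => offColumns q N Q w (R (g a)),
    h.paths, fun j hj a ha b hb hab => ?_, fun j hj => ?_, fun c hc c' hc' hbridge a ha => ?_,
    fun a ha b hb hab => ?_, fun a _ j hj u hu hoff => ?_,
    fun c hc c' hc' => h.semiconnected_bridge (hgN 0 M.succ_pos) hc hc'⟩
  · exact h.mark_strictMonoOn j hj (hgN a (Nat.lt_succ_of_le ha)).le
      (hgN b (Nat.lt_succ_of_le hb)).le (hg hab)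
  · exact (h.mark_mono hj (hgN M M.lt_succ_self).le le_rfl).trans (h.mark_le j hj)
  · obtain ⟨u, hu, u', hu', hreach⟩ := hD ha.le hc hc' hbridge
    exact ⟨u, ⟨hu.1, hu.2.trans (hmarks ha hc)⟩, u', ⟨hu'.1, hu'.2.trans (hmarks ha hc')⟩, hreach⟩
  · exact (h.traces.disjoint (hgN a (Nat.lt_succ_of_lt ha)) (hgN b (Nat.lt_succ_of_lt hb))
      (hg.injective.ne hab)).mono (Set.sep_subset _ _) (Set.sep_subset _ _)
  · exact hoff.2 j hj u ⟨(h.mark_mono hj (g 0).zero_le (hgN 0 M.succ_pos).le).trans_lt hu.1,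
      hu.2.trans (h.mark_mono hj (hgN M M.lt_succ_self).le le_rfl)⟩ rfl

/-- The vertices in the rows `b, …, b' - 1` of a uniform grid, on the columns from `C` or off all
columns. -/
def strip (Q : ℕ → ℕ → V) (w : ℕ → ℕ → ℕ) (A : ℕ → Set V) (C : Set ℕ) (b b' : ℕ) : Set V :=
  {z | ∃ c ∈ C, ∃ u ∈ Set.Ioc (w c b) (w c b'), Q c u = z} ∪ {z | ∃ a ∈ Set.Ico b b', z ∈ A a}

/-- A walk leads from the mark `b` of column `c` to the mark `b'` of column `d`, using only the
columns from `C` and only the rows in between. -/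
def ReachStrip (r : V → V → Prop) (Q : ℕ → ℕ → V) (w : ℕ → ℕ → ℕ) (A : ℕ → Set V) (C : Set ℕ)
    (b b' c d : ℕ) : Prop :=
  ReachIn r (insert (Q c (w c b)) (strip Q w A C b b')) (Q c (w c b)) (Q d (w d b'))

namespace IsUniformGrid

variable {D : ℕ → ℕ → Prop} {A : ℕ → Set V} {a b b' b'' c d e u v : ℕ} {C : Set ℕ}

theorem mark_mono (h : IsUniformGrid r T q M Q len w D A) (hc : c < q) (hab : a ≤ b) (hb : b ≤ M) :
    w c a ≤ w c b :=
  (h.mark_strictMonoOn c hc).monotoneOn (hab.trans hb) hb hab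

theorem mark_lt (h : IsUniformGrid r T q M Q len w D A) (hc : c < q) (hab : a < b) (hb : b ≤ M) :
    w c a < w c b :=
  h.mark_strictMonoOn c hc (hab.le.trans hb) hb hab

theorem reachIn_column (h : IsUniformGrid r T q M Q len w D A) (hc : c < q) (huv : u ≤ v)
    (hv : v ≤ w c M) {S : Set V} (hS : ∀ i, u ≤ i → i ≤ v → Q c i ∈ S) :
    ReachIn r S (Q c u) (Q c v) :=
  (h.paths.isPath c hc).reachIn huv (hv.trans (h.mark_le c hc)) hS

theorem strip_mono (h : IsUniformGrid r T q M Q len w D A) (hC : C ⊆ Set.Iio q) (hb : b ≤ b')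
    (hb' : b' ≤ a) (ha : a ≤ b'') (hb'' : b'' ≤ M) :
    strip Q w A C b' a ⊆ strip Q w A C b b'' := by
  rintro z (⟨c, hc, u, hu, rfl⟩ | ⟨i, hi, hz⟩)
  · exact .inl ⟨c, hc, u, ⟨(h.mark_mono (hC hc) hb (by lia)).trans_lt hu.1,
      hu.2.trans (h.mark_mono (hC hc) ha hb'')⟩, rfl⟩
  · exact .inr ⟨i, ⟨hb.trans hi.1, hi.2.trans_le ha⟩, hz⟩

theorem reachStrip_trans (h : IsUniformGrid r T q M Q len w D A) (hC : C ⊆ Set.Iio q)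
    (hb : b ≤ b') (hb' : b' ≤ b'') (hb'' : b'' ≤ M) (hcd : ReachStrip r Q w A C b b' c d)
    (hde : ReachStrip r Q w A C b' b'' d e) : ReachStrip r Q w A C b b'' c e := by
  have hcd' := hcd.mono (Set.insert_subset_insert (h.strip_mono hC le_rfl hb hb' hb''))
  exact hcd'.trans (hde.mono (Set.insert_subset hcd'.right_mem
    ((h.strip_mono hC hb hb' le_rfl hb'').trans (Set.subset_insert _ _))))

theorem reachIn_strip_column (h : IsUniformGrid r T q M Q len w D A) (hC : C ⊆ Set.Iio q)
    (hc : c ∈ C) (hb' : b' ≤ M) (hu : w c b ≤ u) (hv : v ≤ w c b') (huv : u ≤ v) :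
    ReachIn r (insert (Q c u) (strip Q w A C b b')) (Q c u) (Q c v) := by
  have hvM := hv.trans (h.mark_mono (hC hc) hb' le_rfl)
  refine h.reachIn_column (hC hc) huv hvM fun i hui hiv => ?_
  obtain rfl | hui := hui.eq_or_lt
  · exact .inl rfl
  · exact .inr (.inl ⟨c, hc, i, ⟨hu.trans_lt hui, hiv.trans hv⟩, rfl⟩)

theorem reachStrip_column (h : IsUniformGrid r T q M Q len w D A) (hC : C ⊆ Set.Iio q) (hc : c ∈ C)
    (hb : b ≤ b') (hb' : b' ≤ M) : ReachStrip r Q w A C b b' c c :=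
  h.reachIn_strip_column hC hc hb' le_rfl le_rfl (h.mark_mono (hC hc) hb hb')

theorem reachStrip_edge (h : IsUniformGrid r T q M Q len w D A) (hC : C ⊆ Set.Iio q) (hc : c ∈ C)
    (hd : d ∈ C) (hcd : D c d) (hb : b < M) : ReachStrip r Q w A C b (b + 1) c d := by
  obtain ⟨u, hu, v, hv, huv⟩ := h.bridge c (hC hc) d (hC hd) hcd b hb
  have hu' : Q c u ∈ strip Q w A C b (b + 1) := .inl ⟨c, hc, u, hu, rfl⟩
  have hv' : Q d v ∈ strip Q w A C b (b + 1) := .inl ⟨d, hd, v, hv, rfl⟩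
  have hA : A b ⊆ strip Q w A C b (b + 1) := fun z hz => .inr ⟨b, ⟨le_rfl, b.lt_succ_self⟩, hz⟩
  have hbridge : A b ∪ {Q c u, Q d v} ⊆ insert (Q c (w c b)) (strip Q w A C b (b + 1)) :=
    (Set.union_subset hA (Set.pair_subset hu' hv')).trans (Set.subset_insert _ _)
  have enter := h.reachIn_strip_column (A := A) hC hc hb le_rfl hu.2 hu.1.le
  have leave := h.reachIn_strip_column (A := A) hC hd hb hv.1.le le_rfl hv.2
  exact (enter.trans (huv.mono hbridge)).trans (leave.mono
    (Set.insert_subset (.inr hv') (Set.subset_insert _ _)))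

theorem reachStrip_of_isPath (h : IsUniformGrid r T q M Q len w D A) (hC : C ⊆ Set.Iio q)
    {p : ℕ → ℕ} {L : ℕ} (hp : IsPath D p L) (hpC : ∀ i ≤ L, p i ∈ C) (hb : b + L ≤ M) :
    ReachStrip r Q w A C b (b + L) (p 0) (p L) := by
  induction L with
  | zero => exact h.reachStrip_column hC (hpC 0 le_rfl) le_rfl hb
  | succ L ih =>
    exact h.reachStrip_trans hC (by lia) (by lia) hb
      (ih (hp.of_le L.le_succ) (fun i hi => hpC i (hi.trans L.le_succ)) (by lia))
      (h.reachStrip_edge hC (hpC L L.le_succ) (hpC _ le_rfl) (hp.adj L L.lt_succ_self) (by lia))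

theorem reachStrip_of_reachIn (h : IsUniformGrid r T q M Q len w D A) (hC : C ⊆ Set.Iio q)
    (hcd : ReachIn D C c d) (hb : b + q ≤ M) : ReachStrip r Q w A C b (b + q) c d := by
  obtain ⟨p, L, hp, rfl, rfl, hpC⟩ := hcd.exists_isPath
  have hL : L + 1 ≤ q := by
    have hcard := Finset.card_le_card_of_injOn (s := Finset.range (L + 1)) (t := Finset.range q) p
      (fun i hi => Finset.mem_coe.2 <| Finset.mem_range.2 <|
        hC (hpC i (Finset.mem_range_succ_iff.1 hi)))
      (hp.injOn.mono fun i hi => Finset.mem_range_succ_iff.1 hi)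
    simpa only [Finset.card_range] using hcard
  exact h.reachStrip_trans hC (by lia) (by lia) hb (h.reachStrip_of_isPath hC hp hpC (by lia))
    (h.reachStrip_column hC (hpC L le_rfl) (by lia) hb)

end IsUniformGrid

end UniformGrid

/-! ### Meshes -/

section Mesh

universe u

variable {V : Type u} {r : V → V → Prop} {T : Set V} {m N : ℕ}

/-- A layered structure: `P τ x` is the `x`-th of the `m` vertices of layer `τ ≤ N`, and for every
admissible `step x y` the set `U τ x y` leads from `P τ x` to `P (τ + 1) y`. Steps of the same
layer that do not cross are disjoint, steps of consecutive layers meet only in a common vertex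
`P`, and the first and last layers are linked with `T`. -/
structure IsMesh (r : V → V → Prop) (step : ℕ → ℕ → Prop) (T : Set V) (m N : ℕ) (P : ℕ → ℕ → V)
    (U : ℕ → ℕ → ℕ → Set V) : Prop where
  isPassage : ∀ τ < N, ∀ x y, step x y → IsPassage r (U τ x y) (P τ x) (P (τ + 1) y)
  disjoint_same : ∀ τ < N, ∀ x y x' y', step x y → step x' y' → x < x' → y < y' →
    Disjoint (U τ x y) (U τ x' y')
  inter_next : ∀ τ, τ + 1 < N → ∀ x y x' y', step x y → step x' y' →
    ∀ z ∈ U τ x y, z ∈ U (τ + 1) x' y' → y = x' ∧ z = P (τ + 1) x'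
  disjoint_far : ∀ τ τ', τ + 2 ≤ τ' → τ' < N → ∀ x y x' y', step x y → step x' y' →
    Disjoint (U τ x y) (U τ' x' y')
  exists_linkage_first : ∃ E b, IsLinkage r T Set.univ (Set.Iio m) E b (P 0)
  exists_linkage_last : ∃ E b, IsLinkage r Set.univ T (Set.Iio m) E (P N) b

/-- Steps of a mesh of width `m` that stay in place or move up by one. -/
structure UpStep (m x y : ℕ) : Prop where
  left_lt : x < m
  right_lt : y < m
  le : x ≤ y
  le_succ : y ≤ x + 1

/-- Steps of a mesh of width `m` that move by at most one in either direction. -/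
structure UnitStep (m x y : ℕ) : Prop where
  left_lt : x < m
  right_lt : y < m
  le_succ' : x ≤ y + 1
  le_succ : y ≤ x + 1

/-- The row of a uniform grid carrying layer `τ` of the mesh; every layer takes `m` groups of `q`
rows, one for each possible column change. Row `0` is left free. -/
def layerRow (q m τ : ℕ) : ℕ := 1 + τ * (m * q + 1)

/-- The row in which a step from `x` at layer `τ` starts to change columns. Steps from larger `x`
change columns earlier, so that steps that do not cross stay disjoint. -/
def switchRow (q m τ x : ℕ) : ℕ := layerRow q m τ + (m - 1 - x) * q

/-- The row in which a step from `x` to `y ∈ {x, x + 1}` at layer `τ` has changed columns. -/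
def landRow (q m τ x y : ℕ) : ℕ := switchRow q m τ x + (y - x) * q

section Rows

variable {q τ τ' x y x' y' : ℕ}

theorem layerRow_succ (q m τ : ℕ) : layerRow q m (τ + 1) = layerRow q m τ + m * q + 1 := by
  simp only [layerRow]
  ring

theorem layerRow_mono (h : τ ≤ τ') : layerRow q m τ ≤ layerRow q m τ' := by
  simp only [layerRow]
  gcongr

theorem layerRow_le_switchRow : layerRow q m τ ≤ switchRow q m τ x := Nat.le_add_right _ _

theorem switchRow_le_landRow : switchRow q m τ x ≤ landRow q m τ x y := Nat.le_add_right _ _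

theorem landRow_lt_layerRow (h : UpStep m x y) : landRow q m τ x y < layerRow q m (τ + 1) := by
  have hm : (m - 1 - x) * q + (y - x) * q ≤ m * q := by
    rw [← add_mul]
    exact Nat.mul_le_mul_right q (by grind [UpStep])
  simp only [landRow, switchRow, layerRow_succ]
  lia

theorem landRow_le_switchRow (h : UpStep m x' y') (hx : x < x') :
    landRow q m τ x' y' ≤ switchRow q m τ x := by
  have hm : (m - 1 - x') * q + (y' - x') * q ≤ (m - 1 - x) * q := by
    rw [← add_mul]
    exact Nat.mul_le_mul_right q (by grind [UpStep])
  simp only [landRow, switchRow]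
  lia

end Rows

/-- Position `u` of column `c` is used by the step from `x` to `y` at layer `τ`: it lies on the
column `J x` before landing, on the column `J y` after switching, or in between on a column outside
the chain `J`. -/
def LaneCell (w : ℕ → ℕ → ℕ) (J : ℕ → ℕ) (q m τ x y c u : ℕ) : Prop :=
  (c = J x ∧ u ∈ Set.Icc (w c (layerRow q m τ)) (w c (landRow q m τ x y))) ∨
  (c = J y ∧ u ∈ Set.Ioc (w c (switchRow q m τ x)) (w c (layerRow q m (τ + 1)))) ∨
  ((∀ i < m, c ≠ J i) ∧ u ∈ Set.Ioc (w c (switchRow q m τ x)) (w c (landRow q m τ x y)))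

/-- The part of a uniform grid used by the step from `x` to `y` at layer `τ`. -/
def lane (Q : ℕ → ℕ → V) (w : ℕ → ℕ → ℕ) (A : ℕ → Set V) (J : ℕ → ℕ) (q m τ x y : ℕ) : Set V :=
  {z | ∃ c < q, ∃ u, LaneCell w J q m τ x y c u ∧ Q c u = z} ∪
    {z | ∃ a ∈ Set.Ico (switchRow q m τ x) (landRow q m τ x y), z ∈ A a}

namespace IsUniformGrid

variable {q : ℕ} {Q : ℕ → ℕ → V} {len : ℕ → ℕ} {w : ℕ → ℕ → ℕ} {D : ℕ → ℕ → Prop}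
  {A : ℕ → Set V} {J : ℕ → ℕ} {τ τ' x y x' y' c u : ℕ}

theorem laneCell_mem_Icc (h : IsUniformGrid r T q (layerRow q m N) Q len w D A) (hτ : τ < N)
    (hxy : UpStep m x y) (hc : c < q) (hcell : LaneCell w J q m τ x y c u) :
    u ∈ Set.Icc (w c (layerRow q m τ)) (w c (layerRow q m (τ + 1))) := by
  have hN : layerRow q m (τ + 1) ≤ layerRow q m N := layerRow_mono hτ
  have hland : landRow q m τ x y < layerRow q m (τ + 1) := landRow_lt_layerRow hxy
  have hswitch : switchRow q m τ x ≤ landRow q m τ x y := switchRow_le_landRow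
  have h₁ : w c (layerRow q m τ) ≤ w c (switchRow q m τ x) :=
    h.mark_mono hc layerRow_le_switchRow (by lia)
  have h₂ := h.mark_mono hc hland.le hN
  obtain ⟨-, hu⟩ | ⟨-, hu⟩ | ⟨-, hu⟩ := hcell
  · exact ⟨hu.1, hu.2.trans h₂⟩
  · exact ⟨h₁.trans hu.1.le, hu.2⟩
  · exact ⟨h₁.trans hu.1.le, hu.2.trans h₂⟩

theorem column_subset_lane (h : IsUniformGrid r T q (layerRow q m N) Q len w D A) (hτ : τ < N)
    (hx : UpStep m x x) (hc : J x < q) {i : ℕ} (hi : w (J x) (layerRow q m τ) ≤ i)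
    (hi' : i ≤ w (J x) (layerRow q m (τ + 1))) : Q (J x) i ∈ lane Q w A J q m τ x x := by
  refine .inl ⟨J x, hc, i, ?_, rfl⟩
  obtain hle | hlt := le_or_gt i (w (J x) (switchRow q m τ x))
  · refine .inl ⟨rfl, hi, hle.trans (h.mark_mono hc switchRow_le_landRow ?_)⟩
    exact (landRow_lt_layerRow hx).le.trans (layerRow_mono hτ)
  · exact .inr (.inl ⟨rfl, hlt, hi'⟩)

theorem strip_subset_lane (h : IsUniformGrid r T q (layerRow q m N) Q len w D A) (hτ : τ < N)
    (hxy : UpStep m x (x + 1)) :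
    strip Q w A {c ∈ Set.Iio q | ∀ i < m, i ≠ x → i ≠ x + 1 → c ≠ J i} (switchRow q m τ x)
      (landRow q m τ x (x + 1)) ⊆ lane Q w A J q m τ x (x + 1) := by
  have hN : layerRow q m (τ + 1) ≤ layerRow q m N := layerRow_mono hτ
  have hland : landRow q m τ x (x + 1) < layerRow q m (τ + 1) := landRow_lt_layerRow hxy
  have hswitch : switchRow q m τ x ≤ landRow q m τ x (x + 1) := switchRow_le_landRow
  rintro z (⟨c, ⟨hc, hcJ⟩, u, hu, rfl⟩ | hz)
  · refine .inl ⟨c, hc, u, ?_, rfl⟩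
    have h₁ : w c (layerRow q m τ) ≤ w c (switchRow q m τ x) :=
      h.mark_mono hc layerRow_le_switchRow (by lia)
    by_cases hx : c = J x
    · exact .inl ⟨hx, h₁.trans hu.1.le, hu.2⟩
    by_cases hy : c = J (x + 1)
    · exact .inr (.inl ⟨hy, hu.1, hu.2.trans (h.mark_mono hc hland.le hN)⟩)
    · exact .inr (.inr ⟨by grind, hu⟩)
  · exact .inr hz

theorem reachIn_lane_succ (h : IsUniformGrid r T q (layerRow q m N) Q len w D A)
    (hJ : IsSparseChain D (Set.Iio q) m J) (hτ : τ < N) (hxy : UpStep m x (x + 1)) :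
    ReachIn r (lane Q w A J q m τ x (x + 1)) (Q (J x) (w (J x) (layerRow q m τ)))
      (Q (J (x + 1)) (w (J (x + 1)) (layerRow q m (τ + 1)))) := by
  have hN : layerRow q m (τ + 1) ≤ layerRow q m N := layerRow_mono hτ
  have hland : landRow q m τ x (x + 1) < layerRow q m (τ + 1) := landRow_lt_layerRow hxy
  have hlayer : layerRow q m τ ≤ switchRow q m τ x := layerRow_le_switchRow
  have hswitch : landRow q m τ x (x + 1) = switchRow q m τ x + q := by simp [landRow]
  have hx : J x < q := hJ.mem x hxy.left_lt
  have hy : J (x + 1) < q := hJ.mem _ hxy.right_lt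
  have to_switch : ReachIn r (lane Q w A J q m τ x (x + 1)) (Q (J x) (w (J x) (layerRow q m τ)))
      (Q (J x) (w (J x) (switchRow q m τ x))) := by
    refine h.reachIn_column hx (h.mark_mono hx hlayer (by lia)) (h.mark_mono hx (by lia) le_rfl) ?_
    refine fun u hu hu' => .inl ⟨J x, hx, u, .inl ⟨rfl, hu, hu'.trans ?_⟩, rfl⟩
    exact h.mark_mono hx (by lia) (by lia)
  have change_column := h.reachStrip_of_reachIn (fun c hc => hc.1) (hJ.reach x hxy.right_lt)
    (show switchRow q m τ x + q ≤ layerRow q m N by lia)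
  rw [← hswitch] at change_column
  have from_land : ReachIn r (lane Q w A J q m τ x (x + 1))
      (Q (J (x + 1)) (w (J (x + 1)) (landRow q m τ x (x + 1))))
      (Q (J (x + 1)) (w (J (x + 1)) (layerRow q m (τ + 1)))) := by
    refine h.reachIn_column hy (h.mark_mono hy hland.le hN) (h.mark_mono hy hN le_rfl) ?_
    refine fun u hu hu' => .inl ⟨J (x + 1), hy, u, .inr (.inl ⟨rfl, ?_, hu'⟩), rfl⟩
    exact (h.mark_lt hy (by lia) (by lia)).trans_le hu
  refine (to_switch.trans (change_column.mono ?_)).trans from_land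
  exact Set.insert_subset to_switch.right_mem (h.strip_subset_lane hτ hxy)

theorem reachIn_lane (h : IsUniformGrid r T q (layerRow q m N) Q len w D A)
    (hJ : IsSparseChain D (Set.Iio q) m J) (hτ : τ < N) (hxy : UpStep m x y) :
    ReachIn r (lane Q w A J q m τ x y) (Q (J x) (w (J x) (layerRow q m τ)))
      (Q (J y) (w (J y) (layerRow q m (τ + 1)))) := by
  obtain rfl | rfl : y = x ∨ y = x + 1 := by grind [UpStep]
  · have hN : layerRow q m (τ + 1) ≤ layerRow q m N := layerRow_mono hτ
    have hx : J y < q := hJ.mem y hxy.left_lt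
    exact h.reachIn_column hx (h.mark_mono hx (layerRow_mono τ.le_succ) hN)
      (h.mark_mono hx hN le_rfl) fun i hi hi' => h.column_subset_lane hτ hxy hx hi hi'
  · exact h.reachIn_lane_succ hJ hτ hxy

theorem laneCell_notMem (h : IsUniformGrid r T q (layerRow q m N) Q len w D A) (hτ : τ < N)
    (hxy : UpStep m x y) (hc : c < q) (hcell : LaneCell w J q m τ x y c u) {a : ℕ}
    (ha : a < layerRow q m N) : Q c u ∉ A a := by
  obtain ⟨hu, hu'⟩ := h.laneCell_mem_Icc hτ hxy hc hcell
  have hpos : 0 < layerRow q m τ := by simp [layerRow]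
  exact h.notMem a ha c hc u ⟨(h.mark_lt hc hpos (layerRow_mono hτ.le)).trans_le hu,
    hu'.trans (h.mark_mono hc (layerRow_mono hτ) le_rfl)⟩

theorem lane_inter (h : IsUniformGrid r T q (layerRow q m N) Q len w D A) (hτ : τ < N)
    (hτ' : τ' < N) (hxy : UpStep m x y) (hxy' : UpStep m x' y') {z : V}
    (hz : z ∈ lane Q w A J q m τ x y) (hz' : z ∈ lane Q w A J q m τ' x' y') :
    (∃ c < q, ∃ u, z = Q c u ∧ LaneCell w J q m τ x y c u ∧ LaneCell w J q m τ' x' y' c u) ∨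
      ∃ a ∈ Set.Ico (switchRow q m τ x) (landRow q m τ x y),
        a ∈ Set.Ico (switchRow q m τ' x') (landRow q m τ' x' y') := by
  have hN : landRow q m τ x y < layerRow q m N :=
    (landRow_lt_layerRow hxy).trans_le (layerRow_mono hτ)
  have hN' : landRow q m τ' x' y' < layerRow q m N :=
    (landRow_lt_layerRow hxy').trans_le (layerRow_mono hτ')
  have le_len : ∀ {τ x y c u}, τ < N → UpStep m x y → c < q → LaneCell w J q m τ x y c u →
      u ≤ len c := fun hτ hxy hc hcell =>
    ((h.laneCell_mem_Icc hτ hxy hc hcell).2.trans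
      (h.mark_mono hc (layerRow_mono hτ) le_rfl)).trans (h.mark_le _ hc)
  obtain ⟨c, hc, u, hcell, rfl⟩ | ⟨a, ha, hza⟩ := hz <;>
    obtain ⟨c', hc', u', hcell', he⟩ | ⟨a', ha', hza'⟩ := hz'
  · have hu := le_len hτ hxy hc hcell
    have hu' := le_len hτ' hxy' hc' hcell'
    obtain rfl := h.paths.index_eq c hc c' hc' u hu u' hu' he.symm
    obtain rfl := (h.paths.isPath c hc).injOn hu' hu he
    exact .inl ⟨c, hc, u', rfl, hcell, hcell'⟩
  · exact absurd hza' (h.laneCell_notMem hτ hxy hc hcell (ha'.2.trans hN'))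
  · exact absurd (he ▸ hza) (h.laneCell_notMem hτ' hxy' hc' hcell' (ha.2.trans hN))
  · have haa : a = a' := h.disjoint.elim_set (ha.2.trans hN) (ha'.2.trans hN') z hza hza'
    exact .inr ⟨a, ha, haa ▸ ha'⟩

theorem disjoint_lane_same (h : IsUniformGrid r T q (layerRow q m N) Q len w D A)
    (hJ : Set.InjOn J (Set.Iio m)) (hτ : τ < N) (hxy : UpStep m x y) (hxy' : UpStep m x' y')
    (hx : x < x') (hy : y < y') :
    Disjoint (lane Q w A J q m τ x y) (lane Q w A J q m τ x' y') := by
  have hrow : landRow q m τ x' y' ≤ switchRow q m τ x := landRow_le_switchRow hxy' hx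
  have hland : landRow q m τ x y < layerRow q m (τ + 1) := landRow_lt_layerRow hxy
  have hswitch : switchRow q m τ x ≤ landRow q m τ x y := switchRow_le_landRow
  have hN : layerRow q m (τ + 1) ≤ layerRow q m N := layerRow_mono hτ
  refine Set.disjoint_left.2 fun z hz hz' => ?_
  obtain ⟨c, hc, u, -, hcell, hcell'⟩ | ⟨a, ha, ha'⟩ := h.lane_inter hτ hτ hxy hxy' hz hz'
  · have hmark : w c (landRow q m τ x' y') ≤ w c (switchRow q m τ x) :=
      h.mark_mono hc hrow (by lia)
    have index_eq : ∀ i < m, ∀ j < m, J i = J j → i = j := fun i hi j hj => hJ.eq_iff hi hj |>.1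
    grind [LaneCell, UpStep]
  · exact (ha'.2.trans_le hrow).not_ge ha.1

theorem lane_inter_next (h : IsUniformGrid r T q (layerRow q m N) Q len w D A)
    (hJ : Set.InjOn J (Set.Iio m)) (hτ : τ + 1 < N) (hxy : UpStep m x y) (hxy' : UpStep m x' y')
    {z : V} (hz : z ∈ lane Q w A J q m τ x y) (hz' : z ∈ lane Q w A J q m (τ + 1) x' y') :
    y = x' ∧ z = Q (J x') (w (J x') (layerRow q m (τ + 1))) := by
  have hland : landRow q m τ x y < layerRow q m (τ + 1) := landRow_lt_layerRow hxy
  have hlayer : layerRow q m (τ + 1) ≤ switchRow q m (τ + 1) x' := layerRow_le_switchRow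
  have hswitch : switchRow q m (τ + 1) x' ≤ landRow q m (τ + 1) x' y' := switchRow_le_landRow
  have hland' := landRow_lt_layerRow (q := q) (τ := τ + 1) hxy'
  have hN : layerRow q m (τ + 1 + 1) ≤ layerRow q m N := layerRow_mono hτ
  obtain ⟨c, hc, u, rfl, hcell, hcell'⟩ | ⟨a, ha, ha'⟩ :=
    h.lane_inter (by lia) hτ hxy hxy' hz hz'
  · have hu : u = w c (layerRow q m (τ + 1)) :=
      (h.laneCell_mem_Icc (by lia) hxy hc hcell).2.antisymm (h.laneCell_mem_Icc hτ hxy' hc hcell').1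
    have source : c = J x' := by
      have := h.mark_mono hc hlayer (by lia)
      grind [LaneCell]
    have target : c = J y := by
      have := h.mark_lt hc hland (by lia)
      grind [LaneCell]
    exact ⟨hJ hxy.right_lt hxy'.left_lt (target.symm.trans source), by rw [hu, source]⟩
  · have := ha.2
    have := ha'.1
    lia

theorem disjoint_lane_far (h : IsUniformGrid r T q (layerRow q m N) Q len w D A)
    (hτ : τ + 2 ≤ τ') (hτ' : τ' < N) (hxy : UpStep m x y) (hxy' : UpStep m x' y') :
    Disjoint (lane Q w A J q m τ x y) (lane Q w A J q m τ' x' y') := by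
  have hrow : layerRow q m (τ + 1) < layerRow q m τ' :=
    (by simp [layerRow_succ] : layerRow q m (τ + 1) < layerRow q m (τ + 2)).trans_le
      (layerRow_mono hτ)
  refine Set.disjoint_left.2 fun z hz hz' => ?_
  obtain ⟨c, hc, u, -, hcell, hcell'⟩ | ⟨a, ha, ha'⟩ :=
    h.lane_inter (by lia) hτ' hxy hxy' hz hz'
  · have hu := (h.laneCell_mem_Icc (by lia) hxy hc hcell).2
    have hu' := (h.laneCell_mem_Icc hτ' hxy' hc hcell').1
    exact ((h.mark_lt hc hrow (layerRow_mono hτ'.le)).trans_le hu').not_ge hu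
  · have hland : landRow q m τ x y < layerRow q m (τ + 1) := landRow_lt_layerRow hxy
    have hswitch : layerRow q m τ' ≤ switchRow q m τ' x' := layerRow_le_switchRow
    have := ha.2
    have := ha'.1
    lia

theorem exists_isMesh (h : IsUniformGrid r T q (layerRow q m N) Q len w D A)
    (hJ : IsSparseChain D (Set.Iio q) m J) : ∃ P U, IsMesh r (UpStep m) T m N P U := by
  have column_disjoint : ∀ x < m, ∀ x' < m, x ≠ x' →
      Disjoint (Q (J x) '' Set.Iic (len (J x))) (Q (J x') '' Set.Iic (len (J x'))) := by
    refine fun x hx x' hx' hne => Set.disjoint_left.2 ?_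
    rintro _ ⟨u, hu, rfl⟩ ⟨u', hu', he⟩
    exact hne (hJ.injOn hx hx'
      (h.paths.index_eq _ (hJ.mem x hx) _ (hJ.mem x' hx') u hu u' hu' he.symm))
  have le_len : ∀ x < m, ∀ a ≤ layerRow q m N, w (J x) a ≤ len (J x) := fun x hx a ha =>
    (h.mark_mono (hJ.mem x hx) ha le_rfl).trans (h.mark_le _ (hJ.mem x hx))
  let P : ℕ → ℕ → V := fun τ x => Q (J x) (w (J x) (layerRow q m τ))
  let U : ℕ → ℕ → ℕ → Set V := fun τ x y =>
    {z | ReachIn r (lane Q w A J q m τ x y) (P τ x) z ∧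
      ReachIn r (lane Q w A J q m τ x y) z (P (τ + 1) y)}
  have hU : ∀ τ x y, U τ x y ⊆ lane Q w A J q m τ x y := fun τ x y z hz => hz.1.right_mem
  refine ⟨P, U, ?_, ?_, ?_, ?_, ⟨fun x => Q (J x) '' Set.Iic (len (J x)), fun x => Q (J x) 0, ?_⟩,
    fun x => Q (J x) '' Set.Iic (len (J x)), fun x => Q (J x) (len (J x)), ?_⟩
  · exact fun τ hτ x y hxy => (h.reachIn_lane hJ hτ hxy).isPassage_between
  · exact fun τ hτ x y x' y' hxy hxy' hx hy =>
      (h.disjoint_lane_same hJ.injOn hτ hxy hxy' hx hy).mono (hU ..) (hU ..)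
  · exact fun τ hτ x y x' y' hxy hxy' z hz hz' =>
      h.lane_inter_next hJ.injOn hτ hxy hxy' (hU _ _ _ hz) (hU _ _ _ hz')
  · exact fun τ τ' hτ hτ' x y x' y' hxy hxy' =>
      (h.disjoint_lane_far hτ hτ' hxy hxy').mono (hU ..) (hU ..)
  · refine ⟨fun x hx => h.paths.start_mem _ (hJ.mem x hx), fun _ _ => Set.mem_univ _,
      fun x hx => ?_, fun x hx x' hx' => column_disjoint x hx x' hx'⟩
    exact (h.paths.isPath _ (hJ.mem x hx)).reachIn (Nat.zero_le _)
      (le_len x hx _ (layerRow_mono N.zero_le)) fun i _ hi =>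
        ⟨i, hi.trans (le_len x hx _ (layerRow_mono N.zero_le)), rfl⟩
  · refine ⟨fun _ _ => Set.mem_univ _, fun x hx => h.paths.end_mem _ (hJ.mem x hx),
      fun x hx => ?_, fun x hx x' hx' => column_disjoint x hx x' hx'⟩
    exact (h.paths.isPath _ (hJ.mem x hx)).reachIn (le_len x hx _ le_rfl) le_rfl
      fun i _ hi => ⟨i, hi, rfl⟩

end IsUniformGrid

theorem exists_isMesh_upStep (m N : ℕ) : ∃ q M, ∀ {V : Type u} {r : V → V → Prop} {T : Set V},
    HasGrid r T q M → ∃ P U, IsMesh r (UpStep m) T m N P U := by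
  obtain ⟨q, hq⟩ := exists_isSparseChain_of_semiconnected.{0} m
  obtain ⟨M, hM⟩ := exists_isUniformGrid.{u} q (layerRow q m N)
  refine ⟨q, M, fun hgrid => ?_⟩
  obtain ⟨Q, len, w, D, A, h⟩ := hM hgrid
  obtain ⟨J, hJ⟩ := hq (r := D) (g := id) Function.injective_id.injOn h.semiconnected
  exact h.exists_isMesh hJ

/-- The intermediate position of the double up-step that replaces the step from `x` to `y` after
shifting every layer by one. -/
def midStep (x y : ℕ) : ℕ := if y < x then x else x + 1

theorem midStep_lt_midStep {x y x' y' : ℕ} (hx : x < x') (hy : y < y') :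
    midStep x y < midStep x' y' := by
  grind [midStep]

theorem UnitStep.upStep_midStep {M τ x y : ℕ} (h : UnitStep m x y) (hM : m + τ < M) :
    UpStep M (x + τ) (midStep x y + τ) := by
  constructor <;> grind [midStep, UnitStep]

theorem UnitStep.upStep_midStep' {M τ x y : ℕ} (h : UnitStep m x y) (hM : m + τ < M) :
    UpStep M (midStep x y + τ) (y + 1 + τ) := by
  constructor <;> grind [midStep, UnitStep]

/-- The two consecutive up-steps that replace the step from `x` to `y`. -/
def doubleStep (U : ℕ → ℕ → ℕ → Set V) (τ x y : ℕ) : Set V :=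
  U (2 * τ) (x + τ) (midStep x y + τ) ∪ U (2 * τ + 1) (midStep x y + τ) (y + 1 + τ)

namespace IsMesh

variable {P : ℕ → ℕ → V} {U : ℕ → ℕ → ℕ → Set V} {M τ τ' x y x' y' : ℕ}

theorem disjoint_doubleStep_same (h : IsMesh r (UpStep M) T M (2 * N) P U) (hM : m + N < M)
    (hτ : τ < N) (hxy : UnitStep m x y) (hxy' : UnitStep m x' y') (hx : x < x') (hy : y < y') :
    Disjoint (doubleStep U τ x y) (doubleStep U τ x' y') := by
  have hmid := midStep_lt_midStep hx hy
  have hτM : m + τ < M := by lia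
  refine Set.disjoint_union_left.2
    ⟨Set.disjoint_union_right.2 ⟨?_, ?_⟩, Set.disjoint_union_right.2 ⟨?_, ?_⟩⟩
  · exact h.disjoint_same _ (by lia) _ _ _ _ (hxy.upStep_midStep hτM) (hxy'.upStep_midStep hτM)
      (by lia) (by lia)
  · refine Set.disjoint_left.2 fun z hz hz' => ?_
    have := (h.inter_next _ (by lia) _ _ _ _ (hxy.upStep_midStep hτM)
      (hxy'.upStep_midStep' hτM) z hz hz').1
    lia
  · refine Set.disjoint_left.2 fun z hz hz' => ?_
    have := (h.inter_next _ (by lia) _ _ _ _ (hxy'.upStep_midStep hτM)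
      (hxy.upStep_midStep' hτM) z hz' hz).1
    lia
  · exact h.disjoint_same _ (by lia) _ _ _ _ (hxy.upStep_midStep' hτM) (hxy'.upStep_midStep' hτM)
      (by lia) (by lia)

theorem doubleStep_inter_next (h : IsMesh r (UpStep M) T M (2 * N) P U) (hM : m + N < M)
    (hτ : τ + 1 < N) (hxy : UnitStep m x y) (hxy' : UnitStep m x' y') {z : V}
    (hz : z ∈ doubleStep U τ x y) (hz' : z ∈ doubleStep U (τ + 1) x' y') :
    y = x' ∧ z = P (2 * (τ + 1)) (x' + (τ + 1)) := by
  have ha := hxy.upStep_midStep (show m + τ < M by lia)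
  have hb := hxy.upStep_midStep' (show m + τ < M by lia)
  have ha' := hxy'.upStep_midStep (show m + (τ + 1) < M by lia)
  have hb' := hxy'.upStep_midStep' (show m + (τ + 1) < M by lia)
  obtain hz | hz := hz <;> obtain hz' | hz' := hz'
  · exact (Set.disjoint_left.1 (h.disjoint_far _ _ (by lia) (by lia) _ _ _ _ ha ha') hz hz').elim
  · exact (Set.disjoint_left.1 (h.disjoint_far _ _ (by lia) (by lia) _ _ _ _ ha hb') hz hz').elim
  · obtain ⟨hy, rfl⟩ := h.inter_next _ (by lia) _ _ _ _ hb ha' z hz hz'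
    exact ⟨by lia, rfl⟩
  · exact (Set.disjoint_left.1 (h.disjoint_far _ _ (by lia) (by lia) _ _ _ _ hb hb') hz hz').elim

theorem disjoint_doubleStep_far (h : IsMesh r (UpStep M) T M (2 * N) P U) (hM : m + N < M)
    (hτ : τ + 2 ≤ τ') (hτ' : τ' < N) (hxy : UnitStep m x y) (hxy' : UnitStep m x' y') :
    Disjoint (doubleStep U τ x y) (doubleStep U τ' x' y') := by
  have ha := hxy.upStep_midStep (show m + τ < M by lia)
  have hb := hxy.upStep_midStep' (show m + τ < M by lia)
  have ha' := hxy'.upStep_midStep (show m + τ' < M by lia)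
  have hb' := hxy'.upStep_midStep' (show m + τ' < M by lia)
  refine Set.disjoint_union_left.2
    ⟨Set.disjoint_union_right.2 ⟨?_, ?_⟩, Set.disjoint_union_right.2 ⟨?_, ?_⟩⟩
  · exact h.disjoint_far _ _ (by lia) (by lia) _ _ _ _ ha ha'
  · exact h.disjoint_far _ _ (by lia) (by lia) _ _ _ _ ha hb'
  · exact h.disjoint_far _ _ (by lia) (by lia) _ _ _ _ hb ha'
  · exact h.disjoint_far _ _ (by lia) (by lia) _ _ _ _ hb hb'

theorem exists_unitStep (h : IsMesh r (UpStep M) T M (2 * N) P U) (hM : m + N < M) :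
    ∃ P U, IsMesh r (UnitStep m) T m N P U := by
  refine ⟨fun τ x => P (2 * τ) (x + τ), doubleStep U, ?_, ?_, ?_, ?_, ?_, ?_⟩
  · intro τ hτ x y hxy
    rw [show 2 * (τ + 1) = 2 * τ + 1 + 1 by ring, show y + (τ + 1) = y + 1 + τ by ring]
    exact (h.isPassage _ (by lia) _ _ (hxy.upStep_midStep (by lia))).union
      (h.isPassage _ (by lia) _ _ (hxy.upStep_midStep' (by lia)))
  · exact fun τ hτ _ _ _ _ => h.disjoint_doubleStep_same hM hτ
  · exact fun τ hτ _ _ _ _ hxy hxy' z => h.doubleStep_inter_next hM hτ hxy hxy'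
  · exact fun τ τ' hτ hτ' _ _ _ _ => h.disjoint_doubleStep_far hM hτ hτ'
  · obtain ⟨E, b, hE⟩ := h.exists_linkage_first
    exact ⟨E, b, hE.comp (f := id) (fun x hx => by grind) Function.injective_id.injOn⟩
  · obtain ⟨E, b, hE⟩ := h.exists_linkage_last
    exact ⟨_, _, hE.comp (f := (· + N)) (fun x hx => by grind) (add_left_injective N).injOn⟩

end IsMesh

theorem exists_isMesh_unitStep (m N : ℕ) : ∃ q M, ∀ {V : Type u} {r : V → V → Prop} {T : Set V},
    HasGrid r T q M → ∃ P U, IsMesh r (UnitStep m) T m N P U := by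
  obtain ⟨q, M, h⟩ := exists_isMesh_upStep.{u} (m + N + 1) (2 * N)
  refine ⟨q, M, fun hgrid => ?_⟩
  obtain ⟨P, U, hPU⟩ := h hgrid
  exact hPU.exists_unitStep (Nat.lt_succ_self _)

end Mesh

/-! ### Routing in a mesh -/

section Routing

variable {V : Type*} {r : V → V → Prop} {T : Set V} {m N : ℕ} {P : ℕ → ℕ → V}
  {U : ℕ → ℕ → ℕ → Set V} {α β γ α' β' : ℕ} {f g : ℕ → ℕ} {z : V}

/-- The set of vertices of layer `τ` of a mesh of width `m`. -/
def meshLayer (P : ℕ → ℕ → V) (m τ : ℕ) : Set V := P τ '' Set.Iio m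

/-- The part of a mesh between the layers `α` and `β`. -/
def meshBox (U : ℕ → ℕ → ℕ → Set V) (m N α β : ℕ) : Set V :=
  {z | ∃ τ ∈ Set.Ico α β, τ < N ∧ ∃ x y, UnitStep m x y ∧ z ∈ U τ x y}

/-- The part of a mesh strictly between the layers `α` and `β`. -/
def meshCore (P : ℕ → ℕ → V) (U : ℕ → ℕ → ℕ → Set V) (m N α β : ℕ) : Set V :=
  meshBox U m N α β \ (meshLayer P m α ∪ meshLayer P m β)

/-- The column `f` moves by unit steps between the layers `α` and `β`. -/
def IsTrajectory (m : ℕ) (f : ℕ → ℕ) (α β : ℕ) : Prop :=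
  ∀ τ ∈ Set.Ico α β, UnitStep m (f τ) (f (τ + 1))

/-- The part of a mesh swept by a trajectory between the layers `α` and `β`. -/
def trajectory (U : ℕ → ℕ → ℕ → Set V) (f : ℕ → ℕ) (α β : ℕ) : Set V :=
  {z | ∃ τ ∈ Set.Ico α β, z ∈ U τ (f τ) (f (τ + 1))}

theorem unitStep_self {x : ℕ} (hx : x < m) : UnitStep m x x :=
  ⟨hx, hx, Nat.le_succ x, Nat.le_succ x⟩

theorem isTrajectory_const {c : ℕ} (hc : c < m) (α β : ℕ) : IsTrajectory m (fun _ => c) α β :=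
  fun _ _ => unitStep_self hc

theorem meshBox_mono (hα : α' ≤ α) (hβ : β ≤ β') : meshBox U m N α β ⊆ meshBox U m N α' β' :=
  fun _ ⟨τ, hτ, h⟩ => ⟨τ, Set.Ico_subset_Ico hα hβ hτ, h⟩

theorem trajectory_mono (hα : α' ≤ α) (hβ : β ≤ β') :
    trajectory U f α β ⊆ trajectory U f α' β' :=
  fun _ ⟨τ, hτ, h⟩ => ⟨τ, Set.Ico_subset_Ico hα hβ hτ, h⟩

theorem IsTrajectory.subset_meshBox (hf : IsTrajectory m f α β) (hβ : β ≤ N) :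
    trajectory U f α β ⊆ meshBox U m N α β :=
  fun _ ⟨τ, hτ, hz⟩ => ⟨τ, hτ, hτ.2.trans_le hβ, _, _, hf τ hτ, hz⟩

namespace IsMesh

theorem inter_of_lt {step : ℕ → ℕ → Prop} (h : IsMesh r step T m N P U) {τ τ' x y x' y' : ℕ}
    (hττ' : τ < τ') (hτ' : τ' < N) (hxy : step x y) (hxy' : step x' y')
    (hz : z ∈ U τ x y) (hz' : z ∈ U τ' x' y') : τ' = τ + 1 ∧ y = x' ∧ z = P τ' x' := by
  obtain rfl | hfar : τ' = τ + 1 ∨ τ + 2 ≤ τ' := by lia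
  · exact ⟨rfl, h.inter_next τ hτ' x y x' y' hxy hxy' z hz hz'⟩
  · exact (Set.disjoint_left.1 (h.disjoint_far τ τ' hfar hτ' x y x' y' hxy hxy') hz hz').elim

variable (h : IsMesh r (UnitStep m) T m N P U)
include h

theorem ne_of_far {τ τ' x y : ℕ} (hτ : τ + 2 ≤ τ') (hτ' : τ' < N) (hx : x < m) (hy : y < m) :
    P τ x ≠ P τ' y := by
  have hmem : ∀ σ < N, ∀ c < m, P σ c ∈ U σ c c := fun σ hσ c hc =>
    (h.isPassage σ hσ c c (unitStep_self hc)).start_mem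
  exact (h.disjoint_far τ τ' hτ hτ' x x y y (unitStep_self hx) (unitStep_self hy)).ne_of_mem
    (hmem τ (by lia) x hx) (hmem τ' hτ' y hy)

theorem disjoint_meshBox (hβ : β < α') :
    Disjoint (meshBox U m N α β) (meshBox U m N α' β') := by
  refine Set.disjoint_left.2 ?_
  rintro z ⟨τ, hτ, -, x, y, hxy, hz⟩ ⟨τ', hτ', hN, x', y', hxy', hz'⟩
  have hfar : τ + 2 ≤ τ' := by
    have := hτ.2
    have := hτ'.1
    lia
  exact Set.disjoint_left.1 (h.disjoint_far τ τ' hfar hN x y x' y' hxy hxy') hz hz'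

theorem mem_meshLayer (hz : z ∈ meshBox U m N α β) (hz' : z ∈ meshBox U m N β γ) :
    z ∈ meshLayer P m β := by
  obtain ⟨τ, hτ, -, x, y, hxy, hz⟩ := hz
  obtain ⟨τ', hτ', hN, x', y', hxy', hz'⟩ := hz'
  obtain ⟨hsucc, -, rfl⟩ := h.inter_of_lt (hτ.2.trans_le hτ'.1) hN hxy hxy' hz hz'
  obtain rfl : τ' = β := le_antisymm (hsucc ▸ hτ.2) hτ'.1
  exact ⟨x', hxy'.left_lt, rfl⟩

theorem disjoint_meshBox_meshCore : Disjoint (meshBox U m N γ α) (meshCore P U m N α β) :=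
  Set.disjoint_left.2 fun _ hz hzc => hzc.2 (.inl (h.mem_meshLayer hz hzc.1))

theorem disjoint_meshBox_meshCore' : Disjoint (meshBox U m N β γ) (meshCore P U m N α β) :=
  Set.disjoint_left.2 fun _ hz hzc => hzc.2 (.inr (h.mem_meshLayer hzc.1 hz))

theorem reachIn_trajectory (hf : IsTrajectory m f α β) (hαβ : α < β) (hβ : β ≤ N) :
    ReachIn r (trajectory U f α β) (P α (f α)) (P β (f β)) := by
  have hstep : ∀ τ ∈ Set.Ico α β,
      ReachIn r (trajectory U f α β) (P τ (f τ)) (P (τ + 1) (f (τ + 1))) := fun τ hτ =>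
    (h.isPassage τ (hτ.2.trans_le hβ) _ _ (hf τ hτ)).reachIn.mono fun z hz => ⟨τ, hτ, hz⟩
  suffices ∀ σ, α < σ → σ ≤ β → ReachIn r (trajectory U f α β) (P α (f α)) (P σ (f σ)) from
    this β hαβ le_rfl
  intro σ hσ
  induction σ, hσ using Nat.le_induction with
  | base => exact fun _ => hstep α ⟨le_rfl, hαβ⟩
  | succ σ hσ ih => exact fun hσβ => (ih (by lia)).trans (hstep σ ⟨by lia, hσβ⟩)

theorem disjoint_trajectory (hf : IsTrajectory m f α β) (hg : IsTrajectory m g α β) (hβ : β ≤ N)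
    (hfg : ∀ τ ∈ Set.Icc α β, f τ < g τ) :
    Disjoint (trajectory U f α β) (trajectory U g α β) := by
  refine Set.disjoint_left.2 ?_
  rintro z ⟨τ, hτ, hz⟩ ⟨τ', hτ', hz'⟩
  have hτN := hτ.2.trans_le hβ
  have hτN' := hτ'.2.trans_le hβ
  obtain hlt | rfl | hlt := lt_trichotomy τ τ'
  · obtain ⟨rfl, heq, -⟩ := h.inter_of_lt hlt hτN' (hf τ hτ) (hg τ' hτ') hz hz'
    exact (hfg _ ⟨hτ'.1, hτ'.2.le⟩).ne heq
  · exact Set.disjoint_left.1 (h.disjoint_same τ hτN _ _ _ _ (hf τ hτ) (hg τ hτ')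
      (hfg τ ⟨hτ.1, hτ.2.le⟩) (hfg _ ⟨hτ.1.trans τ.le_succ, hτ.2⟩)) hz hz'
  · obtain ⟨rfl, heq, -⟩ := h.inter_of_lt hlt hτN (hg τ' hτ') (hf τ hτ) hz' hz
    exact (hfg _ ⟨hτ.1, hτ.2.le⟩).ne' heq

end IsMesh

/-- The column at layer `τ` of the `i`-th route from `a i` at layer `α` to `b i` at layer `β`: it
first descends by unit steps from column `a i` to column `i`, and at the end climbs to `b i`. -/
def routeColumn (a b : ℕ → ℕ) (α β i τ : ℕ) : ℕ := max i (max (a i - (τ - α)) (b i - (β - τ)))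

theorem isTrajectory_routeColumn {a b : ℕ → ℕ} {i : ℕ} (hi : i ≤ a i) (ha : a i < m)
    (hb : b i < m) : IsTrajectory m (routeColumn a b α β i) α β := by
  rintro τ ⟨hατ, hτβ⟩
  constructor <;> simp only [routeColumn] <;> lia

theorem le_apply_of_strictMonoOn {a : ℕ → ℕ} {k i : ℕ} (ha : StrictMonoOn a (Set.Iio k))
    (hi : i < k) : i ≤ a i := by
  induction i with
  | zero => exact Nat.zero_le _
  | succ i ih =>
    have hik : i < k := i.lt_succ_self.trans hi
    exact (ih hik).trans_lt (ha hik hi i.lt_succ_self)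

theorem IsMesh.exists_isLinkage_routes (h : IsMesh r (UnitStep m) T m N P U) {k : ℕ}
    {a b : ℕ → ℕ} (hαβ : α + 2 * m ≤ β) (hβ : β ≤ N)
    (ha : Set.MapsTo a (Set.Iio k) (Set.Iio m)) (hb : Set.MapsTo b (Set.Iio k) (Set.Iio m))
    (hamono : StrictMonoOn a (Set.Iio k)) (hbmono : StrictMonoOn b (Set.Iio k)) :
    ∃ W, IsLinkage r (meshLayer P m α) (meshLayer P m β) (Set.Iio k) W
        (fun i => P α (a i)) (fun i => P β (b i)) ∧
      ∀ i < k, W i ⊆ meshBox U m N α β := by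
  have htraj : ∀ i < k, IsTrajectory m (routeColumn a b α β i) α β := fun i hi =>
    isTrajectory_routeColumn (le_apply_of_strictMonoOn hamono hi) (ha hi) (hb hi)
  have hends : ∀ i < k, routeColumn a b α β i α = a i ∧ routeColumn a b α β i β = b i := by
    intro i hi
    have := le_apply_of_strictMonoOn hamono hi
    have := le_apply_of_strictMonoOn hbmono hi
    have := Set.mem_Iio.1 (ha hi)
    have := Set.mem_Iio.1 (hb hi)
    constructor <;> simp only [routeColumn] <;> lia
  refine ⟨fun i => trajectory U (routeColumn a b α β i) α β, ⟨fun i hi => ⟨a i, ha hi, rfl⟩,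
    fun i hi => ⟨b i, hb hi, rfl⟩, fun i hi => ?_, ?_⟩, fun i hi => (htraj i hi).subset_meshBox hβ⟩
  · have hαβ' : α < β := by
      have := Set.mem_Iio.1 (ha hi)
      lia
    simpa only [hends i hi] using h.reachIn_trajectory (htraj i hi) hαβ' hβ
  · refine pairwiseDisjoint_Iio_of_lt fun i j hij hj => ?_
    have hik : i < k := hij.trans hj
    refine h.disjoint_trajectory (htraj i hik) (htraj j hj) hβ fun τ _ => ?_
    have := hamono hik hj hij
    have := hbmono hik hj hij
    simp only [routeColumn]
    lia

theorem IsMesh.reachIn_meshBox (h : IsMesh r (UnitStep m) T m N P U) {x y : ℕ}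
    (hαβ : α + 2 * m ≤ β) (hβ : β ≤ N) (hx : x < m) (hy : y < m) :
    ReachIn r (meshBox U m N α β) (P α x) (P β y) := by
  have hmono : ∀ c : ℕ, StrictMonoOn (fun _ => c) (Set.Iio 1) := fun c i hi j hj hij => by
    simp only [Set.mem_Iio] at hi hj
    lia
  obtain ⟨W, hW, hWbox⟩ := h.exists_isLinkage_routes hαβ hβ (fun _ _ => hx) (fun _ _ => hy)
    (hmono x) (hmono y)
  exact (hW.reach 0 Nat.one_pos).mono (hWbox 0 Nat.one_pos)

end Routing

/-! ### Linkages returning to an earlier layer -/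

section ReturnLinkage

universe u

variable {V : Type u} {r : V → V → Prop} {S C : Set V} {u v : V}

/-- The relation `r` with the vertices in `C` isolated. -/
def avoiding (r : V → V → Prop) (C : Set V) : V → V → Prop := fun x y => r x y ∧ x ∉ C ∧ y ∉ C

theorem ReachIn.of_avoiding (h : ReachIn (avoiding r C) S u v) (hu : u ∉ C) :
    ReachIn r (S \ C) u v :=
  (h.inter_of_closed (Z := Cᶜ) hu fun _ _ _ _ hxy _ => hxy.2.2).mono_rel fun _ _ _ _ hxy => hxy.1

theorem ReachIn.exists_trim {A B : Set V} (h : ReachIn r S u v) (hu : u ∈ A) (hv : v ∈ B) :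
    ∃ S' ⊆ S, ∃ s ∈ A, ∃ t ∈ B, ReachIn r S' s t ∧ ∀ z ∈ S', z ∈ A ∪ B → z = s ∨ z = t := by
  obtain ⟨s, hs, hsv, hus⟩ := h.exists_last_mem hu
  obtain ⟨t, ht, hst, htv⟩ := hsv.exists_first_mem hv
  have hsub : S \ A ∪ {s} ⊆ S :=
    Set.union_subset Set.sdiff_subset (Set.singleton_subset_iff.2 hus.right_mem)
  refine ⟨_, Set.union_subset (Set.sdiff_subset.trans hsub)
    (Set.singleton_subset_iff.2 (hsub htv.left_mem)), s, hs, t, ht, hst, ?_⟩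
  rintro z (⟨hz | rfl, hzB⟩ | rfl) hzAB
  · exact (hzAB.elim hz.2 hzB).elim
  · exact .inl rfl
  · exact .inr rfl

theorem hasDisjointCycles_of_pairs {n : ℕ} {R : ℕ → Set V}
    (hR : ∀ i < 2 * n, ∀ j < 2 * n, i ≠ j → i ≠ 2 * n - 1 - j → Disjoint (R i) (R j))
    (hcycle : ∀ i < n, HasCycleIn r (R i ∪ R (2 * n - 1 - i))) : HasDisjointCycles r n := by
  refine ⟨_, hcycle, pairwiseDisjoint_Iio_of_lt fun i j hij hj => ?_⟩
  simp only [Set.disjoint_union_left, Set.disjoint_union_right]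
  refine ⟨⟨?_, ?_⟩, ?_, ?_⟩ <;> apply hR <;> lia

section Linkages

variable {A B A' B' : Set V} {n : ℕ} {W S : ℕ → Set V} {s t : ℕ → V} {σ : ℕ → ℕ}

theorem disjoint_union_of_linkages
    (hσ : ∀ i < 2 * n, σ (σ i) = i ∧ (σ i = i ∨ σ i = 2 * n - 1 - i))
    (hW : IsLinkage r A B (Set.Iio (2 * n)) W (s ∘ σ) t)
    (hS : IsLinkage r B' A' (Set.Iio (2 * n)) S t s)
    (hWS : ∀ i < 2 * n, ∀ j < 2 * n, ∀ z ∈ W i, z ∈ S j → z = t j ∨ z = s j) {i j : ℕ}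
    (hi : i < 2 * n) (hj : j < 2 * n) (hij : i ≠ j) (hij' : i ≠ 2 * n - 1 - j) :
    Disjoint (W i ∪ S i) (W j ∪ S j) := by
  have hdisj : ∀ i < 2 * n, ∀ j < 2 * n, i ≠ j → i ≠ 2 * n - 1 - j → Disjoint (W i) (S j) := by
    refine fun i hi j hj hij hij' => Set.disjoint_left.2 fun z hzW hzS => ?_
    obtain ⟨hσσ, hσj⟩ := hσ j hj
    obtain rfl | rfl := hWS i hi j hj z hzW hzS
    · exact hij (hW.disjoint.elim_set hi hj _ hzW (hW.reach j hj).right_mem)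
    · have hσlt : σ j < 2 * n := by lia
      have hmem := (hW.reach _ hσlt).left_mem
      rw [Function.comp_apply, hσσ] at hmem
      have := hW.disjoint.elim_set hi hσlt _ hzW hmem
      lia
  simp only [Set.disjoint_union_left, Set.disjoint_union_right]
  exact ⟨⟨hW.disjoint hi hj hij, (hdisj j hj i hi hij.symm (by lia)).symm⟩,
    hdisj i hi j hj hij hij', hS.disjoint hi hj hij⟩

theorem hasDisjointCycles_of_linkages
    (hσ : ∀ i < 2 * n, σ (σ i) = i ∧ (σ i = i ∨ σ i = 2 * n - 1 - i))
    (hW : IsLinkage r A B (Set.Iio (2 * n)) W (s ∘ σ) t)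
    (hS : IsLinkage r B' A' (Set.Iio (2 * n)) S t s)
    (hWS : ∀ i < 2 * n, ∀ j < 2 * n, ∀ z ∈ W i, z ∈ S j → z = t j ∨ z = s j)
    (hst : ∀ i < 2 * n, s i ≠ t i) : HasDisjointCycles r n := by
  refine hasDisjointCycles_of_pairs (R := fun i => W i ∪ S i)
    (fun _ hi _ hj => disjoint_union_of_linkages hσ hW hS hWS hi hj) fun i hi => ?_
  have hi' : i < 2 * n := by lia
  obtain ⟨hσσ, hσi⟩ := hσ i hi'
  have hσlt : σ i < 2 * n := by lia
  have hsub : ∀ j, j = i ∨ j = 2 * n - 1 - i →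
      W j ∪ S j ⊆ (W i ∪ S i) ∪ (W (2 * n - 1 - i) ∪ S (2 * n - 1 - i)) := by
    rintro j (rfl | rfl)
    exacts [Set.subset_union_left, Set.subset_union_right]
  have hforth : ∀ j < 2 * n, j = i ∨ j = 2 * n - 1 - i →
      ReachIn r ((W i ∪ S i) ∪ (W (2 * n - 1 - i) ∪ S (2 * n - 1 - i))) (s (σ j)) (t j) :=
    fun j hj hji => (hW.reach j hj).mono (Set.subset_union_left.trans (hsub j hji))
  have hback : ∀ j < 2 * n, j = i ∨ j = 2 * n - 1 - i →
      ReachIn r ((W i ∪ S i) ∪ (W (2 * n - 1 - i) ∪ S (2 * n - 1 - i))) (t j) (s j) :=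
    fun j hj hji => (hS.reach j hj).mono (Set.subset_union_right.trans (hsub j hji))
  refine .of_reachIn ?_ (hback i hi' (.inl rfl)) (hst i hi')
  exact (hσσ ▸ hforth _ hσlt hσi).trans ((hback _ hσlt hσi).trans (hforth i hi' (.inl rfl)))

end Linkages

/-- A linkage from layer `β` of a mesh back to layer `α`, leading from column `b i` to column
`a i`, that meets the part of the mesh between these layers only in its ends. -/
structure IsReturnLinkage (r : V → V → Prop) (m N : ℕ) (P : ℕ → ℕ → V) (U : ℕ → ℕ → ℕ → Set V)
    (α β k : ℕ) (S : ℕ → Set V) (b a : ℕ → ℕ) : Prop where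
  isLinkage : IsLinkage r (meshLayer P m β) (meshLayer P m α) (Set.Iio k) S
    (fun i => P β (b i)) (fun i => P α (a i))
  start_lt : Set.MapsTo b (Set.Iio k) (Set.Iio m)
  end_lt : Set.MapsTo a (Set.Iio k) (Set.Iio m)
  eq_or_eq : ∀ i < k, ∀ z ∈ S i, z ∈ meshBox U m N α β → z = P β (b i) ∨ z = P α (a i)

section

variable {T : Set V} {m N α β k : ℕ} {P : ℕ → ℕ → V} {U : ℕ → ℕ → ℕ → Set V} {S : ℕ → Set V}
  {a b : ℕ → ℕ}

namespace IsReturnLinkage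

theorem comp (h : IsReturnLinkage r m N P U α β k S b a) {l : ℕ} {e : ℕ → ℕ}
    (he : Set.MapsTo e (Set.Iio l) (Set.Iio k)) (hinj : Set.InjOn e (Set.Iio l)) :
    IsReturnLinkage r m N P U α β l (S ∘ e) (b ∘ e) (a ∘ e) :=
  ⟨h.isLinkage.comp he hinj, h.start_lt.comp he, h.end_lt.comp he,
    fun _ hi => h.eq_or_eq _ (he hi)⟩

theorem start_injOn (h : IsReturnLinkage r m N P U α β k S b a) : Set.InjOn b (Set.Iio k) :=
  fun _ hi _ hj hij => h.isLinkage.start_injOn hi hj (congrArg (P β) hij)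

theorem end_injOn (h : IsReturnLinkage r m N P U α β k S b a) : Set.InjOn a (Set.Iio k) :=
  fun _ hi _ hj hij => h.isLinkage.end_injOn hi hj (congrArg (P α) hij)

theorem hasDisjointCycles_of_comp_strictMonoOn {n : ℕ}
    (h : IsReturnLinkage r m N P U α β (2 * n) S b a) (hmesh : IsMesh r (UnitStep m) T m N P U)
    (hαβ : α + 2 * m ≤ β) (hβ : β < N) {σ : ℕ → ℕ}
    (hσ : ∀ i < 2 * n, σ (σ i) = i ∧ (σ i = i ∨ σ i = 2 * n - 1 - i))
    (hb : StrictMonoOn b (Set.Iio (2 * n))) (ha : StrictMonoOn (a ∘ σ) (Set.Iio (2 * n))) :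
    HasDisjointCycles r n := by
  have hσlt : Set.MapsTo σ (Set.Iio (2 * n)) (Set.Iio (2 * n)) := fun i hi => by
    have := hσ i hi
    simp only [Set.mem_Iio] at hi ⊢
    lia
  obtain ⟨W, hW, hWbox⟩ :=
    hmesh.exists_isLinkage_routes hαβ hβ.le (h.end_lt.comp hσlt) h.start_lt ha hb
  refine hasDisjointCycles_of_linkages hσ hW h.isLinkage
    (fun i hi j hj z hzW hzS => h.eq_or_eq j hj z hzS (hWbox i hi hzW)) fun i hi => ?_
  have ham : a i < m := h.end_lt hi
  exact hmesh.ne_of_far (by lia) hβ ham (h.start_lt hi)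

theorem hasDisjointCycles {n : ℕ} (h : IsReturnLinkage r m N P U α β (2 * n) S b a)
    (hmesh : IsMesh r (UnitStep m) T m N P U) (hαβ : α + 2 * m ≤ β) (hβ : β < N)
    (hb : StrictMonoOn b (Set.Iio (2 * n)))
    (ha : StrictMonoOn a (Set.Iio (2 * n)) ∨ StrictAntiOn a (Set.Iio (2 * n))) :
    HasDisjointCycles r n := by
  obtain ha | ha := ha
  · exact h.hasDisjointCycles_of_comp_strictMonoOn hmesh hαβ hβ (σ := id)
      (fun i _ => ⟨rfl, .inl rfl⟩) hb ha
  · refine h.hasDisjointCycles_of_comp_strictMonoOn hmesh hαβ hβ (σ := fun i => 2 * n - 1 - i)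
      (fun i hi => ⟨by lia, .inr rfl⟩) hb fun i hi j hj hij => ?_
    simp only [Set.mem_Iio] at hi hj
    exact ha (Set.mem_Iio.2 (by lia)) (Set.mem_Iio.2 (by lia)) (by lia)

end IsReturnLinkage

theorem exists_isReturnLinkage (h : HasLinkageIn (avoiding r (meshCore P U m N α β)) Set.univ
    (meshLayer P m β) (meshLayer P m α) k) :
    ∃ S b a, IsReturnLinkage r m N P U α β k S b a := by
  obtain ⟨S, s, t, hS, -⟩ := h
  have htrim : ∀ i < k, ∃ S' ⊆ S i, ∃ b < m, ∃ a < m, ReachIn r S' (P β b) (P α a) ∧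
      ∀ z ∈ S', z ∈ meshBox U m N α β → z = P β b ∨ z = P α a := by
    intro i hi
    have hreach := (hS.reach i hi).of_avoiding fun hmem => hmem.2 (.inr (hS.start_mem i hi))
    obtain ⟨S', hS', _, ⟨b, hb, rfl⟩, _, ⟨a, ha, rfl⟩, hba, heq⟩ :=
      hreach.exists_trim (hS.start_mem i hi) (hS.end_mem i hi)
    refine ⟨S', fun z hz => (hS' hz).1, b, hb, a, ha, hba, fun z hz hzbox => heq z hz ?_⟩
    by_contra hlayer
    exact (hS' hz).2 ⟨hzbox, fun hz => hlayer hz.symm⟩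
  choose! S' hS' b hb a ha hreach heq using htrim
  exact ⟨S', b, a, ⟨fun i hi => ⟨b i, hb i hi, rfl⟩, fun i hi => ⟨a i, ha i hi, rfl⟩, hreach,
    fun i hi j hj hij => (hS.disjoint hi hj hij).mono (hS' i hi) (hS' j hj)⟩, hb, ha, heq⟩

end

theorem exists_size_hasDisjointCycles_of_hasLinkageIn (n : ℕ) : ∃ s : ℕ, ∀ {V : Type u}
    {r : V → V → Prop} {T : Set V} {m N : ℕ} {P : ℕ → ℕ → V} {U : ℕ → ℕ → ℕ → Set V} {α β : ℕ},
    IsMesh r (UnitStep m) T m N P U → α + 2 * m ≤ β → β < N →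
    HasLinkageIn (avoiding r (meshCore P U m N α β)) Set.univ (meshLayer P m β)
      (meshLayer P m α) s → HasDisjointCycles r n := by
  obtain ⟨s, hs⟩ := exists_comp_strictMonoOn_and_monotone (2 * n)
  refine ⟨s, fun hmesh hαβ hβ hlink => ?_⟩
  obtain ⟨S, b, a, h⟩ := exists_isReturnLinkage hlink
  obtain ⟨e, he, hbe, hae⟩ := hs a b h.end_injOn h.start_injOn
  exact (h.comp he hbe.injOn.of_comp).hasDisjointCycles hmesh hαβ hβ hbe hae

end ReturnLinkage

/-! ### Blocks of a mesh cut off by small separators -/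

section Blocks

universe u

variable {V : Type u} {ι : Type*} {r : V → V → Prop} {T : Set V} {m N K : ℕ} {P : ℕ → ℕ → V}
  {U : ℕ → ℕ → ℕ → Set V} {d : ℕ → ℕ} {X : ℕ → Set V} {c c' : ℕ}

theorem exists_subset_forall_disjoint {f : ι → Set V} {I : Finset ι} (X : Finset V)
    (hf : (I : Set ι).PairwiseDisjoint f) :
    ∃ J ⊆ I, I.card ≤ J.card + X.card ∧ ∀ i ∈ J, Disjoint (f i) X := by
  classical
  refine ⟨I.filter fun i => Disjoint (f i) X, Finset.filter_subset _ _, ?_,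
    fun i hi => (Finset.mem_filter.1 hi).2⟩
  rw [← Finset.card_filter_add_card_filter_not (s := I) fun i => Disjoint (f i) (X : Set V)]
  refine Nat.add_le_add_left (not_lt.1 fun hlt => ?_) _
  obtain ⟨i, hi, hdisj⟩ :=
    exists_disjoint_of_card_lt (hf.subset (Finset.coe_subset.2 (Finset.filter_subset _ I))) hlt
  exact (Finset.mem_filter.1 hi).2 hdisj

theorem Linked.exists_reachIn_compl (hT : Linked r T) {I : Finset ι} {s t : ι → V} {X : Finset V}
    (hs : Set.MapsTo s I T) (ht : Set.MapsTo t I T) (hsinj : Set.InjOn s I)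
    (htinj : Set.InjOn t I) (hX : X.card < I.card) :
    ∃ c ∈ I, ∃ c' ∈ I, ReachIn r (X : Set V)ᶜ (s c) (t c') := by
  classical
  have hscard := Finset.card_image_of_injOn hsinj
  obtain ⟨S, a, b, hS, -⟩ := hT (I.image s) (I.image t) (by simpa using hs.subset_preimage)
    (by simpa using ht.subset_preimage) (by rw [hscard, Finset.card_image_of_injOn htinj])
  obtain ⟨i, hi, hiX⟩ := exists_disjoint_of_card_lt (I := Finset.range (I.image s).card) (X := X)
    (by simpa using hS.disjoint) (by rwa [Finset.card_range, hscard])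
  rw [Finset.mem_range] at hi
  obtain ⟨c, hc, hac⟩ := Finset.mem_image.1 (hS.start_mem i hi)
  obtain ⟨c', hc', hbc'⟩ := Finset.mem_image.1 (hS.end_mem i hi)
  refine ⟨c, hc, c', hc', ?_⟩
  rw [hac, hbc']
  exact (hS.reach i hi).mono hiX.subset_compl_right

theorem IsMesh.exists_return (h : IsMesh r (UnitStep m) T m N P U) (hT : Linked r T) {X : Finset V}
    (hX : 4 * X.card < m) : ∃ c < m, ∃ c' < m, Disjoint (trajectory U (fun _ => c) 0 N) X ∧
      Disjoint (trajectory U (fun _ => c') 0 N) X ∧ ReachIn r (X : Set V)ᶜ (P N c) (P 0 c') := by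
  obtain ⟨E, s, hE⟩ := h.exists_linkage_last
  obtain ⟨F, t, hF⟩ := h.exists_linkage_first
  have hcol : (Set.Iio m).PairwiseDisjoint fun c => trajectory U (fun _ => c) 0 N :=
    pairwiseDisjoint_Iio_of_lt fun c c' hcc' hc' => h.disjoint_trajectory
      (isTrajectory_const (hcc'.trans hc') 0 N) (isTrajectory_const hc' 0 N) le_rfl
      fun _ _ => hcc'
  obtain ⟨I, hIm, hIcard, hI⟩ := exists_subset_forall_disjoint (I := Finset.range m) X
    (by simpa using hcol)
  have hlt : ∀ c ∈ I, c < m := fun c hc => Finset.mem_range.1 (hIm hc)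
  obtain ⟨J, hJI, hJcard, hJ⟩ := exists_subset_forall_disjoint X (hE.disjoint.subset hlt)
  obtain ⟨L, hLJ, hLcard, hL⟩ := exists_subset_forall_disjoint X
    (hF.disjoint.subset fun c hc => hlt c (hJI hc))
  have hLlt : ∀ c ∈ L, c < m := fun c hc => hlt c (hJI (hLJ hc))
  rw [Finset.card_range] at hIcard
  obtain ⟨c, hc, c', hc', hreach⟩ := hT.exists_reachIn_compl (X := X)
    (fun c hc => hE.end_mem c (hLlt c hc)) (fun c hc => hF.start_mem c (hLlt c hc))
    (hE.end_injOn.mono hLlt) (hF.start_injOn.mono hLlt) (show X.card < L.card by lia)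
  refine ⟨c, hLlt c hc, c', hLlt c' hc', hI c (hJI (hLJ hc)), hI c' (hJI (hLJ hc')), ?_⟩
  have hout := (hE.reach c (hLlt c hc)).mono (hJ c (hLJ hc)).subset_compl_right
  have hin := (hF.reach c' (hLlt c' hc')).mono (hL c' hc').subset_compl_right
  exact hout.trans (hreach.trans hin)

/-- The block of `6 * m` consecutive steps of a mesh of width `m` starting at layer `e`: long
enough to change from any column to any other before, inside and after its core. -/
def meshBlock (U : ℕ → ℕ → ℕ → Set V) (m N e : ℕ) : Set V := meshBox U m N e (e + 6 * m)

/-- The middle third of a block, without its boundary layers. -/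
def blockCore (P : ℕ → ℕ → V) (U : ℕ → ℕ → ℕ → Set V) (m N e : ℕ) : Set V :=
  meshCore P U m N (e + 2 * m) (e + 4 * m)

theorem blockCore_subset_meshBlock {e : ℕ} : blockCore P U m N e ⊆ meshBlock U m N e :=
  Set.sdiff_subset.trans (meshBox_mono (by lia) (by lia))

theorem IsMesh.reachIn_of_mem_blockCore (h : IsMesh r (UnitStep m) T m N P U) {e : ℕ} {w : V}
    (he : e + 6 * m ≤ N) (hc : c < m) (hw : w ∈ blockCore P U m N e) :
    ReachIn r (meshBlock U m N e) w (P (e + 6 * m) c) := by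
  obtain ⟨τ, ⟨hατ, hτβ⟩, hτ, x, y, hxy, hwU⟩ := hw.1
  have hstep := (h.isPassage τ hτ x y hxy).reach_to w hwU
  refine (hstep.mono (S' := meshBlock U m N e)
    fun z hz => ⟨τ, ⟨by lia, by lia⟩, hτ, x, y, hxy, hz⟩).trans ?_
  exact (h.reachIn_meshBox (α := τ + 1) (by lia) he hxy.right_lt hc).mono
    (meshBox_mono (by lia) le_rfl)

theorem IsMesh.reachIn_to_mem_blockCore (h : IsMesh r (UnitStep m) T m N P U) {e : ℕ} {w : V}
    (hc : c < m) (hw : w ∈ blockCore P U m N e) : ReachIn r (meshBlock U m N e) (P e c) w := by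
  obtain ⟨τ, ⟨hατ, hτβ⟩, hτ, x, y, hxy, hwU⟩ := hw.1
  have hstep := (h.isPassage τ hτ x y hxy).reach_from w hwU
  refine ((h.reachIn_meshBox (β := τ) (by lia) hτ.le hc hxy.left_lt).mono
    (meshBox_mono le_rfl (by lia))).trans ?_
  exact hstep.mono fun z hz => ⟨τ, ⟨by lia, by lia⟩, hτ, x, y, hxy, hz⟩

/-- `K` disjoint blocks, the `i`-th one starting at layer `d i`, such that `X i` separates the end
of the `i`-th core from its beginning outside the core and misses the other blocks. -/
structure IsSeparatedBlocks (r : V → V → Prop) (m N : ℕ) (P : ℕ → ℕ → V)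
    (U : ℕ → ℕ → ℕ → Set V) (K : ℕ) (d : ℕ → ℕ) (X : ℕ → Set V) : Prop where
  lt_start : ∀ i j, i < j → j < K → d i + 6 * m < d j
  lt_height : ∀ i < K, d i + 6 * m < N
  separates : ∀ i < K, Separates (avoiding r (blockCore P U m N (d i))) (X i)
    (meshLayer P m (d i + 4 * m)) (meshLayer P m (d i + 2 * m))
  disjoint : (Set.Iio K).Pairwise fun i j => Disjoint (X i) (meshBlock U m N (d j))

/-- The straight column `c` of a mesh meets none of the `K` sets `X i`. -/
structure IsClearColumn (U : ℕ → ℕ → ℕ → Set V) (m N K : ℕ) (X : ℕ → Set V) (c : ℕ) : Prop where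
  lt : c < m
  disjoint : ∀ i < K, Disjoint (trajectory U (fun _ => c) 0 N) (X i)

section Barriers

variable (h : IsMesh r (UnitStep m) T m N P U) {α β i j k : ℕ}
include h

theorem IsClearColumn.reachIn (hc : IsClearColumn U m N K X c) (hαβ : α < β) (hβ : β ≤ N) :
    ReachIn r (trajectory U (fun _ => c) α β) (P α c) (P β c) :=
  h.reachIn_trajectory (isTrajectory_const hc.lt α β) hαβ hβ

omit h in
theorem IsClearColumn.subset_compl {C : Set V} (hc : IsClearColumn U m N K X c) (hβ : β ≤ N)
    (hk : k < K) (hC : Disjoint (meshBox U m N α β) C) :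
    trajectory U (fun _ => c) α β ⊆ (X k ∪ C)ᶜ := by
  have hX := (hc.disjoint k hk).mono_left (trajectory_mono α.zero_le hβ)
  have hC' := hC.mono_left ((isTrajectory_const hc.lt α β).subset_meshBox hβ)
  exact (Set.disjoint_union_right.2 ⟨hX, hC'⟩).subset_compl_right

theorem IsClearColumn.reachIn_after (hc : IsClearColumn U m N K X c) (hk : k < K)
    (hβ : d k + 4 * m < β) (hβN : β ≤ N) :
    ReachIn r (X k ∪ blockCore P U m N (d k))ᶜ (P (d k + 4 * m) c) (P β c) :=
  (hc.reachIn h hβ hβN).mono (hc.subset_compl hβN hk h.disjoint_meshBox_meshCore')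

theorem IsClearColumn.reachIn_before (hc : IsClearColumn U m N K X c) (hk : k < K)
    (hα : α < d k + 2 * m) (hN : d k + 2 * m ≤ N) :
    ReachIn r (X k ∪ blockCore P U m N (d k))ᶜ (P α c) (P (d k + 2 * m) c) :=
  (hc.reachIn h hα hN).mono (hc.subset_compl hN hk h.disjoint_meshBox_meshCore)

namespace IsSeparatedBlocks

theorem disjoint_meshBlock (hB : IsSeparatedBlocks r m N P U K d X) (hij : i < j) (hj : j < K) :
    Disjoint (meshBlock U m N (d i)) (meshBlock U m N (d j)) :=
  h.disjoint_meshBox (hB.lt_start i j hij hj)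

theorem meshBlock_subset_compl (hB : IsSeparatedBlocks r m N P U K d X) (hj : j < K) (hk : k < K)
    (hjk : j ≠ k) : meshBlock U m N (d j) ⊆ (X k ∪ blockCore P U m N (d k))ᶜ := by
  have hblocks : Disjoint (meshBlock U m N (d j)) (meshBlock U m N (d k)) :=
    hjk.lt_or_gt.elim (hB.disjoint_meshBlock h · hk)
      fun hkj => (hB.disjoint_meshBlock h hkj hj).symm
  exact (Set.disjoint_union_right.2 ⟨(hB.disjoint hk hj hjk.symm).symm,
    hblocks.mono_right blockCore_subset_meshBlock⟩).subset_compl_right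

theorem mem_up_of_mem_blockCore (hB : IsSeparatedBlocks r m N P U K d X)
    (hc : IsClearColumn U m N K X c) (hjk : j < k) (hk : k < K) {w : V}
    (hw : w ∈ blockCore P U m N (d j)) :
    ∃ b ∈ meshLayer P m (d k + 2 * m), ReachIn r (X k ∪ blockCore P U m N (d k))ᶜ w b := by
  have hstart := hB.lt_start j k hjk hk
  have hheight := hB.lt_height k hk
  have hexit := (h.reachIn_of_mem_blockCore (by lia) hc.lt hw).mono
    (hB.meshBlock_subset_compl h (hjk.trans hk) hk hjk.ne)
  exact ⟨_, ⟨c, hc.lt, rfl⟩, hexit.trans (hc.reachIn_before h hk (by lia) (by lia))⟩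

theorem mem_low_of_mem_blockCore (hB : IsSeparatedBlocks r m N P U K d X)
    (hc : IsClearColumn U m N K X c) (hkj : k < j) (hj : j < K) {w : V}
    (hw : w ∈ blockCore P U m N (d j)) :
    ∃ a ∈ meshLayer P m (d k + 4 * m), ReachIn r (X k ∪ blockCore P U m N (d k))ᶜ a w := by
  have hstart := hB.lt_start k j hkj hj
  have hheight := hB.lt_height j hj
  have hentry := (h.reachIn_to_mem_blockCore hc.lt hw).mono
    (hB.meshBlock_subset_compl h hj (hkj.trans hj) hkj.ne')
  exact ⟨_, ⟨c, hc.lt, rfl⟩,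
    (hc.reachIn_after h (hkj.trans hj) (by lia) (by lia)).trans hentry⟩

theorem exists_reachIn_blockCore (hB : IsSeparatedBlocks r m N P U K d X)
    (hc : IsClearColumn U m N K X c) (hk : k + 1 < K) {v w : V}
    (hw : w ∈ blockCore P U m N (d k)) (hv : v ∈ blockCore P U m N (d (k + 1))) :
    ∃ S ⊆ meshBox U m N (d k) (d (k + 1) + 6 * m), ReachIn r S w v ∧
      ∀ j < K, j ≠ k → j ≠ k + 1 → Disjoint S (X j) := by
  have hstart := hB.lt_start k (k + 1) k.lt_succ_self hk
  have hheight := hB.lt_height (k + 1) hk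
  have hkK := k.lt_succ_self.trans hk
  have hmid : d (k + 1) ≤ N := by lia
  refine ⟨meshBlock U m N (d k) ∪ trajectory U (fun _ => c) (d k + 6 * m) (d (k + 1)) ∪
    meshBlock U m N (d (k + 1)), Set.union_subset (Set.union_subset ?_ ?_) ?_, ?_, ?_⟩
  · exact meshBox_mono le_rfl (by lia)
  · exact ((isTrajectory_const hc.lt _ _).subset_meshBox hmid).trans
      (meshBox_mono (by lia) (by lia))
  · exact meshBox_mono (by lia) le_rfl
  · have hexit := h.reachIn_of_mem_blockCore (by lia) hc.lt hw
    have hentry := h.reachIn_to_mem_blockCore hc.lt hv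
    exact ((hexit.mono Set.subset_union_left).trans
      ((hc.reachIn h hstart hmid).mono Set.subset_union_right)).mono Set.subset_union_left |>.trans
      (hentry.mono Set.subset_union_right)
  · intro j hj hjk hjk'
    exact Set.disjoint_union_left.2 ⟨Set.disjoint_union_left.2 ⟨(hB.disjoint hj hkK hjk).symm,
      (hc.disjoint j hj).mono_left (trajectory_mono (Nat.zero_le _) hmid)⟩,
      (hB.disjoint hj hk hjk').symm⟩

theorem disjoint_meshBox_blockCore (hB : IsSeparatedBlocks r m N P U K d X) (hk : k < K)
    (hj : j < K) (hjk : j ≠ k) (hjk' : j ≠ k + 1) :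
    Disjoint (meshBox U m N (d k) (d (k + 1) + 6 * m)) (blockCore P U m N (d j)) := by
  refine Disjoint.mono_right blockCore_subset_meshBlock ?_
  obtain hlt | hgt : j < k ∨ k + 1 < j := by lia
  · exact (h.disjoint_meshBox (hB.lt_start j k hlt hk)).symm
  · exact h.disjoint_meshBox (hB.lt_start (k + 1) j hgt hj)

omit h in
theorem disjoint_low_up (hB : IsSeparatedBlocks r m N P U K d X) (hk : k < K) :
    Disjoint {w | ∃ a ∈ meshLayer P m (d k + 4 * m),
        ReachIn r (X k ∪ blockCore P U m N (d k))ᶜ a w}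
      {w | ∃ b ∈ meshLayer P m (d k + 2 * m),
        ReachIn r (X k ∪ blockCore P U m N (d k))ᶜ w b} := by
  refine Set.disjoint_left.2 ?_
  rintro w ⟨a, ha, haw⟩ ⟨b, hb, hwb⟩
  refine hB.separates k hk a ha b hb (((haw.trans hwb).mono_rel ?_).mono ?_)
  · exact fun x hx y hy hxy => ⟨hxy, fun hxC => hx (.inr hxC), fun hyC => hy (.inr hyC)⟩
  · exact Set.compl_subset_compl.2 Set.subset_union_left

/-- Separated blocks form barriers: below the `k`-th barrier lies what can be reached from the end
of the `k`-th core, above it what can reach its beginning. -/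
def barrierSystem (hB : IsSeparatedBlocks r m N P U K d X) (hc : IsClearColumn U m N K X c) :
    BarrierSystem r K where
  core k := blockCore P U m N (d k)
  avoided := X
  low k := {w | ∃ a ∈ meshLayer P m (d k + 4 * m),
    ReachIn r (X k ∪ blockCore P U m N (d k))ᶜ a w}
  up k := {w | ∃ b ∈ meshLayer P m (d k + 2 * m),
    ReachIn r (X k ∪ blockCore P U m N (d k))ᶜ w b}
  region k := meshBox U m N (d k) (d (k + 1) + 6 * m)
  mem_low_of_adj _ _ _ _ hvw := fun ⟨a, ha, hav⟩ hX hC =>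
    ⟨a, ha, hav.tail (fun hw => hw.elim hX hC) hvw⟩
  mem_up_of_adj _ _ _ _ hvw := fun ⟨b, hb, hwb⟩ hX hC =>
    ⟨b, hb, hwb.head (fun hv => hv.elim hX hC) hvw⟩
  disjoint_low_up _ hk := hB.disjoint_low_up hk
  core_subset_up _ _ hjk hk _ hw := hB.mem_up_of_mem_blockCore h hc hjk hk hw
  core_subset_low _ _ hkj hj _ hw := hB.mem_low_of_mem_blockCore h hc hkj hj hw
  exists_connection _ hk _ hw _ hv := hB.exists_reachIn_blockCore h hc hk hw hv
  disjoint_region_core _ hk _ hj hjk hjk' := hB.disjoint_meshBox_blockCore h hk hj hjk hjk'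
  disjoint_region k i hki hi := h.disjoint_meshBox (hB.lt_start (k + 1) i hki hi)
  disjoint_core _ _ hkj hj := (hB.disjoint_meshBlock h hkj hj).mono blockCore_subset_meshBlock
    blockCore_subset_meshBlock

theorem exists_crosses (hB : IsSeparatedBlocks r m N P U K d X) (hc : IsClearColumn U m N K X c)
    (hc' : IsClearColumn U m N K X c') {Y : Set V} (hY : ∀ k < K, X k ⊆ Y)
    (hreturn : ReachIn r Yᶜ (P N c) (P 0 c')) : ∃ p L, (hB.barrierSystem h hc).Crosses p L := by
  obtain ⟨p, L, hp, hp0, hpL, hpY⟩ := hreturn.exists_isPath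
  have hm := hc.lt
  refine ⟨p, L, hp, fun k hk u hu hX => hpY u hu (hY k hk hX), fun k hk => ?_, fun k hk => ?_⟩
  · have hheight := hB.lt_height k hk
    exact ⟨_, ⟨c, hc.lt, rfl⟩, hp0 ▸ hc.reachIn_after h hk (by lia) le_rfl⟩
  · have hheight := hB.lt_height k hk
    exact ⟨_, ⟨c', hc'.lt, rfl⟩, hpL ▸ hc'.reachIn_before h hk (by lia) (by lia)⟩

end IsSeparatedBlocks

theorem IsMesh.hasDisjointCycles_of_isSeparatedBlocks {n s : ℕ} {X : ℕ → Finset V}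
    (hT : Linked r T) (hB : IsSeparatedBlocks r m N P U (2 * n) d fun i => X i)
    (hX : ∀ i < 2 * n, (X i).card ≤ s) (hm : 4 * (2 * n * s) < m) : HasDisjointCycles r n := by
  classical
  let Y : Finset V := (Finset.range (2 * n)).biUnion X
  have hY : ∀ i < 2 * n, (X i : Set V) ⊆ Y := fun i hi =>
    Finset.coe_subset.2 (Finset.subset_biUnion_of_mem X (Finset.mem_range.2 hi))
  have hYcard : Y.card ≤ 2 * n * s := by
    simpa only [Finset.card_range] using Finset.card_biUnion_le_card_mul (Finset.range (2 * n)) X s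
      fun i hi => hX i (Finset.mem_range.1 hi)
  obtain ⟨c, hc, c', hc', hcY, hcY', hreturn⟩ := h.exists_return hT (X := Y) (by lia)
  obtain ⟨p, L, hp⟩ := hB.exists_crosses h ⟨hc, fun i hi => hcY.mono_right (hY i hi)⟩
    ⟨hc', fun i hi => hcY'.mono_right (hY i hi)⟩ hY hreturn
  exact hp.hasDisjointCycles

end Barriers

theorem IsMesh.hasLinkageIn_or_exists_isSeparatedBlocks [Finite V] [Nonempty V] {s k : ℕ}
    (h : IsMesh r (UnitStep m) T m (K * (6 * m + 1)) P U)
    (hK : ∀ ρ : ℕ → ℕ → Prop,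
      (∀ i < K, ∀ A : Finset ℕ, (∀ j ∈ A, j < K ∧ j ≠ i ∧ ρ i j) → A.card < s) →
      ∃ g, StrictMono g ∧ (∀ i < k, g i < K) ∧ (Set.Iio k).Pairwise fun i j => ¬ρ (g i) (g j)) :
    (∃ e, e + 4 * m < K * (6 * m + 1) ∧ HasLinkageIn
      (avoiding r (blockCore P U m (K * (6 * m + 1)) e)) Set.univ (meshLayer P m (e + 4 * m))
      (meshLayer P m (e + 2 * m)) s) ∨
    ∃ d, ∃ X : ℕ → Finset V, (∀ i < k, (X i).card ≤ s) ∧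
      IsSeparatedBlocks r m (K * (6 * m + 1)) P U k d fun i => X i := by
  have hd : ∀ i j, i < j → i * (6 * m + 1) + 6 * m < j * (6 * m + 1) := fun i j hij => by
    have := Nat.mul_le_mul_right (6 * m + 1) (show i + 1 ≤ j from hij)
    rw [Nat.add_mul, Nat.one_mul] at this
    lia
  refine or_iff_not_imp_left.2 fun hlink => ?_
  have hsep : ∀ i < K, ∃ X : Finset V, X.card < s ∧ Separates
      (avoiding r (blockCore P U m (K * (6 * m + 1)) (i * (6 * m + 1)))) X
      (meshLayer P m (i * (6 * m + 1) + 4 * m)) (meshLayer P m (i * (6 * m + 1) + 2 * m)) :=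
    fun i hi => (menger _ _ _ s).resolve_left fun hi' =>
      hlink ⟨_, (Nat.add_le_add_left (by lia) _).trans_lt (hd i K hi), hi'⟩
  choose! X hXcard hX using hsep
  obtain ⟨g, hg, hgK, hdisj⟩ := hK (fun i j => ¬ Disjoint (X i : Set V)
    (meshBlock U m (K * (6 * m + 1)) (j * (6 * m + 1)))) fun i hi A hA => by
      by_contra! hcard
      obtain ⟨j, hj, hdisj⟩ := exists_disjoint_of_card_lt (I := A)
        (f := fun j => meshBlock U m (K * (6 * m + 1)) (j * (6 * m + 1)))
        ((pairwiseDisjoint_Iio_of_lt fun i j hij _ => h.disjoint_meshBox (hd i j hij)).subset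
          fun j hj => (hA j hj).1) ((hXcard i hi).trans_le hcard)
      exact (hA j hj).2.2 hdisj.symm
  exact ⟨fun i => g i * (6 * m + 1), fun i => X (g i), fun i hi => (hXcard _ (hgK i hi)).le,
    fun i j hij _ => hd _ _ (hg hij), fun i hi => hd _ _ (hgK i hi), fun i hi => hX _ (hgK i hi),
    hdisj.mono' fun i j hij => not_not.1 hij⟩

theorem exists_mesh_hasDisjointCycles_of_linked (n : ℕ) : ∃ m N : ℕ, ∀ {V : Type u} [Finite V]
    [Nonempty V] {r : V → V → Prop} {T : Set V} {P : ℕ → ℕ → V} {U : ℕ → ℕ → ℕ → Set V},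
    Linked r T → IsMesh r (UnitStep m) T m N P U → HasDisjointCycles r n := by
  obtain ⟨s, hs⟩ := exists_size_hasDisjointCycles_of_hasLinkageIn n
  obtain ⟨K, hK⟩ := exists_independent_of_bounded_outdegree s (2 * n)
  refine ⟨4 * (2 * n * s) + 1, K * (6 * (4 * (2 * n * s) + 1) + 1), fun hT h => ?_⟩
  obtain ⟨e, he, hlink⟩ | ⟨d, X, hX, hB⟩ := h.hasLinkageIn_or_exists_isSeparatedBlocks hK
  · exact hs h (by lia) he hlink
  · exact h.hasDisjointCycles_of_isSeparatedBlocks hT hB hX (Nat.lt_succ_self _)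

end Blocks

theorem exists_hasDisjointCycles_or_hasCycleTransversal.{u} (k : ℕ) : ∃ t : ℕ,
    ∀ {V : Type u} [Finite V] (r : V → V → Prop),
      HasDisjointCycles r k ∨ HasCycleTransversal r t := by
  induction k with
  | zero => exact ⟨0, fun r => .inl ⟨fun _ => ∅, by simp, by simp⟩⟩
  | succ n ih =>
    obtain ⟨t, ht⟩ := ih
    obtain ⟨m, N, hmesh⟩ := exists_mesh_hasDisjointCycles_of_linked (n + 1)
    obtain ⟨q, M, hgrid⟩ := exists_isMesh_unitStep m N
    obtain ⟨K, hK⟩ := exists_size_linked_hasGrid (n + 1) q M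
    refine ⟨K + 2 * t, fun {V} _ r => or_iff_not_imp_right.2 fun htrans => ?_⟩
    by_contra hcycles
    obtain ⟨v, -⟩ : HasCycleIn r ((∅ : Finset V) : Set V)ᶜ := by
      by_contra hacyclic
      exact htrans ⟨∅, Nat.zero_le _, hacyclic⟩
    have : Nonempty V := ⟨v⟩
    obtain ⟨T, hT, hTgrid⟩ :=
      (hK (robustlyCyclic_of_not_hasCycleTransversal ht hcycles htrans)).resolve_left hcycles
    obtain ⟨P, U, hPU⟩ := hgrid hTgrid
    exact hcycles (hmesh hT hPU)

/-- **Vertex-Erdős–Pósa property of directed cycles (Reed–Robertson–Seymour–Thomas).**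
For every `k` there is a `t` such that every finite loopless digraph `G` either contains
`k` pairwise vertex-disjoint directed cycles, or has a set `X` of at most `t` vertices
whose deletion leaves no directed cycle. -/
theorem dicycles_vertex_erdosPosa (k : ℕ) :
    ∃ t : ℕ, ∀ (V : Type) [Fintype V] [DecidableEq V] (G : Digraph V),
      (∀ v, ¬ G.Adj v v) →
      (∃ C : Fin k → List V, (∀ i, G.IsDicycle (C i)) ∧
        ∀ i j, i ≠ j → ∀ v ∈ C i, v ∉ C j) ∨
      (∃ X : Finset V, X.card ≤ t ∧
        ∀ l : List V, (∀ v ∈ l, v ∉ X) → ¬ G.IsDicycle l) := by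
  obtain ⟨t, ht⟩ := exists_hasDisjointCycles_or_hasCycleTransversal k
  refine ⟨t, fun V _ _ G hG => (ht G.Adj).imp ?_ ?_⟩
  · rintro ⟨S, hS, hdisj⟩
    choose C hC hCS using fun i : Fin k => (hS i i.2).exists_isDicycle hG
    exact ⟨C, hC, fun i j hij v hvi hvj =>
      (hdisj i.2 j.2 (Fin.val_ne_of_ne hij)).ne_of_mem (hCS i v hvi) (hCS j v hvj) rfl⟩
  · rintro ⟨X, hX, hacyclic⟩
    exact ⟨X, hX, fun l hl hcycle => hacyclic ((hasCycleIn_of_isDicycle hcycle).mono hl)⟩
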